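/- arXiv:2108.02691 — 5 statements merged into one kernel-verified Lean document; each statement's English description precedes it below -/
import Mathlib

section
/- Let n ≥ 1, let p_k, q_k, r_k (k = 1,…,n) and s be positive real numbers, and let t be a real number with 0 < Σ_{k=1}^n p_k/q_k − t < s. Then the n-fold improper integral ∫_{(0,∞)^n} [∏_{k=1}^n x_k^{p_k−1}] · [Σ_{k=1}^n (r_k x_k)^{q_k}]^{−t} · [1 + Σ_{k=1}^n (r_k x_k)^{q_k}]^{−s} dx_1…dx_n equals [∏_{k=1}^n Γ(p_k/q_k)] · Γ(Σ_{k=1}^n p_k/q_k − t) · Γ(s + t − Σ_{k=1}^n p_k/q_k) / ([∏_{k=1}^n q_k r_k^{p_k}] · Γ(Σ_{k=1}^n p_k/q_k) · Γ(s)). -/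
open MeasureTheory Real

/-- Orthant integral under diagonal scaling. -/
lemma orthant_scale {n : ℕ} (d : Fin n → ℝ) (hd : ∀ k, 0 < d k) (h : (Fin n → ℝ) → ENNReal)
    (hh : Measurable h) :
    ∫⁻ x in Set.univ.pi (fun _ : Fin n => Set.Ioi (0 : ℝ)), h x =
      ENNReal.ofReal (∏ k, d k) *
        ∫⁻ x in Set.univ.pi (fun _ : Fin n => Set.Ioi (0 : ℝ)), h (fun k => d k * x k) := by
  have hO : MeasurableSet (Set.univ.pi (fun _ : Fin n => Set.Ioi (0 : ℝ))) :=
    MeasurableSet.univ_pi fun _ => measurableSet_Ioi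
  have hpos : 0 < ∏ k, d k := Finset.prod_pos fun k _ => hd k
  have hdet : Matrix.det (Matrix.diagonal d) ≠ 0 := by
    rw [Matrix.det_diagonal]; exact hpos.ne'
  have hm : Measurable (fun x : Fin n → ℝ => (Matrix.toLin' (Matrix.diagonal d)) x) :=
    (LinearMap.continuous_of_finiteDimensional _).measurable
  rw [← lintegral_indicator hO, ← lintegral_indicator hO]
  conv_lhs => rw [← Real.smul_map_diagonal_volume_pi hdet]
  rw [lintegral_smul_measure, lintegral_map (hh.indicator hO) hm, Matrix.det_diagonal,
    abs_of_pos hpos, smul_eq_mul]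
  congr 1
  apply lintegral_congr
  intro x
  have e : (Matrix.toLin' (Matrix.diagonal d)) x = fun k => d k * x k := by
    ext k; simp [Matrix.mulVec_diagonal]
  rw [e]
  have hmem : ((fun k => d k * x k) ∈ Set.univ.pi (fun _ : Fin n => Set.Ioi (0 : ℝ))) ↔
      x ∈ Set.univ.pi (fun _ : Fin n => Set.Ioi (0 : ℝ)) := by
    simp [Set.mem_pi, hd]
  by_cases hx : x ∈ Set.univ.pi (fun _ : Fin n => Set.Ioi (0 : ℝ))
  · rw [Set.indicator_of_mem hx, Set.indicator_of_mem (hmem.2 hx)]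
  · rw [Set.indicator_of_notMem hx, Set.indicator_of_notMem (fun h => hx (hmem.1 h))]

lemma meas_S {n : ℕ} (q r : Fin n → ℝ) :
    Measurable (fun x : Fin n → ℝ => ∑ k, (r k * x k) ^ q k) := by fun_prop

lemma meas_w {n : ℕ} (p : Fin n → ℝ) :
    Measurable (fun x : Fin n → ℝ => ∏ k, x k ^ (p k - 1)) := by fun_prop

lemma radial_scale {n : ℕ} (p q r : Fin n → ℝ) (hq : ∀ k, 0 < q k) (hr : ∀ k, 0 < r k)
    (f : ℝ → ENNReal) (hf : Measurable f) (c : ℝ) (hc : 0 < c) :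
    ∫⁻ x in Set.univ.pi (fun _ : Fin n => Set.Ioi (0 : ℝ)),
        ENNReal.ofReal (∏ k, x k ^ (p k - 1)) * f ((∑ k, (r k * x k) ^ q k) / c) =
      ENNReal.ofReal (c ^ (∑ k, p k / q k)) *
      ∫⁻ x in Set.univ.pi (fun _ : Fin n => Set.Ioi (0 : ℝ)),
        ENNReal.ofReal (∏ k, x k ^ (p k - 1)) * f (∑ k, (r k * x k) ^ q k) := by
  have hO : MeasurableSet (Set.univ.pi (fun _ : Fin n => Set.Ioi (0 : ℝ))) :=
    MeasurableSet.univ_pi fun _ => measurableSet_Ioi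
  have hd : ∀ k, 0 < c ^ (1 / q k) := fun k => rpow_pos_of_pos hc _
  have hpos : 0 < ∏ k, c ^ (1 / q k) := Finset.prod_pos fun k _ => hd k
  rw [orthant_scale (fun k => c ^ (1 / q k)) hd
    (fun x => ENNReal.ofReal (∏ k, x k ^ (p k - 1)) * f ((∑ k, (r k * x k) ^ q k) / c))
    (by fun_prop),
    ← lintegral_const_mul _ (by fun_prop), ← lintegral_const_mul _ (by fun_prop)]
  apply setLIntegral_congr_fun hO
  intro x hx
  have hx' : ∀ k, 0 < x k := fun k => hx k trivial
  have e1 : (∑ k, (r k * (c ^ (1 / q k) * x k)) ^ q k) / c = ∑ k, (r k * x k) ^ q k := by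
    rw [div_eq_iff hc.ne', Finset.sum_mul]
    refine Finset.sum_congr rfl fun k _ => ?_
    rw [show r k * (c ^ (1 / q k) * x k) = (r k * x k) * c ^ (1 / q k) by ring,
      mul_rpow (mul_pos (hr k) (hx' k)).le (hd k).le, ← rpow_mul hc.le,
      one_div_mul_cancel (hq k).ne', rpow_one]
  have e2 : (∏ k, c ^ (1 / q k)) * ∏ k, (c ^ (1 / q k) * x k) ^ (p k - 1) =
      c ^ (∑ k, p k / q k) * ∏ k, x k ^ (p k - 1) := by
    rw [rpow_sum_of_pos hc, ← Finset.prod_mul_distrib, ← Finset.prod_mul_distrib]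
    refine Finset.prod_congr rfl fun k _ => ?_
    rw [mul_rpow (hd k).le (hx' k).le, ← rpow_mul hc.le, ← mul_assoc, ← rpow_add hc]
    congr 2
    have := (hq k).ne'
    field_simp
    ring
  simp only
  rw [e1, ← mul_assoc, ← mul_assoc, ← ENNReal.ofReal_mul hpos.le, e2,
    ENNReal.ofReal_mul (rpow_pos_of_pos hc _).le]

lemma exp_case {n : ℕ} (p q r : Fin n → ℝ) (hp : ∀ k, 0 < p k) (hq : ∀ k, 0 < q k)
    (hr : ∀ k, 0 < r k) :
    ∫⁻ x in Set.univ.pi (fun _ : Fin n => Set.Ioi (0 : ℝ)),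
        ENNReal.ofReal (∏ k, x k ^ (p k - 1)) *
          ENNReal.ofReal (exp (-(∑ k, (r k * x k) ^ q k))) =
      ENNReal.ofReal ((∏ k, Real.Gamma (p k / q k)) / (∏ k, q k * r k ^ p k)) := by
  have hO : MeasurableSet (Set.univ.pi (fun _ : Fin n => Set.Ioi (0 : ℝ))) :=
    MeasurableSet.univ_pi fun _ => measurableSet_Ioi
  have hb : ∀ k, 0 < r k ^ q k := fun k => rpow_pos_of_pos (hr k) _
  have e1 : ∫⁻ x in Set.univ.pi (fun _ : Fin n => Set.Ioi (0 : ℝ)),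
        ENNReal.ofReal (∏ k, x k ^ (p k - 1)) *
          ENNReal.ofReal (exp (-(∑ k, (r k * x k) ^ q k))) =
      ∫⁻ x in Set.univ.pi (fun _ : Fin n => Set.Ioi (0 : ℝ)),
        ENNReal.ofReal (∏ k, (x k ^ (p k - 1) * exp (-(r k ^ q k) * x k ^ q k))) := by
    apply setLIntegral_congr_fun hO
    intro x hx
    have hx' : ∀ k, 0 < x k := fun k => hx k trivial
    simp only
    rw [← ENNReal.ofReal_mul (Finset.prod_nonneg fun k _ => (rpow_pos_of_pos (hx' k) _).le),
      Finset.prod_mul_distrib, ← exp_sum, ← Finset.sum_neg_distrib]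
    congr 4 with k
    rw [mul_rpow (hr k).le (hx' k).le]; ring
  rw [e1, volume_pi, Measure.restrict_pi_pi, ← ofReal_integral_eq_lintegral_ofReal]
  · rw [integral_fintype_prod_eq_prod (𝕜 := ℝ)
      (fun k (y : ℝ) => y ^ (p k - 1) * exp (-(r k ^ q k) * y ^ q k)), ← Finset.prod_div_distrib]
    congr 1
    refine Finset.prod_congr rfl fun k _ => ?_
    rw [integral_rpow_mul_exp_neg_mul_rpow (hq k) (by linarith [hp k]) (hb k),
      ← rpow_mul (hr k).le, sub_add_cancel, neg_div, mul_neg, mul_div_cancel₀ _ (hq k).ne',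
      rpow_neg (hr k).le]
    have := (hq k).ne'
    have := (rpow_pos_of_pos (hr k) (p k)).ne'
    field_simp
  · exact Integrable.fintype_prod (𝕜 := ℝ)
      (f := fun k (y : ℝ) => y ^ (p k - 1) * exp (-(r k ^ q k) * y ^ q k)) fun k =>
      integrableOn_rpow_mul_exp_neg_mul_rpow (by linarith [hp k]) (hq k) (hb k)
  · rw [← Measure.restrict_pi_pi]
    filter_upwards [ae_restrict_mem hO] with x hx
    exact Finset.prod_nonneg fun k _ =>
      mul_nonneg (rpow_pos_of_pos (hx k trivial) _).le (exp_pos _).le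

lemma lint_gamma (a c : ℝ) (ha : 0 < a) (hc : 0 < c) :
    ∫⁻ y in Set.Ioi (0 : ℝ), ENNReal.ofReal (y ^ (a - 1) * exp (-(c * y))) =
      ENNReal.ofReal (c ^ (-a) * Real.Gamma a) := by
  have key := integral_rpow_mul_exp_neg_mul_Ioi ha hc
  have hG := Real.Gamma_pos_of_pos ha
  rw [← ofReal_integral_eq_lintegral_ofReal, key, one_div, inv_rpow hc.le, rpow_neg hc.le]
  · exact .of_integral_ne_zero (by rw [key]; positivity)
  · filter_upwards [ae_restrict_mem measurableSet_Ioi] with y hy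
    exact mul_nonneg (rpow_pos_of_pos hy _).le (exp_pos _).le

lemma inversion (S : ℝ) (hS : 0 < S) (g : ℝ → ENNReal) :
    ∫⁻ v in Set.Ioi (0 : ℝ), ENNReal.ofReal v⁻¹ * g v =
      ∫⁻ u in Set.Ioi (0 : ℝ), ENNReal.ofReal u⁻¹ * g (S / u) := by
  have him : (fun u : ℝ => S / u) '' Set.Ioi 0 = Set.Ioi 0 := by
    ext y
    constructor
    · rintro ⟨u, hu, rfl⟩
      exact div_pos hS hu
    · intro hy
      have hy' : 0 < y := hy
      exact ⟨S / y, div_pos hS hy, by field_simp⟩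
  have h := lintegral_image_eq_lintegral_abs_deriv_mul (s := Set.Ioi (0 : ℝ))
    (f := fun u : ℝ => S / u) (f' := fun u => -S / u ^ 2) measurableSet_Ioi
    (fun u hu => by
      have h1 := ((hasDerivAt_inv (ne_of_gt hu : u ≠ 0)).const_mul S).hasDerivWithinAt
        (s := Set.Ioi (0 : ℝ))
      convert! h1 using 1
      ring)
    (fun a ha b hb hab => by
      have ha' : 0 < a := ha
      have hb' : 0 < b := hb
      simp only at hab
      field_simp at hab
      linarith)
    (fun v => ENNReal.ofReal v⁻¹ * g v)
  rw [him] at h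
  rw [h]
  apply setLIntegral_congr_fun measurableSet_Ioi
  intro u hu
  have hu' : 0 < u := hu
  simp only
  rw [← mul_assoc, ← ENNReal.ofReal_mul (abs_nonneg _), neg_div, abs_neg,
    abs_of_pos (by positivity)]
  congr 2
  field_simp

/-- Radial integration formula. -/
lemma radial {n : ℕ} (hn : 1 ≤ n) (p q r : Fin n → ℝ) (hp : ∀ k, 0 < p k) (hq : ∀ k, 0 < q k)
    (hr : ∀ k, 0 < r k) (f : ℝ → ENNReal) (hf : Measurable f) :
    ENNReal.ofReal (Real.Gamma (∑ k, p k / q k)) *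
      ∫⁻ x in Set.univ.pi (fun _ : Fin n => Set.Ioi (0 : ℝ)),
        ENNReal.ofReal (∏ k, x k ^ (p k - 1)) * f (∑ k, (r k * x k) ^ q k) =
      ENNReal.ofReal ((∏ k, Real.Gamma (p k / q k)) / (∏ k, q k * r k ^ p k)) *
      ∫⁻ v in Set.Ioi (0 : ℝ), ENNReal.ofReal (v ^ ((∑ k, p k / q k) - 1)) * f v := by
  have hO : MeasurableSet (Set.univ.pi (fun _ : Fin n => Set.Ioi (0 : ℝ))) :=
    MeasurableSet.univ_pi fun _ => measurableSet_Ioi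
  have : Nonempty (Fin n) := ⟨⟨0, hn⟩⟩
  set A := ∑ k, p k / q k with hA
  have hApos : 0 < A := Finset.sum_pos (fun k _ => div_pos (hp k) (hq k)) Finset.univ_nonempty
  set O := Set.univ.pi (fun _ : Fin n => Set.Ioi (0 : ℝ)) with hOdef
  set w : (Fin n → ℝ) → ENNReal := fun x => ENNReal.ofReal (∏ k, x k ^ (p k - 1)) with hw
  set S : (Fin n → ℝ) → ℝ := fun x => ∑ k, (r k * x k) ^ q k with hS
  have mw : Measurable w := (meas_w p).ennreal_ofReal
  have mS : Measurable S := meas_S q r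
  have hSpos : ∀ x ∈ O, 0 < S x := fun x hx =>
    Finset.sum_pos (fun k _ => rpow_pos_of_pos (mul_pos (hr k) (hx k trivial)) _)
      Finset.univ_nonempty
  have sc : ∀ g : ℝ → ENNReal, Measurable g → ∀ c : ℝ, 0 < c →
      ∫⁻ x in O, w x * g (S x / c) = ENNReal.ofReal (c ^ A) * ∫⁻ x in O, w x * g (S x) :=
    fun g hg c hc => radial_scale p q r hq hr g hg c hc
  have ex : ∫⁻ x in O, w x * ENNReal.ofReal (exp (-(S x))) =
      ENNReal.ofReal ((∏ k, Real.Gamma (p k / q k)) / (∏ k, q k * r k ^ p k)) :=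
    exp_case p q r hp hq hr
  have ga := lint_gamma A 1 hApos one_pos
  rw [one_rpow, one_mul] at ga
  calc ENNReal.ofReal (Real.Gamma A) * ∫⁻ x in O, w x * f (S x)
      = ∫⁻ u in Set.Ioi (0 : ℝ), ENNReal.ofReal (u ^ (A - 1) * exp (-(1 * u))) *
          ∫⁻ x in O, w x * f (S x) := by
        rw [lintegral_mul_const _ (by fun_prop), ga]
    _ = ∫⁻ u in Set.Ioi (0 : ℝ), ∫⁻ x in O,
          ENNReal.ofReal u⁻¹ * (ENNReal.ofReal (exp (-u)) * (w x * f (S x / u))) := by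
        apply setLIntegral_congr_fun measurableSet_Ioi
        intro u hu
        have hu' : 0 < u := hu
        have m1 : Measurable fun x => w x * f (S x / u) := mw.mul (hf.comp (mS.div_const u))
        simp only
        rw [lintegral_const_mul _ (m1.const_mul _), lintegral_const_mul _ m1, sc f hf u hu,
          ← mul_assoc, ← mul_assoc, ← ENNReal.ofReal_mul (by positivity),
          ← ENNReal.ofReal_mul (by positivity), rpow_sub hu', rpow_one, one_mul]
        congr 2
        field_simp
    _ = ∫⁻ x in O, ∫⁻ u in Set.Ioi (0 : ℝ),
          ENNReal.ofReal u⁻¹ * (ENNReal.ofReal (exp (-u)) * (w x * f (S x / u))) := by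
        apply lintegral_lintegral_swap
        apply Measurable.aemeasurable
        unfold Function.uncurry
        fun_prop
    _ = ∫⁻ x in O, ∫⁻ v in Set.Ioi (0 : ℝ),
          ENNReal.ofReal v⁻¹ * (ENNReal.ofReal (exp (-(S x / v))) * (w x * f v)) := by
        apply setLIntegral_congr_fun hO
        intro x hx
        simp only
        rw [inversion (S x) (hSpos x hx)
          (fun v => ENNReal.ofReal (exp (-(S x / v))) * (w x * f v))]
        apply setLIntegral_congr_fun measurableSet_Ioi
        intro u hu
        have hu' : 0 < u := hu
        have := hSpos x hx
        simp only
        rw [div_div_cancel₀ this.ne']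
    _ = ∫⁻ v in Set.Ioi (0 : ℝ), ∫⁻ x in O,
          ENNReal.ofReal v⁻¹ * (ENNReal.ofReal (exp (-(S x / v))) * (w x * f v)) := by
        apply lintegral_lintegral_swap
        apply Measurable.aemeasurable
        unfold Function.uncurry
        fun_prop
    _ = ∫⁻ v in Set.Ioi (0 : ℝ),
          ENNReal.ofReal ((∏ k, Real.Gamma (p k / q k)) / (∏ k, q k * r k ^ p k)) *
          (ENNReal.ofReal (v ^ (A - 1)) * f v) := by
        apply setLIntegral_congr_fun measurableSet_Ioi
        intro v hv
        have hv' : 0 < v := hv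
        simp only
        have e := sc (fun y => ENNReal.ofReal (exp (-y))) (by fun_prop) v hv
        rw [ex] at e
        have e3 : ∀ x, ENNReal.ofReal v⁻¹ * (ENNReal.ofReal (exp (-(S x / v))) * (w x * f v)) =
            (ENNReal.ofReal v⁻¹ * f v) * (w x * ENNReal.ofReal (exp (-(S x / v)))) := by
          intro x; ring
        simp_rw [e3]
        rw [lintegral_const_mul _ (by fun_prop), e, rpow_sub hv', rpow_one, div_eq_mul_inv (v ^ A),
          ENNReal.ofReal_mul (by positivity)]
        ring
    _ = _ := by
        rw [lintegral_const_mul _ (by fun_prop)]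

lemma beta_lint (a s : ℝ) (ha : 0 < a) (hs : a < s) :
    ENNReal.ofReal (Real.Gamma s) *
      ∫⁻ v in Set.Ioi (0 : ℝ), ENNReal.ofReal (v ^ (a - 1) * (1 + v) ^ (-s)) =
    ENNReal.ofReal (Real.Gamma a * Real.Gamma (s - a)) := by
  have hs0 : 0 < s := ha.trans hs
  have hGs := Real.Gamma_pos_of_pos hs0
  have hGa := Real.Gamma_pos_of_pos ha
  have h1s := lint_gamma (s - a) 1 (by linarith) one_pos
  rw [one_rpow, one_mul] at h1s
  calc ENNReal.ofReal (Real.Gamma s) *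
      ∫⁻ v in Set.Ioi (0 : ℝ), ENNReal.ofReal (v ^ (a - 1) * (1 + v) ^ (-s))
      = ∫⁻ v in Set.Ioi (0 : ℝ), ∫⁻ y in Set.Ioi (0 : ℝ),
          ENNReal.ofReal (v ^ (a - 1)) * ENNReal.ofReal (y ^ (s - 1) * exp (-((1 + v) * y))) := by
        rw [← lintegral_const_mul _ (by fun_prop)]
        apply setLIntegral_congr_fun measurableSet_Ioi
        intro v hv
        have hv' : 0 < v := hv
        simp only
        rw [lintegral_const_mul _ (by fun_prop), lint_gamma s (1 + v) hs0 (by linarith),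
          ← ENNReal.ofReal_mul (by positivity), ← ENNReal.ofReal_mul (by positivity)]
        congr 1; ring
    _ = ∫⁻ y in Set.Ioi (0 : ℝ), ∫⁻ v in Set.Ioi (0 : ℝ),
          ENNReal.ofReal (v ^ (a - 1)) * ENNReal.ofReal (y ^ (s - 1) * exp (-((1 + v) * y))) := by
        apply lintegral_lintegral_swap
        apply Measurable.aemeasurable
        unfold Function.uncurry
        fun_prop
    _ = ∫⁻ y in Set.Ioi (0 : ℝ), ENNReal.ofReal (Real.Gamma a) *
          ENNReal.ofReal (y ^ (s - a - 1) * exp (-(1 * y))) := by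
        apply setLIntegral_congr_fun measurableSet_Ioi
        intro y hy
        have hy' : 0 < y := hy
        simp only
        have e : ∫⁻ v in Set.Ioi (0 : ℝ),
            ENNReal.ofReal (v ^ (a - 1)) * ENNReal.ofReal (y ^ (s - 1) * exp (-((1 + v) * y))) =
            ∫⁻ v in Set.Ioi (0 : ℝ), ENNReal.ofReal (y ^ (s - 1) * exp (-y)) *
              ENNReal.ofReal (v ^ (a - 1) * exp (-(y * v))) := by
          apply setLIntegral_congr_fun measurableSet_Ioi
          intro v hv
          have hv' : 0 < v := hv
          simp only
          rw [← ENNReal.ofReal_mul (by positivity), ← ENNReal.ofReal_mul (by positivity),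
            show -((1 + v) * y) = -y + -(y * v) by ring, exp_add]
          congr 1; ring
        rw [e, lintegral_const_mul _ (by fun_prop), lint_gamma a y ha hy,
          ← ENNReal.ofReal_mul (by positivity), ← ENNReal.ofReal_mul (by positivity),
          show s - a - 1 = (s - 1) + -a by ring, rpow_add hy', one_mul]
        congr 1; ring
    _ = _ := by
        rw [lintegral_const_mul _ (by fun_prop), h1s, ENNReal.ofReal_mul hGa.le]

/-- **Lemma 2 of the paper.** The value of an `n`-fold improper integral over the
positive orthant. -/
theorem lemma2_integral_value (n : ℕ) (hn : 1 ≤ n) (p q r : Fin n → ℝ) (s t : ℝ)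
    (hp : ∀ k, 0 < p k) (hq : ∀ k, 0 < q k) (hr : ∀ k, 0 < r k) (hs : 0 < s)
    (ht1 : 0 < (∑ k, p k / q k) - t) (ht2 : (∑ k, p k / q k) - t < s) :
    ∫ x in Set.univ.pi (fun _ : Fin n => Set.Ioi (0 : ℝ)),
        (∏ k, x k ^ (p k - 1)) * (∑ k, (r k * x k) ^ q k) ^ (-t) *
          (1 + ∑ k, (r k * x k) ^ q k) ^ (-s) =
      (∏ k, Real.Gamma (p k / q k)) * Real.Gamma ((∑ k, p k / q k) - t) *
          Real.Gamma (s + t - ∑ k, p k / q k) /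
        ((∏ k, q k * r k ^ p k) * Real.Gamma (∑ k, p k / q k) * Real.Gamma s) := by
  have hO : MeasurableSet (Set.univ.pi (fun _ : Fin n => Set.Ioi (0 : ℝ))) :=
    MeasurableSet.univ_pi fun _ => measurableSet_Ioi
  have : Nonempty (Fin n) := ⟨⟨0, hn⟩⟩
  have hApos : 0 < ∑ k, p k / q k :=
    Finset.sum_pos (fun k _ => div_pos (hp k) (hq k)) Finset.univ_nonempty
  have hpr : ∀ x ∈ Set.univ.pi (fun _ : Fin n => Set.Ioi (0 : ℝ)),
      0 < ∏ k, x k ^ (p k - 1) := fun x hx =>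
    Finset.prod_pos fun k _ => rpow_pos_of_pos (hx k trivial) _
  have hSpos : ∀ x ∈ Set.univ.pi (fun _ : Fin n => Set.Ioi (0 : ℝ)),
      0 < ∑ k, (r k * x k) ^ q k := fun x hx =>
    Finset.sum_pos (fun k _ => rpow_pos_of_pos (mul_pos (hr k) (hx k trivial)) _)
      Finset.univ_nonempty
  have R := radial hn p q r hp hq hr
    (fun v => ENNReal.ofReal (v ^ (-t) * (1 + v) ^ (-s))) (by fun_prop)
  have B := beta_lint ((∑ k, p k / q k) - t) s ht1 ht2
  rw [integral_eq_lintegral_of_nonneg_ae]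
  rotate_left
  · filter_upwards [ae_restrict_mem hO] with x hx
    have h1 := hpr x hx
    have h2 := hSpos x hx
    simp only [Pi.zero_apply]
    positivity
  · exact Measurable.aestronglyMeasurable (by fun_prop)
  have e1 : ∫⁻ x in Set.univ.pi (fun _ : Fin n => Set.Ioi (0 : ℝ)),
      ENNReal.ofReal ((∏ k, x k ^ (p k - 1)) * (∑ k, (r k * x k) ^ q k) ^ (-t) *
          (1 + ∑ k, (r k * x k) ^ q k) ^ (-s)) =
      ∫⁻ x in Set.univ.pi (fun _ : Fin n => Set.Ioi (0 : ℝ)),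
        ENNReal.ofReal (∏ k, x k ^ (p k - 1)) *
        ENNReal.ofReal ((∑ k, (r k * x k) ^ q k) ^ (-t) *
          (1 + ∑ k, (r k * x k) ^ q k) ^ (-s)) := by
    apply setLIntegral_congr_fun hO
    intro x hx
    simp only
    rw [← ENNReal.ofReal_mul (hpr x hx).le, mul_assoc]
  have e2 : ∫⁻ v in Set.Ioi (0 : ℝ), ENNReal.ofReal (v ^ ((∑ k, p k / q k) - 1)) *
        ENNReal.ofReal (v ^ (-t) * (1 + v) ^ (-s)) =
      ∫⁻ v in Set.Ioi (0 : ℝ),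
        ENNReal.ofReal (v ^ ((∑ k, p k / q k) - t - 1) * (1 + v) ^ (-s)) := by
    apply setLIntegral_congr_fun measurableSet_Ioi
    intro v hv
    have hv' : 0 < v := hv
    simp only
    rw [← ENNReal.ofReal_mul (by positivity), ← mul_assoc, ← rpow_add hv']
    congr 3; ring
  rw [e2] at R
  rw [e1]
  have hGs := Real.Gamma_pos_of_pos hs
  have hGA := Real.Gamma_pos_of_pos hApos
  have hG1 := Real.Gamma_pos_of_pos ht1
  have hG2 : 0 < Real.Gamma (s - ((∑ k, p k / q k) - t)) :=
    Real.Gamma_pos_of_pos (by linarith)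
  have hD : 0 < ∏ k, q k * r k ^ p k :=
    Finset.prod_pos fun k _ => mul_pos (hq k) (rpow_pos_of_pos (hr k) _)
  have hN : 0 < ∏ k, Real.Gamma (p k / q k) :=
    Finset.prod_pos fun k _ => Real.Gamma_pos_of_pos (div_pos (hp k) (hq k))
  have R' := congrArg ENNReal.toReal R
  have B' := congrArg ENNReal.toReal B
  rw [ENNReal.toReal_mul, ENNReal.toReal_mul, ENNReal.toReal_ofReal hGA.le,
    ENNReal.toReal_ofReal (by positivity)] at R'
  rw [ENNReal.toReal_mul, ENNReal.toReal_ofReal hGs.le,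
    ENNReal.toReal_ofReal (by positivity)] at B'
  rw [show s + t - ∑ k, p k / q k = s - ((∑ k, p k / q k) - t) by ring, eq_div_iff (by positivity)]
  rw [div_mul_eq_mul_div, eq_div_iff hD.ne'] at R'
  calc _ = _ * Real.Gamma s := by
        rw [← mul_assoc, mul_comm (∏ k, q k * r k ^ p k) (Real.Gamma _), ← mul_assoc,
          mul_comm _ (Real.Gamma (∑ k, p k / q k)), R']
    _ = _ := by rw [mul_assoc, mul_comm _ (Real.Gamma s), B', mul_assoc]
end

section
/- Let n ≥ 1, let p_k, q_k, r_k (k = 1,…,n) and s be positive real numbers with 0 < Σ_{k=1}^n p_k/q_k < s. Then ∫_{(0,∞)^n} [∏_{k=1}^n x_k^{p_k−1}] · [1 + Σ_{k=1}^n (r_k x_k)^{q_k}]^{−s} dx_1…dx_n = [∏_{k=1}^n Γ(p_k/q_k)] · Γ(s − Σ_{k=1}^n p_k/q_k) / ([∏_{k=1}^n q_k r_k^{p_k}] · Γ(s)). -/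
open MeasureTheory Real

namespace Lemma2Aux

/-- The kernel of the double integral. -/
noncomputable def G {n : ℕ} (p q r : Fin n → ℝ) (s : ℝ) (x : Fin n → ℝ) (t : ℝ) : ℝ :=
  (t ^ (s - 1) * exp (-t)) * ∏ k, (x k ^ (p k - 1) * exp (-(t * r k ^ q k) * x k ^ q k))

lemma G_measurable {n : ℕ} (p q r : Fin n → ℝ) (s : ℝ) :
    Measurable (fun z : (Fin n → ℝ) × ℝ => G p q r s z.1 z.2) := by
  unfold G
  fun_prop

lemma one_dim {p q b : ℝ} (hp : 0 < p) (hq : 0 < q) (hb : 0 < b) :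
    ∫ x in Set.Ioi (0 : ℝ), x ^ (p - 1) * exp (-b * x ^ q) =
      b ^ (-(p / q)) * (Gamma (p / q) / q) := by
  rw [integral_rpow_mul_exp_neg_mul_rpow hq (by linarith) hb]
  rw [sub_add_cancel, neg_div]
  ring

lemma one_dim_int {p q b : ℝ} (hp : 0 < p) (hq : 0 < q) (hb : 0 < b) :
    Integrable (fun x : ℝ => x ^ (p - 1) * exp (-b * x ^ q)) (volume.restrict (Set.Ioi 0)) := by
  by_contra h
  have h0 := integral_undef h
  rw [one_dim hp hq hb] at h0
  have : 0 < Gamma (p / q) := Gamma_pos_of_pos (by positivity)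
  have : 0 < b ^ (-(p / q)) * (Gamma (p / q) / q) := by positivity
  exact this.ne' h0

lemma G_integral_x {n : ℕ} (p q r : Fin n → ℝ) (s : ℝ)
    (hp : ∀ k, 0 < p k) (hq : ∀ k, 0 < q k) (hr : ∀ k, 0 < r k) {t : ℝ} (ht : 0 < t) :
    ∫ x, G p q r s x t ∂(Measure.pi fun _ : Fin n => volume.restrict (Set.Ioi (0 : ℝ))) =
      (∏ k, Gamma (p k / q k)) / (∏ k, q k * r k ^ p k) *
        (t ^ ((s - ∑ k, p k / q k) - 1) * exp (-t)) := by
  unfold G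
  rw [integral_const_mul, integral_fintype_prod_eq_prod
    (f := fun k (y : ℝ) => y ^ (p k - 1) * exp (-(t * r k ^ q k) * y ^ q k))]
  have h : ∀ k, ∫ y in Set.Ioi (0 : ℝ), y ^ (p k - 1) * exp (-(t * r k ^ q k) * y ^ q k) =
      t ^ (-(p k / q k)) * (Gamma (p k / q k) / (q k * r k ^ p k)) := by
    intro k
    have hrk := hr k
    have hqk := hq k
    rw [one_dim (hp k) (hq k) (by positivity), mul_rpow ht.le (by positivity),
      ← rpow_mul hrk.le]
    have : q k * -(p k / q k) = - p k := by field_simp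
    rw [this, rpow_neg hrk.le]
    field_simp
  simp only [h]
  rw [Finset.prod_mul_distrib, ← Real.rpow_sum_of_pos ht, Finset.prod_div_distrib,
    Finset.sum_neg_distrib]
  have : s - ∑ k, p k / q k - 1 = (s - 1) + -∑ k, p k / q k := by ring
  rw [this, rpow_add ht]
  ring

lemma G_integral_t {n : ℕ} (p q r : Fin n → ℝ) (s : ℝ) (hs : 0 < s)
    (hr : ∀ k, 0 < r k) {x : Fin n → ℝ} (hx : ∀ k, 0 < x k) :
    ∫ t in Set.Ioi (0 : ℝ), G p q r s x t =
      Gamma s * ((∏ k, x k ^ (p k - 1)) * (1 + ∑ k, (r k * x k) ^ q k) ^ (-s)) := by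
  have hA : 0 < 1 + ∑ k, (r k * x k) ^ q k := by
    have : 0 ≤ ∑ k, (r k * x k) ^ q k :=
      Finset.sum_nonneg fun k _ => rpow_nonneg (mul_pos (hr k) (hx k)).le _
    linarith
  have h : ∀ t : ℝ, G p q r s x t =
      (∏ k, x k ^ (p k - 1)) * (t ^ (s - 1) * exp (-((1 + ∑ k, (r k * x k) ^ q k) * t))) := by
    intro t
    unfold G
    rw [Finset.prod_mul_distrib, ← Real.exp_sum]
    have : -((1 + ∑ k, (r k * x k) ^ q k) * t) =
        -t + ∑ k, (-(t * r k ^ q k) * x k ^ q k) := by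
      rw [add_mul, one_mul, Finset.sum_mul, neg_add, ← Finset.sum_neg_distrib]
      congr 1
      refine Finset.sum_congr rfl fun k _ => ?_
      rw [mul_rpow (hr k).le (hx k).le]
      ring
    rw [this, Real.exp_add]
    ring
  simp only [h]
  rw [integral_const_mul, integral_rpow_mul_exp_neg_mul_Ioi hs hA, rpow_neg hA.le,
    one_div, inv_rpow hA.le]
  ring

end Lemma2Aux

open Lemma2Aux in
/-- Special case (`t = 0`) of Lemma 2: the value of an `n`-fold improper integral
over the positive orthant. -/
theorem lemma2_special_case (n : ℕ) (hn : 1 ≤ n) (p q r : Fin n → ℝ) (s : ℝ)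
    (hp : ∀ k, 0 < p k) (hq : ∀ k, 0 < q k) (hr : ∀ k, 0 < r k) (hs : 0 < s)
    (h1 : 0 < ∑ k, p k / q k) (h2 : (∑ k, p k / q k) < s) :
    ∫ x in Set.univ.pi (fun _ : Fin n => Set.Ioi (0 : ℝ)),
        (∏ k, x k ^ (p k - 1)) * (1 + ∑ k, (r k * x k) ^ q k) ^ (-s) =
      (∏ k, Real.Gamma (p k / q k)) * Real.Gamma (s - ∑ k, p k / q k) /
        ((∏ k, q k * r k ^ p k) * Real.Gamma s) := by
  have hG : Gamma s ≠ 0 := (Gamma_pos_of_pos hs).ne'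
  have hd : 0 < s - ∑ k, p k / q k := by linarith
  have hrestr : (volume : Measure (Fin n → ℝ)).restrict
      (Set.univ.pi (fun _ : Fin n => Set.Ioi (0 : ℝ))) =
      Measure.pi fun _ : Fin n => volume.restrict (Set.Ioi (0 : ℝ)) := by
    rw [volume_pi, Measure.restrict_pi_pi]
  have hx : ∀ᵐ x ∂(Measure.pi fun _ : Fin n => volume.restrict (Set.Ioi (0 : ℝ))),
      ∀ k, 0 < x k := by
    rw [← hrestr]
    filter_upwards [ae_restrict_mem (MeasurableSet.univ_pi fun _ => measurableSet_Ioi)] with x hx k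
    exact hx k (Set.mem_univ k)
  rw [hrestr]
  set μ := Measure.pi fun _ : Fin n => (volume : Measure ℝ).restrict (Set.Ioi (0 : ℝ)) with hμ
  set ν := (volume : Measure ℝ).restrict (Set.Ioi (0 : ℝ)) with hν
  have ht : ∀ᵐ t ∂ν, 0 < t := ae_restrict_mem measurableSet_Ioi
  set C := (∏ k, Gamma (p k / q k)) / (∏ k, q k * r k ^ p k) with hC
  have hgam : ∫ t, t ^ ((s - ∑ k, p k / q k) - 1) * exp (-t) ∂ν =
      Gamma (s - ∑ k, p k / q k) := by
    rw [Gamma_eq_integral hd]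
    simp only [mul_comm, hν]
  have hgamint : Integrable (fun t : ℝ => t ^ ((s - ∑ k, p k / q k) - 1) * exp (-t)) ν := by
    have := GammaIntegral_convergent hd
    simpa only [mul_comm, hν, IntegrableOn] using this
  have hint : Integrable (fun z : (Fin n → ℝ) × ℝ => G p q r s z.1 z.2) (μ.prod ν) := by
    rw [integrable_prod_iff' (G_measurable p q r s).aestronglyMeasurable]
    constructor
    · filter_upwards [ht] with t ht
      unfold G
      refine Integrable.const_mul ?_ _
      exact Integrable.fintype_prod_dep
        (f := fun k (y : ℝ) => y ^ (p k - 1) * exp (-(t * r k ^ q k) * y ^ q k))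
        fun k => one_dim_int (hp k) (hq k) (mul_pos ht (rpow_pos_of_pos (hr k) _))
    · refine (hgamint.const_mul C).congr ?_
      filter_upwards [ht] with t ht
      rw [← G_integral_x p q r s hp hq hr ht]
      refine integral_congr_ae ?_
      filter_upwards [hx] with x hx
      refine (Real.norm_of_nonneg ?_).symm
      unfold G
      exact mul_nonneg (mul_nonneg (rpow_nonneg ht.le _) (exp_nonneg _))
        (Finset.prod_nonneg fun k _ => mul_nonneg (rpow_nonneg (hx k).le _) (exp_nonneg _))
  have hswap := integral_integral_swap (f := fun x t => G p q r s x t) hint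
  have hL : ∫ x, ∫ t, G p q r s x t ∂ν ∂μ = Gamma s *
      ∫ x, (∏ k, x k ^ (p k - 1)) * (1 + ∑ k, (r k * x k) ^ q k) ^ (-s) ∂μ := by
    rw [← integral_const_mul]
    refine integral_congr_ae ?_
    filter_upwards [hx] with x hx
    exact G_integral_t p q r s hs hr hx
  have hR : ∫ t, ∫ x, G p q r s x t ∂μ ∂ν = C * Gamma (s - ∑ k, p k / q k) := by
    rw [← hgam, ← integral_const_mul]
    refine integral_congr_ae ?_
    filter_upwards [ht] with t ht
    exact G_integral_x p q r s hp hq hr ht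
  rw [hL, hR] at hswap
  rw [eq_comm, mul_comm (∏ k, q k * r k ^ p k), ← div_div, div_right_comm, div_eq_iff hG,
    mul_comm _ (Gamma s), hswap, hC]
  ring
end

section
/- Let a ∈ ℝ and b = (b_1,…,b_n), c = (c_1,…,c_n) ∈ ℝ^n with 0 < b_k < c_k for all k and a > b_1 + … + b_n. Let z_1,…,z_n be real-valued functions defined on a right neighborhood of 0, continuous at 0, with z_k(0) > 0 and z_k(ε) > 0 for all small ε > 0. Then lim_{ε→0+} ε^{−(b_1+…+b_n)} · F_A^{(n)}(a, b; c; 1 − z_1(ε)/ε, …, 1 − z_n(ε)/ε) = [Γ(a − Σ_{k=1}^n b_k)/Γ(a)] · ∏_{k=1}^n Γ(c_k)/(z_k(0)^{b_k} Γ(c_k − b_k)). -/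
open MeasureTheory Real Filter Topology

/-- The Lauricella function `F_A^{(n)}(a, b; c; x)` defined through its Euler-type
integral representation. -/
noncomputable def lauricellaFA {ι : Type*} [Fintype ι] (a : ℝ) (b c x : ι → ℝ) : ℝ :=
  (∏ i, Real.Gamma (c i) / (Real.Gamma (b i) * Real.Gamma (c i - b i))) *
    ∫ u in Set.univ.pi (fun _ : ι => Set.Icc (0 : ℝ) 1),
      (∏ i, u i ^ (b i - 1) * (1 - u i) ^ (c i - b i - 1)) * (1 - ∑ i, x i * u i) ^ (-a)

noncomputable def lauK (b d y : ℝ) : ℝ :=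
  ∫ u in Set.Icc (0:ℝ) 1, u ^ (b-1) * (1-u) ^ (d-1) * exp (-(y*u))

lemma beta_integrableOn {b d : ℝ} (hb : 0 < b) (hd : 0 < d) :
    IntegrableOn (fun u : ℝ => u ^ (b-1) * (1-u) ^ (d-1)) (Set.Icc 0 1) := by
  have h := Complex.betaIntegral_convergent (u := (b:ℂ)) (v := (d:ℂ)) (by simpa) (by simpa)
  rw [intervalIntegrable_iff_integrableOn_Icc_of_le zero_le_one] at h
  refine (h.norm).congr ?_
  refine (ae_restrict_iff' measurableSet_Icc).2 (ae_of_all _ fun x hx => ?_)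
  have h1 : (x:ℂ) ^ ((b:ℂ)-1) = ((x ^ (b-1) : ℝ) : ℂ) := by
    rw [Complex.ofReal_cpow hx.1]; simp
  have h2 : (1 - (x:ℂ)) ^ ((d:ℂ)-1) = (((1-x) ^ (d-1) : ℝ) : ℂ) := by
    rw [Complex.ofReal_cpow (by linarith [hx.2])]; simp
  simp only [h1, h2, norm_mul, Complex.norm_real, Real.norm_eq_abs]
  rw [abs_of_nonneg (rpow_nonneg hx.1 _), abs_of_nonneg (rpow_nonneg (by linarith [hx.2]) _)]

lemma lauK_integrableOn {b d y : ℝ} (hb : 0 < b) (hd : 0 < d) (hy : 0 ≤ y) :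
    IntegrableOn (fun u : ℝ => u ^ (b-1) * (1-u) ^ (d-1) * exp (-(y*u))) (Set.Icc 0 1) := by
  refine Integrable.mono (beta_integrableOn hb hd) (Measurable.aestronglyMeasurable (by fun_prop)) ?_
  refine (ae_restrict_iff' measurableSet_Icc).2 (ae_of_all _ fun x hx => ?_)
  rw [norm_mul, Real.norm_eq_abs (exp _), abs_of_pos (exp_pos _)]
  refine mul_le_of_le_one_right (norm_nonneg _) ?_
  rw [exp_le_one_iff]
  have := mul_nonneg hy hx.1
  linarith

lemma lauK_nonneg (b d y : ℝ) : 0 ≤ lauK b d y := by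
  refine setIntegral_nonneg measurableSet_Icc fun x hx => ?_
  have := rpow_nonneg hx.1 (b-1)
  have := rpow_nonneg (sub_nonneg.2 hx.2) (d-1)
  positivity

lemma lauK_le {b d y : ℝ} (hb : 0 < b) (hd : 0 < d) (hy : 0 ≤ y) : lauK b d y ≤ lauK b d 0 := by
  refine setIntegral_mono_on (lauK_integrableOn hb hd hy) (lauK_integrableOn hb hd le_rfl)
    measurableSet_Icc fun x hx => ?_
  have := rpow_nonneg hx.1 (b-1)
  have := rpow_nonneg (sub_nonneg.2 hx.2) (d-1)
  have := mul_nonneg hy hx.1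
  have hx0 := hx.1
  gcongr

lemma lauK_measurable (b d : ℝ) : Measurable (lauK b d) := by
  have : StronglyMeasurable (Function.uncurry fun y u : ℝ =>
      u ^ (b-1) * (1-u) ^ (d-1) * exp (-(y*u))) := by
    apply Measurable.stronglyMeasurable
    unfold Function.uncurry
    fun_prop
  exact (this.integral_prod_right (ν := volume.restrict (Set.Icc (0:ℝ) 1))).measurable

lemma lauK_tendsto_one {b d : ℝ} (hb : 0 < b) :
    Tendsto (fun y => y ^ b * ∫ u in Set.Ioc (0:ℝ) (1/2), u ^ (b-1) * (1-u) ^ (d-1) * exp (-(y*u)))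
      atTop (𝓝 (Gamma b)) := by
  let g : ℝ → ℝ → ℝ := fun y => Set.indicator (Set.Iic (y/2))
    (fun w => w ^ (b-1) * (1-w/y) ^ (d-1) * exp (-w))
  have key : ∀ᶠ y : ℝ in atTop, ∫ w in Set.Ioi (0:ℝ), g y w =
      y ^ b * ∫ u in Set.Ioc (0:ℝ) (1/2), u ^ (b-1) * (1-u) ^ (d-1) * exp (-(y*u)) := by
    filter_upwards [eventually_gt_atTop 0] with y hy
    have h := integral_comp_mul_left_Ioi (g y) 0 hy
    rw [mul_zero, smul_eq_mul] at h
    have h' : ∫ w in Set.Ioi (0:ℝ), g y w = y * ∫ x in Set.Ioi (0:ℝ), g y (y * x) := by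
      rw [h]; field_simp
    rw [h', ← integral_const_mul, ← integral_const_mul]
    have hs : Set.Ioc (0:ℝ) (1/2) = Set.Iic (1/2) ∩ Set.Ioi 0 := by
      ext; simp [and_comm]
    rw [hs, ← Measure.restrict_restrict measurableSet_Iic, ← integral_indicator measurableSet_Iic]
    refine setIntegral_congr_fun measurableSet_Ioi fun x hx => ?_
    have hx : 0 < x := hx
    simp only [g, Set.indicator, Set.mem_Iic]
    have : y * x ≤ y / 2 ↔ x ≤ 1/2 := by
      constructor <;> intro h <;> nlinarith
    simp only [this]
    split_ifs with hh
    · rw [mul_rpow hy.le hx.le, mul_div_cancel_left₀ _ hy.ne']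
      have : y ^ b = y ^ (b-1) * y := by
        rw [← rpow_add_one hy.ne']; simp
      rw [this]; ring
    · simp
  refine Tendsto.congr' key ?_
  have hG : Gamma b = ∫ w in Set.Ioi (0:ℝ), exp (-w) * w ^ (b-1) := Gamma_eq_integral hb
  rw [hG]
  refine tendsto_integral_filter_of_dominated_convergence
    (fun w => 2 ^ |d-1| * (exp (-w) * w ^ (b-1))) ?_ ?_ ((GammaIntegral_convergent hb).const_mul _) ?_
  · refine Eventually.of_forall fun y => ?_
    refine Measurable.aestronglyMeasurable ?_
    exact Measurable.indicator (by fun_prop) measurableSet_Iic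
  · filter_upwards [eventually_gt_atTop 0] with y hy
    refine (ae_restrict_iff' measurableSet_Ioi).2 (ae_of_all _ fun w hw => ?_)
    have hw : 0 < w := hw
    simp only [g, Set.indicator, Set.mem_Iic]
    split_ifs with hh
    · have h1 : 1/2 ≤ 1 - w/y := by
        have : w / y ≤ 1/2 := by rw [div_le_iff₀ hy]; linarith
        linarith
      have h2 : 1 - w/y ≤ 1 := by
        have : 0 ≤ w/y := by positivity
        linarith
      have h3 : 0 < 1 - w/y := by linarith
      have h4 : (1 - w/y) ^ (d-1) ≤ 2 ^ |d-1| := by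
        calc (1 - w/y) ^ (d-1) ≤ (1-w/y) ^ (-|d-1|) :=
              rpow_le_rpow_of_exponent_ge h3 h2 (neg_abs_le _)
          _ ≤ (1/2) ^ (-|d-1|) := rpow_le_rpow_of_nonpos (by norm_num) h1 (by simp)
          _ = 2 ^ |d-1| := by rw [rpow_neg (by norm_num), ← inv_rpow (by norm_num)]; norm_num
      have h5 := rpow_pos_of_pos hw (b-1)
      have h6 := rpow_pos_of_pos h3 (d-1)
      rw [Real.norm_eq_abs, abs_of_nonneg (by positivity)]
      calc _ = (1 - w/y) ^ (d-1) * (exp (-w) * w ^ (b-1)) := by ring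
        _ ≤ _ := by gcongr
    · simp only [norm_zero]
      have h5 := rpow_pos_of_pos hw (b-1)
      positivity
  · refine (ae_restrict_iff' measurableSet_Ioi).2 (ae_of_all _ fun w hw => ?_)
    have h1 : Tendsto (fun y : ℝ => w ^ (b-1) * (1-w/y) ^ (d-1) * exp (-w)) atTop
        (𝓝 (w ^ (b-1) * (1-0) ^ (d-1) * exp (-w))) := by
      refine Tendsto.mul_const _ (Tendsto.const_mul _ ?_)
      refine Tendsto.rpow_const ?_ (by simp)
      exact tendsto_const_nhds.sub (tendsto_const_nhds.div_atTop tendsto_id)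
    have h2 : w ^ (b-1) * (1-0) ^ (d-1) * exp (-w) = exp (-w) * w ^ (b-1) := by
      simp [mul_comm]
    rw [h2] at h1
    refine h1.congr' ?_
    filter_upwards [eventually_ge_atTop (2*w)] with y hy
    simp only [g, Set.indicator, Set.mem_Iic]
    rw [if_pos (by linarith)]

lemma lauK_tendsto_two {b d : ℝ} (hb : 0 < b) (hd : 0 < d) :
    Tendsto (fun y => y ^ b * ∫ u in Set.Ioc (1/2:ℝ) 1, u ^ (b-1) * (1-u) ^ (d-1) * exp (-(y*u)))
      atTop (𝓝 0) := by
  have hsub : Set.Ioc (1/2:ℝ) 1 ⊆ Set.Icc 0 1 := fun x hx => ⟨by linarith [hx.1], hx.2⟩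
  have hlim : Tendsto (fun y : ℝ => y ^ b * exp (-(1/2) * y) *
      ∫ u in Set.Ioc (1/2:ℝ) 1, u ^ (b-1) * (1-u) ^ (d-1)) atTop (𝓝 0) := by
    simpa using (tendsto_rpow_mul_exp_neg_mul_atTop_nhds_zero b (1/2) (by norm_num)).mul_const
      (∫ u in Set.Ioc (1/2:ℝ) 1, u ^ (b-1) * (1-u) ^ (d-1))
  refine tendsto_of_tendsto_of_tendsto_of_le_of_le' tendsto_const_nhds hlim ?_ ?_
  · filter_upwards [eventually_ge_atTop 0] with y hy
    refine mul_nonneg (rpow_nonneg hy _) (setIntegral_nonneg measurableSet_Ioc fun x hx => ?_)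
    have := rpow_nonneg (hsub hx).1 (b-1)
    have := rpow_nonneg (sub_nonneg.2 hx.2) (d-1)
    positivity
  · filter_upwards [eventually_ge_atTop 0] with y hy
    rw [mul_assoc]
    refine mul_le_mul_of_nonneg_left ?_ (rpow_nonneg hy _)
    rw [← integral_const_mul]
    refine setIntegral_mono_on ((lauK_integrableOn hb hd hy).mono_set hsub)
      (((beta_integrableOn hb hd).mono_set hsub).const_mul _) measurableSet_Ioc fun x hx => ?_
    have := rpow_nonneg (hsub hx).1 (b-1)
    have := rpow_nonneg (sub_nonneg.2 hx.2) (d-1)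
    rw [mul_comm]
    gcongr
    nlinarith [hx.1]

lemma lauK_tendsto {b d : ℝ} (hb : 0 < b) (hd : 0 < d) :
    Tendsto (fun y => y ^ b * lauK b d y) atTop (𝓝 (Gamma b)) := by
  have h := (lauK_tendsto_one (d := d) hb).add (lauK_tendsto_two hb hd)
  rw [add_zero] at h
  refine h.congr' ?_
  filter_upwards [eventually_ge_atTop 0] with y hy
  have hi := lauK_integrableOn hb hd hy
  rw [lauK, integral_Icc_eq_integral_Ioc, ← mul_add,
    ← Set.Ioc_union_Ioc_eq_Ioc (show (0:ℝ) ≤ 1/2 by norm_num) (show (1/2:ℝ) ≤ 1 by norm_num),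
    setIntegral_union (Set.Ioc_disjoint_Ioc_of_le le_rfl) measurableSet_Ioc]
  · exact hi.mono_set fun x hx => ⟨hx.1.le, by linarith [hx.2]⟩
  · exact hi.mono_set fun x hx => ⟨by linarith [hx.1], hx.2⟩

lemma lauK_bound {b d : ℝ} (hb : 0 < b) (hd : 0 < d) :
    ∃ C, ∀ y, 0 ≤ y → y ^ b * lauK b d y ≤ C := by
  have h := (lauK_tendsto hb hd).eventually (eventually_le_nhds (lt_add_one (Gamma b)))
  obtain ⟨Y, hY⟩ := eventually_atTop.1 h
  refine ⟨max (Gamma b + 1) (|Y| ^ b * lauK b d 0), fun y hy => ?_⟩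
  rcases le_total Y y with h1 | h1
  · exact (hY y h1).trans (le_max_left _ _)
  · refine le_trans ?_ (le_max_right _ _)
    have := lauK_nonneg b d y
    have := lauK_le hb hd hy
    have : y ≤ |Y| := h1.trans (le_abs_self _)
    gcongr

/-- Laplace transform representation of the Euler integral. -/
lemma lau_euler {n : ℕ} {a : ℝ} {b d w : Fin n → ℝ} (ha : 0 < a) (hb : ∀ k, 0 < b k)
    (hd : ∀ k, 0 < d k) (hw : ∀ k, 0 ≤ w k) :
    ∫ u in Set.univ.pi (fun _ : Fin n => Set.Icc (0 : ℝ) 1),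
      (∏ i, u i ^ (b i - 1) * (1 - u i) ^ (d i - 1)) * (1 + ∑ i, w i * u i) ^ (-a)
    = (Gamma a)⁻¹ * ∫ s in Set.Ioi (0:ℝ), s ^ (a-1) * exp (-s) * ∏ k, lauK (b k) (d k) (s * w k) := by
  have hmeas : MeasurableSet (Set.univ.pi (fun _ : Fin n => Set.Icc (0 : ℝ) 1)) :=
    MeasurableSet.univ_pi fun _ => measurableSet_Icc
  set Q := Set.univ.pi (fun _ : Fin n => Set.Icc (0 : ℝ) 1) with hQ
  have hX : ∀ u ∈ Q, 0 ≤ ∑ i, w i * u i := fun u hu =>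
    Finset.sum_nonneg fun i _ => mul_nonneg (hw i) (hu i trivial).1
  have hpi : (volume : Measure (Fin n → ℝ)).restrict Q
      = Measure.pi fun _ => volume.restrict (Set.Icc (0:ℝ) 1) := by
    rw [hQ, volume_pi, Measure.restrict_pi_pi]
  let G : (Fin n → ℝ) → ℝ := fun u => ∏ i, u i ^ (b i - 1) * (1 - u i) ^ (d i - 1)
  have hG : Integrable G (volume.restrict Q) := by
    rw [hpi]
    exact Integrable.fintype_prod (f := fun i x => x ^ (b i - 1) * (1 - x) ^ (d i - 1))
      fun i => beta_integrableOn (hb i) (hd i)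
  have hS : IntegrableOn (fun s : ℝ => s ^ (a-1) * exp (-s)) (Set.Ioi 0) := by
    simpa [mul_comm] using GammaIntegral_convergent ha
  let H : (Fin n → ℝ) → ℝ → ℝ := fun u s =>
    G u * (s ^ (a-1) * exp (-s)) * exp (-(s * ∑ i, w i * u i))
  have hH : Integrable (Function.uncurry H) ((volume.restrict Q).prod (volume.restrict (Set.Ioi 0))) := by
    refine (hG.mul_prod hS).mono ?_ ?_
    · refine Measurable.aestronglyMeasurable ?_
      simp only [H, G, Function.uncurry_def]
      fun_prop
    · rw [Measure.prod_restrict]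
      refine (ae_restrict_iff' (hmeas.prod measurableSet_Ioi)).2 (ae_of_all _ fun p hp => ?_)
      simp only [H, Function.uncurry_def]
      rw [norm_mul (_ * _) (exp _), Real.norm_eq_abs (exp (-(_ * _))), abs_of_pos (exp_pos _)]
      refine mul_le_of_le_one_right (norm_nonneg _) ?_
      rw [exp_le_one_iff]
      have := mul_nonneg (le_of_lt hp.2) (hX _ hp.1)
      linarith
  have hsw := integral_integral_swap hH
  have hGa := (Gamma_pos_of_pos ha).ne'
  have hL : ∫ u in Q, G u * (1 + ∑ i, w i * u i) ^ (-a) = (Gamma a)⁻¹ *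
      ∫ u in Q, ∫ s in Set.Ioi (0:ℝ), H u s := by
    rw [← integral_const_mul]
    refine setIntegral_congr_fun hmeas fun u hu => ?_
    have hr : 0 < 1 + ∑ i, w i * u i := by linarith [hX u hu]
    have h1 : ∫ s in Set.Ioi (0:ℝ), H u s = G u * ∫ s in Set.Ioi (0:ℝ),
        s ^ (a-1) * exp (-((1 + ∑ i, w i * u i) * s)) := by
      rw [← integral_const_mul]
      congr 1; ext s
      simp only [H]
      rw [mul_assoc, mul_assoc, ← exp_add]
      congr 3; ring
    simp only [h1, integral_rpow_mul_exp_neg_mul_Ioi ha hr]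
    rw [one_div, inv_rpow hr.le, ← rpow_neg hr.le]
    field_simp
  rw [hL, hsw]
  congr 1
  refine setIntegral_congr_fun measurableSet_Ioi fun s hs => ?_
  simp only [lauK]
  rw [← integral_fintype_prod_eq_prod (fun i x => x ^ (b i - 1) * (1 - x) ^ (d i - 1) *
    exp (-(s * w i * x))), ← hpi, ← integral_const_mul]
  congr 1; ext u
  simp only [H, G]
  rw [Finset.prod_mul_distrib (g := fun i => exp _), ← exp_sum, Finset.sum_neg_distrib]
  simp only [mul_assoc, ← Finset.mul_sum]
  ring

theorem lauricella_aux {n : ℕ} {a : ℝ} {b d : Fin n → ℝ} (hb : ∀ k, 0 < b k) (hd : ∀ k, 0 < d k)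
    (ha : ∑ k, b k < a) {z0 : Fin n → ℝ} (hz0 : ∀ k, 0 < z0 k) {v : Fin n → ℝ → ℝ}
    (hv : ∀ k, Tendsto (v k) (𝓝[>] 0) (𝓝 (z0 k))) :
    Tendsto (fun t : ℝ => t ^ (-(∑ k, b k)) * ∫ s in Set.Ioi (0:ℝ), s ^ (a-1) * exp (-s) *
      ∏ k, lauK (b k) (d k) (s * (v k t / t))) (𝓝[>] 0)
      (𝓝 (Gamma (a - ∑ k, b k) * ∏ k, Gamma (b k) / z0 k ^ b k)) := by
  set B := ∑ k, b k with hB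
  choose C hC using fun k => lauK_bound (hb k) (hd k)
  let F : ℝ → ℝ → ℝ := fun t s => (exp (-s) * s ^ (a - B - 1)) *
    ∏ k, ((s * (v k t / t)) ^ b k * lauK (b k) (d k) (s * (v k t / t)) / v k t ^ b k)
  have ht0 : ∀ᶠ t : ℝ in 𝓝[>] 0, 0 < t := eventually_mem_nhdsWithin
  have hvpos : ∀ᶠ t : ℝ in 𝓝[>] 0, ∀ k, z0 k / 2 < v k t :=
    eventually_all.2 fun k => (hv k).eventually (lt_mem_nhds (half_lt_self (hz0 k)))
  have key : ∀ᶠ t : ℝ in 𝓝[>] 0, ∫ s in Set.Ioi (0:ℝ), F t s =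
      t ^ (-B) * ∫ s in Set.Ioi (0:ℝ), s ^ (a-1) * exp (-s) *
      ∏ k, lauK (b k) (d k) (s * (v k t / t)) := by
    filter_upwards [ht0, hvpos] with t ht hvt
    rw [← integral_const_mul]
    refine setIntegral_congr_fun measurableSet_Ioi fun s hs => ?_
    have hs : 0 < s := hs
    have h1 : ∀ k, (s * (v k t / t)) ^ b k * lauK (b k) (d k) (s * (v k t / t)) / v k t ^ b k
        = s ^ b k * t ^ (-b k) * lauK (b k) (d k) (s * (v k t / t)) := by
      intro k
      have hvk : 0 < v k t := by linarith [hvt k, hz0 k]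
      rw [mul_rpow hs.le (by positivity), div_rpow hvk.le ht.le, rpow_neg ht.le]
      have := (rpow_pos_of_pos hvk (b k)).ne'
      field_simp
    simp only [F, h1]
    rw [Finset.prod_mul_distrib, Finset.prod_mul_distrib, ← rpow_sum_of_pos hs,
      ← rpow_sum_of_pos ht, Finset.sum_neg_distrib, ← hB]
    have : s ^ (a-1) = s ^ (a - B - 1) * s ^ B := by rw [← rpow_add hs]; congr 1; ring
    rw [this]; ring
  refine Tendsto.congr' key ?_
  rw [Gamma_eq_integral (show 0 < a - B by linarith), ← integral_mul_const]
  refine tendsto_integral_filter_of_dominated_convergence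
    (fun s => (exp (-s) * s ^ (a - B - 1)) * ∏ k, C k / (z0 k / 2) ^ b k) ?_ ?_
    ((GammaIntegral_convergent (show 0 < a - B by linarith)).mul_const _) ?_
  · refine Eventually.of_forall fun t => Measurable.aestronglyMeasurable ?_
    have := fun k => lauK_measurable (b k) (d k)
    simp only [F]
    fun_prop
  · filter_upwards [ht0, hvpos] with t ht hvt
    refine (ae_restrict_iff' measurableSet_Ioi).2 (ae_of_all _ fun s hs => ?_)
    have hs : 0 < s := hs
    have hvk : ∀ k, 0 < v k t := fun k => by linarith [hvt k, hz0 k]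
    have hn : ∀ k, 0 ≤ (s * (v k t / t)) ^ b k * lauK (b k) (d k) (s * (v k t / t)) / v k t ^ b k := by
      intro k
      have := hvk k
      have := lauK_nonneg (b k) (d k) (s * (v k t / t))
      positivity
    rw [Real.norm_eq_abs, abs_of_nonneg (mul_nonneg (by positivity) (Finset.prod_nonneg fun k _ => hn k))]
    refine mul_le_mul_of_nonneg_left ?_ (by positivity)
    refine Finset.prod_le_prod (fun k _ => hn k) fun k _ => ?_
    have h1 := hvk k
    have h2 := hC k (s * (v k t / t)) (by positivity)
    have h3 := lauK_nonneg (b k) (d k) (s * (v k t / t))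
    have h4 := hz0 k
    have h5 : 0 ≤ C k := le_trans (by positivity) h2
    have h6 := (hvt k).le
    have h7 := (hb k).le
    gcongr
  · refine (ae_restrict_iff' measurableSet_Ioi).2 (ae_of_all _ fun s hs => ?_)
    have hs : 0 < s := hs
    refine Tendsto.const_mul _ (tendsto_finsetProd _ fun k _ => ?_)
    refine Tendsto.div ?_ ((hv k).rpow_const (Or.inl (hz0 k).ne')) (rpow_pos_of_pos (hz0 k) _).ne'
    refine (lauK_tendsto (hb k) (hd k)).comp ?_
    refine Tendsto.const_mul_atTop hs ?_
    simp only [div_eq_mul_inv]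
    exact Tendsto.pos_mul_atTop (hz0 k) (hv k) tendsto_inv_nhdsGT_zero

theorem lauricella_limit_relation (n : ℕ) (hn : 1 ≤ n) (a : ℝ) (b c : Fin n → ℝ)
    (hbc : ∀ k, 0 < b k ∧ b k < c k) (ha : ∑ k, b k < a)
    (z : Fin n → ℝ → ℝ)
    (hzc : ∀ k, ContinuousWithinAt (z k) (Set.Ici 0) 0)
    (hz0 : ∀ k, 0 < z k 0)
    (hzpos : ∀ k, ∀ᶠ t in nhdsWithin 0 (Set.Ioi 0), 0 < z k t) :
    Filter.Tendsto
      (fun t : ℝ => t ^ (-(∑ k, b k)) * lauricellaFA a b c (fun k => 1 - z k t / t))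
      (nhdsWithin 0 (Set.Ioi 0))
      (nhds (Real.Gamma (a - ∑ k, b k) / Real.Gamma a *
        ∏ k, Real.Gamma (c k) / (z k 0 ^ b k * Real.Gamma (c k - b k)))) := by
  have hb : ∀ k, 0 < b k := fun k => (hbc k).1
  have hd : ∀ k, 0 < c k - b k := fun k => sub_pos.2 (hbc k).2
  have ha0 : 0 < a := lt_of_le_of_lt (Finset.sum_nonneg fun k _ => (hb k).le) ha
  have hid : Tendsto (fun t : ℝ => t) (𝓝[>] 0) (𝓝 0) := tendsto_nhdsWithin_of_tendsto_nhds tendsto_id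
  have hv : ∀ k, Tendsto (fun t => z k t - t) (𝓝[>] 0) (𝓝 (z k 0)) := fun k => by
    have h1 : Tendsto (z k) (𝓝[>] 0) (𝓝 (z k 0)) := (hzc k).mono Set.Ioi_subset_Ici_self
    simpa using h1.sub hid
  have hmain := (lauricella_aux hb hd ha hz0 hv).const_mul
    ((∏ i, Gamma (c i) / (Gamma (b i) * Gamma (c i - b i))) * (Gamma a)⁻¹)
  have hlim : ((∏ i, Gamma (c i) / (Gamma (b i) * Gamma (c i - b i))) * (Gamma a)⁻¹) *
      (Gamma (a - ∑ k, b k) * ∏ k, Gamma (b k) / z k 0 ^ b k) = Gamma (a - ∑ k, b k) / Gamma a *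
        ∏ k, Gamma (c k) / (z k 0 ^ b k * Gamma (c k - b k)) := by
    have : ∏ k, Gamma (c k) / (z k 0 ^ b k * Gamma (c k - b k)) =
        (∏ i, Gamma (c i) / (Gamma (b i) * Gamma (c i - b i))) * ∏ k, Gamma (b k) / z k 0 ^ b k := by
      rw [← Finset.prod_mul_distrib]
      refine Finset.prod_congr rfl fun k _ => ?_
      have h1 := (Gamma_pos_of_pos (hb k)).ne'
      have h2 := (Gamma_pos_of_pos (hd k)).ne'
      have h3 := (rpow_pos_of_pos (hz0 k) (b k)).ne'
      field_simp
    rw [this]; ring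
  rw [hlim] at hmain
  refine hmain.congr' ?_
  have hvpos : ∀ᶠ t : ℝ in 𝓝[>] 0, ∀ k, 0 < z k t - t :=
    eventually_all.2 fun k => (hv k).eventually (lt_mem_nhds (hz0 k))
  have ht0 : ∀ᶠ t : ℝ in 𝓝[>] 0, 0 < t := eventually_mem_nhdsWithin
  filter_upwards [ht0, hvpos] with t ht hvt
  have hE := lau_euler (w := fun k => (z k t - t) / t) ha0 hb hd
    (fun k => div_nonneg (hvt k).le ht.le)
  have hbase : ∀ u : Fin n → ℝ, 1 - ∑ i, (1 - z i t / t) * u i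
      = 1 + ∑ i, (z i t - t) / t * u i := by
    intro u
    rw [sub_eq_add_neg, ← Finset.sum_neg_distrib]
    congr 1
    refine Finset.sum_congr rfl fun i _ => ?_
    field_simp
    ring
  simp only [lauricellaFA, hbase]
  rw [hE]
  ring
end

section
/- Let m > 2, 1 ≤ n ≤ m, and 0 < 2α_j < 1 for j = 1,…,n; set α = α_1+…+α_n, β = (m−2)/2 + α, and γ = 2^{2β−m} Γ(β) π^{−m/2} ∏_{k=1}^n Γ(α_k)/Γ(2α_k). For x, ξ ∈ ℝ^m with x_j > 0, ξ_j > 0 (j = 1,…,n) and x ≠ ξ, let r² = Σ_{i=1}^m (x_i − ξ_i)² and q(x,ξ) = γ r^{−2β} F_A^{(n)}(β, (α_1,…,α_n); (2α_1,…,2α_n); −4x_1ξ_1/r², …, −4x_nξ_n/r²). Then for each fixed ξ, the function x ↦ q(x,ξ) satisfies the singular elliptic equation Σ_{i=1}^m ∂²q/∂x_i² + Σ_{j=1}^n (2α_j/x_j) ∂q/∂x_j = 0 at every such point x. -/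
open MeasureTheory Real

lemma fs_beta_integrable {a : ℝ} (ha : 0 < a) :
    IntegrableOn (fun s : ℝ => s ^ (a - 1) * (1 - s) ^ (a - 1)) (Set.Icc 0 1) := by
  have h := Complex.betaIntegral_convergent (u := (a : ℂ)) (v := (a : ℂ)) (by simpa) (by simpa)
  rw [intervalIntegrable_iff_integrableOn_Icc_of_le zero_le_one] at h
  have h2 := h.re
  refine IntegrableOn.congr_fun (f := _) h2 ?_ measurableSet_Icc
  intro s hs
  have e1 : ((s : ℂ) ^ ((a : ℂ) - 1)) = ((s ^ (a - 1) : ℝ) : ℂ) := by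
    rw [Complex.ofReal_cpow hs.1]; push_cast; rfl
  have e2 : ((1 - (s : ℂ)) ^ ((a : ℂ) - 1)) = (((1 - s) ^ (a - 1) : ℝ) : ℂ) := by
    rw [Complex.ofReal_cpow (by linarith [hs.2])]; push_cast; rfl
  simp only [e1, e2, ← Complex.ofReal_mul]
  simp

lemma fs_ibp {a A B p : ℝ} (ha : 0 < a) (hA : 0 < A) (hB : 0 ≤ B) :
    ∫ s in Set.Icc (0 : ℝ) 1, (s ^ (a - 1) * (1 - s) ^ (a - 1)) *
      (a * (1 - 2 * s) * (A + B * s) ^ (-p) - p * B * (s * (1 - s)) * (A + B * s) ^ (-p - 1)) = 0 := by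
  have hpos : ∀ s ∈ Set.Icc (0 : ℝ) 1, 0 < A + B * s := fun s hs => by
    have := mul_nonneg hB hs.1; linarith
  rw [integral_Icc_eq_integral_Ioc, ← intervalIntegral.integral_of_le zero_le_one,
    intervalIntegral.integral_eq_sub_of_hasDerivAt_of_le
      (f := fun s : ℝ => s ^ a * (1 - s) ^ a * (A + B * s) ^ (-p)) zero_le_one]
  · simp [Real.zero_rpow ha.ne']
  · refine ContinuousOn.mul (ContinuousOn.mul ?_ ?_) ?_
    · exact continuousOn_id.rpow_const (fun _ _ => Or.inr ha.le)
    · exact (by fun_prop : Continuous fun s : ℝ => 1 - s).continuousOn.rpow_const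
        (fun _ _ => Or.inr ha.le)
    · exact (by fun_prop : Continuous fun s : ℝ => A + B * s).continuousOn.rpow_const
        (fun s hs => Or.inl (hpos s hs).ne')
  · intro s hs
    have h0 : 0 < s := hs.1
    have h1 : 0 < 1 - s := by linarith [hs.2]
    have h2 := hpos s ⟨hs.1.le, hs.2.le⟩
    have d1 : HasDerivAt (fun s : ℝ => s ^ a) (1 * a * s ^ (a - 1)) s :=
      (hasDerivAt_id s).rpow_const (Or.inl h0.ne')
    have d2 : HasDerivAt (fun s : ℝ => (1 - s) ^ a) (-1 * a * (1 - s) ^ (a - 1)) s :=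
      ((hasDerivAt_id s).const_sub 1).rpow_const (Or.inl h1.ne')
    have d3 : HasDerivAt (fun s : ℝ => (A + B * s) ^ (-p)) (B * (-p) * (A + B * s) ^ (-p - 1)) s := by
      have : HasDerivAt (fun s : ℝ => A + B * s) B s := by
        simpa using ((hasDerivAt_id s).const_mul B).const_add A
      exact this.rpow_const (Or.inl h2.ne')
    refine ((d1.mul d2).mul d3).congr_deriv ?_
    have e1 : s ^ a = s ^ (a - 1) * s := by
      rw [← Real.rpow_add_one h0.ne']; ring_nf
    have e2 : (1 - s) ^ a = (1 - s) ^ (a - 1) * (1 - s) := by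
      rw [← Real.rpow_add_one h1.ne']; ring_nf
    simp only [Pi.mul_apply, e1, e2]
    ring
  · rw [intervalIntegrable_iff_integrableOn_Icc_of_le zero_le_one]
    refine (fs_beta_integrable ha).mul_continuousOn ?_ isCompact_Icc
    have c : Continuous fun s : ℝ => A + B * s := by fun_prop
    have c1 := c.continuousOn.rpow_const (s := Set.Icc 0 1) (p := -p)
        (fun s hs => Or.inl (hpos s hs).ne')
    have c2 := c.continuousOn.rpow_const (s := Set.Icc 0 1) (p := -p - 1)
        (fun s hs => Or.inl (hpos s hs).ne')
    exact (ContinuousOn.mul (by fun_prop) c1).sub (ContinuousOn.mul (by fun_prop) c2)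

lemma fs_mp_update {ι : Type*} [Fintype ι] [DecidableEq ι] (μ : ι → Measure ℝ)
    [∀ i, IsProbabilityMeasure (μ i)] (j : ι) :
    MeasurePreserving (fun z : (ι → ℝ) × ℝ => Function.update z.1 j z.2)
      ((Measure.pi μ).prod (μ j)) (Measure.pi μ) := by
  have hm : Measurable (fun z : (ι → ℝ) × ℝ => Function.update z.1 j z.2) := by
    rw [measurable_pi_iff]
    intro i
    by_cases h : i = j
    · subst h; simpa using measurable_snd
    · simp only [Function.update_of_ne h]; fun_prop
  refine ⟨hm, (Measure.pi_eq ?_).symm⟩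
  intro s hs
  rw [Measure.map_apply hm (MeasurableSet.univ_pi hs)]
  have : (fun z : (ι → ℝ) × ℝ => Function.update z.1 j z.2) ⁻¹' (Set.univ.pi s)
      = (Set.univ.pi (Function.update s j Set.univ)) ×ˢ (s j) := by
    ext z
    simp only [Set.mem_preimage, Set.mem_pi, Set.mem_univ, true_imp_iff, Set.mem_prod]
    constructor
    · intro h
      refine ⟨fun i => ?_, by simpa using h j⟩
      by_cases hi : i = j
      · subst hi; simp
      · simpa [hi] using h i
    · rintro ⟨h, h'⟩ i
      by_cases hi : i = j
      · subst hi; simpa using h'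
      · simpa [hi] using h i
  rw [this, Measure.prod_prod, Measure.pi_pi, ← Finset.mul_prod_erase _ _ (Finset.mem_univ j),
    ← Finset.mul_prod_erase _ (fun i => μ i (s i)) (Finset.mem_univ j)]
  have : ∏ x ∈ Finset.univ.erase j, (μ x) (Function.update s j Set.univ x)
      = ∏ x ∈ Finset.univ.erase j, (μ x) (s x) := by
    refine Finset.prod_congr rfl fun i hi => ?_
    rw [Function.update_of_ne (Finset.ne_of_mem_erase hi)]
  rw [this]; simp [mul_comm]

lemma fs_deriv_integral {E : Type*} [TopologicalSpace E] [MeasurableSpace E] [BorelSpace E]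
    [T2Space E] [SecondCountableTopology E] {μ : Measure E}
    {K : Set E} (hK : IsCompact K) {w : E → ℝ} (hw : IntegrableOn w K μ)
    {G G' : ℝ → E → ℝ} {t0 δ : ℝ}
    (hd : ∀ t ∈ Metric.closedBall t0 δ, ∀ u ∈ K, HasDerivAt (fun t => G t u) (G' t u) t)
    (hc : ∀ t ∈ Metric.closedBall t0 δ, ContinuousOn (G t) K)
    (hc' : ContinuousOn (fun z : ℝ × E => G' z.1 z.2) (Metric.closedBall t0 δ ×ˢ K)) :
    ∀ t ∈ Metric.ball t0 δ, HasDerivAt (fun t => ∫ u in K, w u * G t u ∂μ)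
      (∫ u in K, w u * G' t u ∂μ) t := by
  intro t ht
  obtain ⟨C, hC⟩ := ((isCompact_closedBall t0 δ).prod hK).exists_bound_of_continuousOn hc'
  have hmem := Metric.isOpen_ball.mem_nhds ht
  have htc := Metric.ball_subset_closedBall ht
  refine (hasDerivAt_integral_of_dominated_loc_of_deriv_le (μ := μ.restrict K)
    (F := fun t u => w u * G t u) (F' := fun t u => w u * G' t u) (bound := fun u => ‖w u‖ * C)
    hmem ?_ ?_ ?_ ?_ ?_ ?_).2
  · filter_upwards [hmem] with s hs
    exact (hw.mul_continuousOn (hc s (Metric.ball_subset_closedBall hs)) hK).aestronglyMeasurable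
  · exact hw.mul_continuousOn (hc t htc) hK
  · refine (hw.mul_continuousOn (g' := G' t) ?_ hK).aestronglyMeasurable
    exact hc'.comp (f := fun u => (t, u)) (by fun_prop) (fun u hu => ⟨htc, hu⟩)
  · filter_upwards [ae_restrict_mem hK.measurableSet] with u hu s hs
    rw [norm_mul]
    exact mul_le_mul_of_nonneg_left (hC (s, u) ⟨Metric.ball_subset_closedBall hs, hu⟩) (norm_nonneg _)
  · exact hw.norm.mul_const C
  · filter_upwards [ae_restrict_mem hK.measurableSet] with u hu s hs
    exact (hd s (Metric.ball_subset_closedBall hs) u hu).const_mul _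

/-- extension of a vector by zero -/
noncomputable def fsExt {m n : ℕ} (u : {i : Fin m // (i : ℕ) < n} → ℝ) (i : Fin m) : ℝ :=
  if h : (i : ℕ) < n then u ⟨i, h⟩ else 0

/-- the quadratic form `r² + 4 ∑ x_j ξ_j v_j` -/
noncomputable def fsR {m : ℕ} (x ξ v : Fin m → ℝ) : ℝ :=
  ∑ i, ((x i - ξ i) ^ 2 + 4 * x i * ξ i * v i)

/-- the unit cube -/
def fsK (ι : Type*) : Set (ι → ℝ) := Set.univ.pi (fun _ : ι => Set.Icc (0 : ℝ) 1)

/-- the Euler weight -/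
noncomputable def fsW {ι : Type*} [Fintype ι] (a : ι → ℝ) (u : ι → ℝ) : ℝ :=
  ∏ i, u i ^ (a i - 1) * (1 - u i) ^ (a i - 1)

lemma fsK_compact (ι : Type*) : IsCompact (fsK ι) := isCompact_univ_pi fun _ => isCompact_Icc

lemma fsK_restrict (ι : Type*) [Fintype ι] :
    (volume : Measure (ι → ℝ)).restrict (fsK ι)
      = Measure.pi (fun _ : ι => (volume : Measure ℝ).restrict (Set.Icc 0 1)) :=
  Measure.restrict_pi_pi (fun _ => (volume : Measure ℝ)) _

lemma fsW_integrable {ι : Type*} [Fintype ι] {a : ι → ℝ} (ha : ∀ i, 0 < a i) :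
    IntegrableOn (fsW a) (fsK ι) := by
  rw [IntegrableOn, fsK_restrict]
  exact Integrable.fintype_prod (f := fun i s => s ^ (a i - 1) * (1 - s) ^ (a i - 1))
    (fun i => fs_beta_integrable (ha i))

lemma fsExt_continuous {m n : ℕ} (i : Fin m) :
    Continuous (fun u : {i : Fin m // (i : ℕ) < n} → ℝ => fsExt u i) := by
  unfold fsExt
  split_ifs <;> fun_prop

lemma fsR_continuous {m n : ℕ} (x ξ : Fin m → ℝ) (i : Fin m) :
    Continuous (fun z : ℝ × ({i : Fin m // (i : ℕ) < n} → ℝ) =>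
      fsR (Function.update x i z.1) ξ (fsExt z.2)) := by
  unfold fsR
  refine continuous_finsetSum _ fun k _ => ?_
  have h1 : Continuous (fun z : ℝ × ({i : Fin m // (i : ℕ) < n} → ℝ) =>
      Function.update x i z.1 k) := by
    by_cases h : k = i
    · subst h; simpa using continuous_fst
    · simpa [Function.update_of_ne h] using continuous_const
  have h2 : Continuous (fun z : ℝ × ({i : Fin m // (i : ℕ) < n} → ℝ) => fsExt z.2 k) :=
    (fsExt_continuous k).comp continuous_snd
  fun_prop

lemma fsR_continuous' {m n : ℕ} (x ξ : Fin m → ℝ) :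
    Continuous (fun u : {i : Fin m // (i : ℕ) < n} → ℝ => fsR x ξ (fsExt u)) := by
  unfold fsR
  refine continuous_finsetSum _ fun k _ => ?_
  have := fsExt_continuous (n := n) k
  fun_prop

lemma fsR_hasDerivAt {m : ℕ} (x ξ v : Fin m → ℝ) (i : Fin m) (t : ℝ) :
    HasDerivAt (fun t => fsR (Function.update x i t) ξ v) (2 * (t - ξ i) + 4 * ξ i * v i) t := by
  have e : (fun t => fsR (Function.update x i t) ξ v) = fun t =>
      ((t - ξ i) ^ 2 + 4 * t * ξ i * v i) +
        ∑ k ∈ Finset.univ.erase i, ((x k - ξ k) ^ 2 + 4 * x k * ξ k * v k) := by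
    funext t
    rw [fsR, ← Finset.add_sum_erase _ _ (Finset.mem_univ i)]
    congr 1
    · simp
    · refine Finset.sum_congr rfl fun k hk => ?_
      rw [Function.update_of_ne (Finset.ne_of_mem_erase hk)]
  rw [e]
  refine HasDerivAt.add_const _ ?_
  have h := (((hasDerivAt_id t).sub_const (ξ i)).pow 2).add
    ((((hasDerivAt_id t).const_mul 4).mul_const (ξ i)).mul_const (v i))
  refine (h.congr_deriv ?_)
  simp

lemma fsR_ge {m n : ℕ} {x ξ : Fin m → ℝ} (hx : ∀ j : Fin m, (j : ℕ) < n → 0 < x j)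
    (hξ : ∀ j : Fin m, (j : ℕ) < n → 0 < ξ j)
    {u : {i : Fin m // (i : ℕ) < n} → ℝ} (hu : u ∈ fsK _) :
    ∑ i, (x i - ξ i) ^ 2 ≤ fsR x ξ (fsExt u) := by
  refine Finset.sum_le_sum fun i _ => ?_
  have : 0 ≤ 4 * x i * ξ i * fsExt u i := by
    unfold fsExt
    split_ifs with h
    · have := hx i h
      have := hξ i h
      have := (hu ⟨i, h⟩ (Set.mem_univ _)).1
      positivity
    · simp
  linarith

lemma fs_sum_sub {m n : ℕ} (x ξ : Fin m → ℝ) (u : {i : Fin m // (i : ℕ) < n} → ℝ) :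
    fsR x ξ (fsExt u) = (∑ i, (x i - ξ i) ^ 2) +
      ∑ j : {i : Fin m // (i : ℕ) < n}, 4 * x j.1 * ξ j.1 * u j := by
  rw [fsR, Finset.sum_add_distrib]
  congr 1
  have : ∀ i : Fin m, 4 * x i * ξ i * fsExt u i = if h : (i : ℕ) < n then
      4 * x i * ξ i * u ⟨i, h⟩ else 0 := by
    intro i; unfold fsExt; split_ifs <;> simp
  simp only [this]
  rw [← Finset.sum_filter_add_sum_filter_not Finset.univ (fun i : Fin m => (i : ℕ) < n)]
  rw [Finset.sum_eq_zero (s := Finset.univ.filter fun i : Fin m => ¬ (i : ℕ) < n), add_zero]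
  · rw [Finset.sum_subtype (p := fun i : Fin m => (i : ℕ) < n)]
    · refine Finset.sum_congr rfl fun j _ => ?_
      simp [j.2]
    · simp
  · intro i hi
    have : ¬ (i : ℕ) < n := by simpa using hi
    simp [this]

lemma fs_ibp_cube {m n : ℕ} {x ξ : Fin m → ℝ} {a : {i : Fin m // (i : ℕ) < n} → ℝ}
    (ha : ∀ i, 0 < a i) (hx : ∀ j : Fin m, (j : ℕ) < n → 0 < x j)
    (hξ : ∀ j : Fin m, (j : ℕ) < n → 0 < ξ j) (hr : 0 < ∑ i, (x i - ξ i) ^ 2)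
    (p : ℝ) (j : {i : Fin m // (i : ℕ) < n}) :
    IntegrableOn (fun u => fsW a u * (a j * (1 - 2 * u j) * fsR x ξ (fsExt u) ^ (-p)
      - p * (4 * x j.1 * ξ j.1) * (u j * (1 - u j)) * fsR x ξ (fsExt u) ^ (-p - 1))) (fsK _) ∧
    ∫ u in fsK _, fsW a u * (a j * (1 - 2 * u j) * fsR x ξ (fsExt u) ^ (-p)
      - p * (4 * x j.1 * ξ j.1) * (u j * (1 - u j)) * fsR x ξ (fsExt u) ^ (-p - 1)) = 0 := by
  have hint : IntegrableOn (fun u => fsW a u * (a j * (1 - 2 * u j) * fsR x ξ (fsExt u) ^ (-p)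
      - p * (4 * x j.1 * ξ j.1) * (u j * (1 - u j)) * fsR x ξ (fsExt u) ^ (-p - 1))) (fsK _) := by
    refine (fsW_integrable ha).mul_continuousOn ?_ (fsK_compact _)
    have c := fsR_continuous' (n := n) x ξ
    have c1 := c.continuousOn.rpow_const (s := fsK _) (p := -p)
        (fun u hu => Or.inl (hr.trans_le (fsR_ge hx hξ hu)).ne')
    have c2 := c.continuousOn.rpow_const (s := fsK _) (p := -p - 1)
        (fun u hu => Or.inl (hr.trans_le (fsR_ge hx hξ hu)).ne')
    exact (ContinuousOn.mul (by fun_prop) c1).sub (ContinuousOn.mul (by fun_prop) c2)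
  refine ⟨hint, ?_⟩
  rw [IntegrableOn, fsK_restrict] at hint
  rw [fsK_restrict]
  have : IsProbabilityMeasure ((volume : Measure ℝ).restrict (Set.Icc 0 1)) := ⟨by simp⟩
  have hmp := fs_mp_update
    (fun _ : {i : Fin m // (i : ℕ) < n} => (volume : Measure ℝ).restrict (Set.Icc 0 1)) j
  have hint2 := (hmp.integrable_comp hint.aestronglyMeasurable).2 hint
  have hsm := hint.aestronglyMeasurable
  rw [← hmp.map_eq] at hsm
  rw [← hmp.map_eq, integral_map hmp.measurable.aemeasurable hsm]
  refine (integral_prod _ hint2).trans ?_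
  rw [← fsK_restrict]
  refine setIntegral_eq_zero_of_forall_eq_zero fun u hu => ?_
  set A := fsR x ξ (fsExt (Function.update u j 0)) with hA
  have hApos : 0 < A := by
    refine hr.trans_le (fsR_ge hx hξ ?_)
    intro k _
    by_cases hk : k = j
    · subst hk; simp
    · simpa [Function.update_of_ne hk] using hu k (Set.mem_univ _)
  have hR : ∀ s, fsR x ξ (fsExt (Function.update u j s)) = A + 4 * x j.1 * ξ j.1 * s := by
    intro s
    rw [hA, fs_sum_sub, fs_sum_sub, ← Finset.add_sum_erase _ _ (Finset.mem_univ j),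
      ← Finset.add_sum_erase _ (fun k => 4 * x k.1 * ξ k.1 * Function.update u j 0 k)
        (Finset.mem_univ j)]
    have : ∀ s, ∑ k ∈ Finset.univ.erase j, 4 * x k.1 * ξ k.1 * Function.update u j s k
        = ∑ k ∈ Finset.univ.erase j, 4 * x k.1 * ξ k.1 * u k := fun s =>
      Finset.sum_congr rfl fun k hk => by
        rw [Function.update_of_ne (Finset.ne_of_mem_erase hk)]
    rw [this, this]; simp; ring
  have hW : ∀ s, fsW a (Function.update u j s) = (∏ k ∈ Finset.univ.erase j,
      u k ^ (a k - 1) * (1 - u k) ^ (a k - 1)) * (s ^ (a j - 1) * (1 - s) ^ (a j - 1)) := by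
    intro s
    rw [fsW, ← Finset.mul_prod_erase _ _ (Finset.mem_univ j), mul_comm]
    congr 1
    · exact Finset.prod_congr rfl fun k hk => by
        rw [Function.update_of_ne (Finset.ne_of_mem_erase hk)]
    · simp
  have hB : 0 ≤ 4 * x j.1 * ξ j.1 := by
    have := hx j.1 j.2
    have := hξ j.1 j.2
    positivity
  simp only [Function.comp, hR, hW, Function.update_self, mul_assoc (∏ k ∈ Finset.univ.erase j,
      u k ^ (a k - 1) * (1 - u k) ^ (a k - 1))]
  rw [integral_const_mul]
  have := fs_ibp (p := p) (ha j) hApos hB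
  rw [this, mul_zero]

lemma fs_repr {m n : ℕ} {x ξ : Fin m → ℝ} (α : Fin m → ℝ) (β : ℝ)
    (hx : ∀ j : Fin m, (j : ℕ) < n → 0 < x j)
    (hξ : ∀ j : Fin m, (j : ℕ) < n → 0 < ξ j) (hr : 0 < ∑ i, (x i - ξ i) ^ 2) :
    ∃ C : ℝ, C = (∏ j : {i : Fin m // (i : ℕ) < n},
      Real.Gamma (2 * α j.1) / (Real.Gamma (α j.1) * Real.Gamma (2 * α j.1 - α j.1))) ∧
    (∑ i, (x i - ξ i) ^ 2) ^ (-β) *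
        lauricellaFA β (fun j : {i : Fin m // (i : ℕ) < n} => α j.1)
          (fun j => 2 * α j.1)
          (fun j => -4 * x j.1 * ξ j.1 / ∑ i, (x i - ξ i) ^ 2) =
      C * ∫ u in fsK _, fsW (fun j : {i : Fin m // (i : ℕ) < n} => α j.1) u *
        fsR x ξ (fsExt u) ^ (-β) := by
  refine ⟨_, rfl, ?_⟩
  rw [lauricellaFA, mul_left_comm, ← integral_const_mul]
  congr 1
  refine setIntegral_congr_fun (fsK_compact _).measurableSet fun u hu => ?_
  have hR := hr.trans_le (fsR_ge hx hξ hu)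
  have e : (1 - ∑ j : {i : Fin m // (i : ℕ) < n},
      -4 * x j.1 * ξ j.1 / (∑ i, (x i - ξ i) ^ 2) * u j)
      = fsR x ξ (fsExt u) / ∑ i, (x i - ξ i) ^ 2 := by
    rw [eq_div_iff hr.ne', fs_sum_sub, sub_mul, Finset.sum_mul, one_mul, sub_eq_add_neg,
      ← Finset.sum_neg_distrib]
    congr 1
    refine Finset.sum_congr rfl fun j _ => ?_
    field_simp
  have e2 : ∀ k : {i : Fin m // (i : ℕ) < n}, 2 * α k.1 - α k.1 - 1 = α k.1 - 1 := by
    intro k; ring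
  have e3 : fsR x ξ (fsExt u) ^ (-β) = (∑ i, (x i - ξ i) ^ 2) ^ (-β) *
      (fsR x ξ (fsExt u) / ∑ i, (x i - ξ i) ^ 2) ^ (-β) := by
    rw [← Real.mul_rpow hr.le (div_pos hR hr).le, mul_div_cancel₀ _ hr.ne']
  simp only [e, e2]
  rw [e3, fsW]
  ring

lemma fs_nhds {m n : ℕ} {x ξ : Fin m → ℝ} (i : Fin m)
    (hx : ∀ j : Fin m, (j : ℕ) < n → 0 < x j) (hr : 0 < ∑ i, (x i - ξ i) ^ 2) :
    ∃ δ > 0, ∀ t ∈ Metric.closedBall (x i) δ,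
      (∀ j : Fin m, (j : ℕ) < n → 0 < Function.update x i t j) ∧
      0 < ∑ k, (Function.update x i t k - ξ k) ^ 2 := by
  have hc : ∀ k, Continuous fun t : ℝ => Function.update x i t k := by
    intro k
    have : Continuous fun t : ℝ => Function.update x i t := continuous_const.update i continuous_id
    exact (continuous_apply k).comp this
  have h1 : ∀ᶠ t in nhds (x i), ∀ j : Fin m, (j : ℕ) < n → 0 < Function.update x i t j := by
    rw [Filter.eventually_all]
    intro j
    by_cases hj : (j : ℕ) < n
    · have := ((hc j).continuousAt (x := x i)).eventually (p := fun y => 0 < y)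
        (lt_mem_nhds (by simpa using hx j hj))
      filter_upwards [this] with t ht _ using ht
    · exact Filter.Eventually.of_forall fun t h => absurd h hj
  have h2 : ∀ᶠ t in nhds (x i), 0 < ∑ k, (Function.update x i t k - ξ k) ^ 2 := by
    have c : Continuous fun t : ℝ => ∑ k, (Function.update x i t k - ξ k) ^ 2 :=
      continuous_finsetSum _ fun k _ => by have := hc k; fun_prop
    exact (c.continuousAt (x := x i)).eventually (p := fun y => 0 < y)
        (lt_mem_nhds (by simpa using hr))
  obtain ⟨δ, hδ, h⟩ := Metric.nhds_basis_closedBall.eventually_iff.1 (h1.and h2)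
  exact ⟨δ, hδ, fun t ht => h ht⟩

lemma fs_derivs {m n : ℕ} {x ξ : Fin m → ℝ} (α : Fin m → ℝ) (β D : ℝ) (i : Fin m)
    (hα : ∀ j : Fin m, (j : ℕ) < n → 0 < α j)
    (hx : ∀ j : Fin m, (j : ℕ) < n → 0 < x j)
    (hξ : ∀ j : Fin m, (j : ℕ) < n → 0 < ξ j) (hr : 0 < ∑ i, (x i - ξ i) ^ 2)
    (Q : (Fin m → ℝ) → ℝ)
    (hQ : ∀ y : Fin m → ℝ, (∀ j : Fin m, (j : ℕ) < n → 0 < y j) → 0 < ∑ i, (y i - ξ i) ^ 2 →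
      Q y = D * ∫ u in fsK _, fsW (fun j : {i : Fin m // (i : ℕ) < n} => α j.1) u *
        fsR y ξ (fsExt u) ^ (-β)) :
    deriv (fun t => Q (Function.update x i t)) (x i) =
      D * ∫ u in fsK _, fsW (fun j : {i : Fin m // (i : ℕ) < n} => α j.1) u *
        ((2 * (x i - ξ i) + 4 * ξ i * fsExt u i) * (-β) * fsR x ξ (fsExt u) ^ (-β - 1)) ∧
    deriv (deriv (fun t => Q (Function.update x i t))) (x i) =
      D * ∫ u in fsK _, fsW (fun j : {i : Fin m // (i : ℕ) < n} => α j.1) u *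
        (2 * (-β) * fsR x ξ (fsExt u) ^ (-β - 1) + (2 * (x i - ξ i) + 4 * ξ i * fsExt u i) * (-β) *
        ((2 * (x i - ξ i) + 4 * ξ i * fsExt u i) * (-β - 1) *
          fsR x ξ (fsExt u) ^ (-β - 1 - 1))) := by
  obtain ⟨δ, hδ, hball⟩ := fs_nhds (n := n) i hx hr
  set w := fsW (fun j : {i : Fin m // (i : ℕ) < n} => α j.1) with hwdef
  have hw : IntegrableOn w (fsK _) := fsW_integrable fun j => hα j.1 j.2
  have hpos : ∀ t ∈ Metric.closedBall (x i) δ,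
      ∀ u : {i : Fin m // (i : ℕ) < n} → ℝ, u ∈ fsK _ →
      0 < fsR (Function.update x i t) ξ (fsExt u) := fun t ht u hu =>
    (hball t ht).2.trans_le (fsR_ge (hball t ht).1 hξ hu)
  have hcp : ∀ p : ℝ, ContinuousOn (fun z : ℝ × ({i : Fin m // (i : ℕ) < n} → ℝ) =>
      fsR (Function.update x i z.1) ξ (fsExt z.2) ^ p)
        (Metric.closedBall (x i) δ ×ˢ fsK _) := fun p =>
    (fsR_continuous x ξ i).continuousOn.rpow_const
      (fun z hz => Or.inl (hpos z.1 hz.1 z.2 hz.2).ne')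
  have hS : Continuous (fun z : ℝ × ({i : Fin m // (i : ℕ) < n} → ℝ) =>
      2 * (z.1 - ξ i) + 4 * ξ i * fsExt z.2 i) := by
    have : Continuous (fun z : ℝ × ({i : Fin m // (i : ℕ) < n} → ℝ) => fsExt z.2 i) :=
      (fsExt_continuous i).comp continuous_snd
    fun_prop
  have hslice : ∀ {H : ℝ × ({i : Fin m // (i : ℕ) < n} → ℝ) → ℝ},
      ContinuousOn H (Metric.closedBall (x i) δ ×ˢ fsK _) →
      ∀ t ∈ Metric.closedBall (x i) δ, ContinuousOn (fun u => H (t, u)) (fsK _) := by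
    intro H hH t ht
    exact hH.comp (f := fun u => (t, u)) (by fun_prop) (fun u hu => ⟨ht, hu⟩)
  have hdp : ∀ p : ℝ, ∀ t ∈ Metric.closedBall (x i) δ,
      ∀ u ∈ fsK {i : Fin m // (i : ℕ) < n},
      HasDerivAt (fun t => fsR (Function.update x i t) ξ (fsExt u) ^ p)
        ((2 * (t - ξ i) + 4 * ξ i * fsExt u i) * p *
          fsR (Function.update x i t) ξ (fsExt u) ^ (p - 1)) t := fun p t ht u hu =>
    (fsR_hasDerivAt x ξ (fsExt u) i t).rpow_const (Or.inl (hpos t ht u hu).ne')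
  have c1 : ContinuousOn (fun z : ℝ × ({i : Fin m // (i : ℕ) < n} → ℝ) =>
      (2 * (z.1 - ξ i) + 4 * ξ i * fsExt z.2 i) * (-β) *
        fsR (Function.update x i z.1) ξ (fsExt z.2) ^ (-β - 1))
      (Metric.closedBall (x i) δ ×ˢ fsK _) :=
    (hS.continuousOn.mul continuousOn_const).mul (hcp _)
  have D1 := fs_deriv_integral (μ := volume) (fsK_compact {i : Fin m // (i : ℕ) < n}) hw
    (G := fun t u => fsR (Function.update x i t) ξ (fsExt u) ^ (-β))
    (G' := fun t u => (2 * (t - ξ i) + 4 * ξ i * fsExt u i) * (-β) *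
          fsR (Function.update x i t) ξ (fsExt u) ^ (-β - 1))
    (hdp (-β)) (hslice (hcp (-β))) c1
  have c2 : ContinuousOn (fun z : ℝ × ({i : Fin m // (i : ℕ) < n} → ℝ) =>
      (2 * (-β) * fsR (Function.update x i z.1) ξ (fsExt z.2) ^ (-β - 1)
        + (2 * (z.1 - ξ i) + 4 * ξ i * fsExt z.2 i) * (-β) *
        ((2 * (z.1 - ξ i) + 4 * ξ i * fsExt z.2 i) * (-β - 1) *
          fsR (Function.update x i z.1) ξ (fsExt z.2) ^ (-β - 1 - 1))))
      (Metric.closedBall (x i) δ ×ˢ fsK _) :=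
    (continuousOn_const.mul (hcp _)).add ((hS.continuousOn.mul continuousOn_const).mul
      ((hS.continuousOn.mul continuousOn_const).mul (hcp _)))
  have D2 := fs_deriv_integral (μ := volume) (fsK_compact {i : Fin m // (i : ℕ) < n}) hw
    (G := fun t u => (2 * (t - ξ i) + 4 * ξ i * fsExt u i) * (-β) *
          fsR (Function.update x i t) ξ (fsExt u) ^ (-β - 1))
    (G' := fun t u => (2 * (-β) * fsR (Function.update x i t) ξ (fsExt u) ^ (-β - 1)
        + (2 * (t - ξ i) + 4 * ξ i * fsExt u i) * (-β) *
        ((2 * (t - ξ i) + 4 * ξ i * fsExt u i) * (-β - 1) *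
          fsR (Function.update x i t) ξ (fsExt u) ^ (-β - 1 - 1))))
    (fun t ht u hu => by
      have h := hdp (-β - 1) t ht u hu
      have h0 : HasDerivAt (fun t => (2 * (t - ξ i) + 4 * ξ i * fsExt u i) * (-β))
          (2 * (-β)) t := by
        have := (((((hasDerivAt_id t).sub_const (ξ i)).const_mul 2).add_const
          (4 * ξ i * fsExt u i)).mul_const (-β))
        simpa using this
      exact h0.mul h) (hslice c1) c2
  have hloc : ∀ t ∈ Metric.ball (x i) δ, deriv (fun t => Q (Function.update x i t)) t =
      D * ∫ u in fsK _, w u * ((2 * (t - ξ i) + 4 * ξ i * fsExt u i) * (-β) *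
          fsR (Function.update x i t) ξ (fsExt u) ^ (-β - 1)) := by
    intro t ht
    have hev : (fun t => Q (Function.update x i t)) =ᶠ[nhds t] fun t =>
        D * ∫ u in fsK _, w u * fsR (Function.update x i t) ξ (fsExt u) ^ (-β) := by
      filter_upwards [Metric.isOpen_ball.mem_nhds ht] with s hs
      have := hball s (Metric.ball_subset_closedBall hs)
      exact hQ _ this.1 this.2
    rw [hev.deriv_eq]
    exact ((D1 t ht).const_mul D).deriv
  have hself : x i ∈ Metric.ball (x i) δ := Metric.mem_ball_self hδ
  constructor
  · rw [hloc _ hself, Function.update_eq_self]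
  · have hev : deriv (fun t => Q (Function.update x i t)) =ᶠ[nhds (x i)] fun t =>
      D * ∫ u in fsK _, w u * ((2 * (t - ξ i) + 4 * ξ i * fsExt u i) * (-β) *
          fsR (Function.update x i t) ξ (fsExt u) ^ (-β - 1)) := by
      filter_upwards [Metric.isOpen_ball.mem_nhds hself] with s hs using hloc s hs
    rw [hev.deriv_eq, ((D2 _ hself).const_mul D).deriv, Function.update_eq_self]

lemma fs_pointwise {m n : ℕ} {x ξ v : Fin m → ℝ} (α : Fin m → ℝ) (β : ℝ)
    (hβ : β = ((m : ℝ) - 2) / 2 + ∑ j ∈ Finset.univ.filter fun j : Fin m => (j : ℕ) < n, α j)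
    (hx : ∀ j : Fin m, (j : ℕ) < n → 0 < x j) (hR : 0 < fsR x ξ v)
    (hv : ∀ j : Fin m, ¬ (j : ℕ) < n → v j = 0) :
    (∑ i, (2 * (-β) * fsR x ξ v ^ (-β - 1) + (2 * (x i - ξ i) + 4 * ξ i * v i) * (-β) *
        ((2 * (x i - ξ i) + 4 * ξ i * v i) * (-β - 1) * fsR x ξ v ^ (-β - 1 - 1)))) +
      ∑ j ∈ Finset.univ.filter fun j : Fin m => (j : ℕ) < n, 2 * α j / x j *
        ((2 * (x j - ξ j) + 4 * ξ j * v j) * (-β) * fsR x ξ v ^ (-β - 1)) =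
    ∑ j ∈ Finset.univ.filter fun j : Fin m => (j : ℕ) < n, 4 * β * ξ j / x j *
      (α j * (1 - 2 * v j) * fsR x ξ v ^ (-(β + 1)) -
        (β + 1) * (4 * x j * ξ j) * (v j * (1 - v j)) * fsR x ξ v ^ (-(β + 1) - 1)) := by
  have e0 : -(β + 1) = -β - 1 := by ring
  rw [e0]
  set P := fsR x ξ v ^ (-β - 1 - 1) with hP
  have e1 : fsR x ξ v ^ (-β - 1) = P * fsR x ξ v := by
    rw [hP, ← Real.rpow_add_one hR.ne']; ring_nf
  rw [e1]
  set R := fsR x ξ v with hRdef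
  have hS : ∑ i, (2 * (x i - ξ i) + 4 * ξ i * v i) ^ 2 = 4 * R -
      16 * ∑ j ∈ Finset.univ.filter fun j : Fin m => (j : ℕ) < n, ξ j ^ 2 * (v j * (1 - v j)) := by
    rw [Finset.sum_filter, hRdef, fsR, Finset.mul_sum, Finset.mul_sum, ← Finset.sum_sub_distrib]
    refine Finset.sum_congr rfl fun i _ => ?_
    split_ifs with h
    · ring
    · rw [hv i h]; ring
  have hA : (∑ i : Fin m, (2 * (-β) * (P * R) + (2 * (x i - ξ i) + 4 * ξ i * v i) * (-β) *
        ((2 * (x i - ξ i) + 4 * ξ i * v i) * (-β - 1) * P))) =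
      -2 * β * P * R * m + β * (β + 1) * P * ∑ i, (2 * (x i - ξ i) + 4 * ξ i * v i) ^ 2 := by
    rw [Finset.mul_sum, Finset.sum_add_distrib]
    congr 1
    · simp; ring
    · exact Finset.sum_congr rfl fun i _ => by ring
  have hB : ∑ j ∈ Finset.univ.filter (fun j : Fin m => (j : ℕ) < n), 2 * α j / x j *
        ((2 * (x j - ξ j) + 4 * ξ j * v j) * (-β) * (P * R)) =
      ∑ j ∈ Finset.univ.filter (fun j : Fin m => (j : ℕ) < n), (4 * β * ξ j / x j *
      (α j * (1 - 2 * v j) * (P * R) - (β + 1) * (4 * x j * ξ j) * (v j * (1 - v j)) * P)) -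
      4 * β * P * R * (∑ j ∈ Finset.univ.filter (fun j : Fin m => (j : ℕ) < n), α j) +
      16 * β * (β + 1) * P *
        ∑ j ∈ Finset.univ.filter (fun j : Fin m => (j : ℕ) < n), ξ j ^ 2 * (v j * (1 - v j)) := by
    rw [Finset.mul_sum, Finset.mul_sum, ← Finset.sum_sub_distrib, ← Finset.sum_add_distrib]
    refine Finset.sum_congr rfl fun j hj => ?_
    have := (hx j (by simpa using hj)).ne'
    field_simp
    ring
  rw [hA, hB, hS]
  have hsum : (∑ j ∈ Finset.univ.filter (fun j : Fin m => (j : ℕ) < n), α j)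
    = β - ((m : ℝ) - 2) / 2 := by linarith
  rw [hsum]
  ring

/-- The fundamental solution
`q(x,ξ) = γ r^{−2β} F_A^{(n)}(β, α; 2α; −4x_1ξ_1/r², …, −4x_nξ_n/r²)` satisfies, as a
function of `x`, the singular elliptic equation
`Σ_{i=1}^m ∂²q/∂x_i² + Σ_{j=1}^n (2α_j/x_j) ∂q/∂x_j = 0` at every point of the open
orthant with `x ≠ ξ`. -/
theorem fundamental_solution_satisfies_equation (m n : ℕ) (hm : 2 < m) (hn : 1 ≤ n)
    (hnm : n ≤ m) (α : Fin m → ℝ)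
    (hα : ∀ j : Fin m, (j : ℕ) < n → 0 < 2 * α j ∧ 2 * α j < 1)
    (β γ : ℝ)
    (hβ : β = ((m : ℝ) - 2) / 2 + ∑ j ∈ Finset.univ.filter fun j : Fin m => (j : ℕ) < n, α j)
    (hγ : γ = 2 ^ (2 * β - (m : ℝ)) * Real.Gamma β / Real.pi ^ ((m : ℝ) / 2) *
      ∏ j ∈ Finset.univ.filter fun j : Fin m => (j : ℕ) < n,
        Real.Gamma (α j) / Real.Gamma (2 * α j))
    (q : (Fin m → ℝ) → (Fin m → ℝ) → ℝ)
    (hq : ∀ x ξ : Fin m → ℝ, q x ξ =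
      γ * (∑ i, (x i - ξ i) ^ 2) ^ (-β) *
        lauricellaFA β (fun j : {i : Fin m // (i : ℕ) < n} => α j.1)
          (fun j => 2 * α j.1)
          (fun j => -4 * x j.1 * ξ j.1 / ∑ i, (x i - ξ i) ^ 2))
    (x ξ : Fin m → ℝ) (hx : ∀ j : Fin m, (j : ℕ) < n → 0 < x j)
    (hξ : ∀ j : Fin m, (j : ℕ) < n → 0 < ξ j) (hne : x ≠ ξ) :
    (∑ i : Fin m, deriv (deriv fun t : ℝ => q (Function.update x i t) ξ) (x i)) +
      ∑ j ∈ Finset.univ.filter fun j : Fin m => (j : ℕ) < n,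
        2 * α j / x j * deriv (fun t : ℝ => q (Function.update x j t) ξ) (x j) = 0 := by
  have hα' : ∀ j : Fin m, (j : ℕ) < n → 0 < α j := fun j hj => by linarith [(hα j hj).1]
  have hr : 0 < ∑ i, (x i - ξ i) ^ 2 := by
    obtain ⟨k, hk⟩ := Function.ne_iff.1 hne
    refine Finset.sum_pos' (fun i _ => sq_nonneg _) ⟨k, Finset.mem_univ k, ?_⟩
    have := sub_ne_zero.2 hk
    positivity
  set D : ℝ := γ * (∏ j : {i : Fin m // (i : ℕ) < n},
      Real.Gamma (2 * α j.1) / (Real.Gamma (α j.1) * Real.Gamma (2 * α j.1 - α j.1))) with hD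
  set w := fsW (fun j : {i : Fin m // (i : ℕ) < n} => α j.1) with hwdef
  have hw : IntegrableOn w (fsK _) := fsW_integrable fun j => hα' j.1 j.2
  have hQ : ∀ y : Fin m → ℝ, (∀ j : Fin m, (j : ℕ) < n → 0 < y j) → 0 < ∑ i, (y i - ξ i) ^ 2 →
      q y ξ = D * ∫ u in fsK _, w u * fsR y ξ (fsExt u) ^ (-β) := by
    intro y hy hry
    obtain ⟨C, hC, h⟩ := fs_repr α β hy hξ hry
    rw [hq, mul_assoc, h, hD, hC, mul_assoc]
  have hder := fun i => fs_derivs α β D i hα' hx hξ hr (fun y => q y ξ) hQ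
  have hpos : ∀ u ∈ fsK {i : Fin m // (i : ℕ) < n}, 0 < fsR x ξ (fsExt u) := fun u hu =>
    hr.trans_le (fsR_ge hx hξ hu)
  have hcp : ∀ p : ℝ, ContinuousOn (fun u : {i : Fin m // (i : ℕ) < n} → ℝ =>
      fsR x ξ (fsExt u) ^ p) (fsK _) := fun p =>
    (fsR_continuous' x ξ).continuousOn.rpow_const (fun u hu => Or.inl (hpos u hu).ne')
  have hS : ∀ i, Continuous (fun u : {i : Fin m // (i : ℕ) < n} → ℝ =>
      2 * (x i - ξ i) + 4 * ξ i * fsExt u i) := by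
    intro i
    have := fsExt_continuous (n := n) i
    fun_prop
  have I1 : ∀ i, IntegrableOn (fun u => w u *
        ((2 * (x i - ξ i) + 4 * ξ i * fsExt u i) * (-β) * fsR x ξ (fsExt u) ^ (-β - 1)))
        (fsK _) := fun i =>
    hw.mul_continuousOn (((hS i).continuousOn.mul continuousOn_const).mul (hcp _)) (fsK_compact _)
  have I2 : ∀ i, IntegrableOn (fun u => w u *
        (2 * (-β) * fsR x ξ (fsExt u) ^ (-β - 1) + (2 * (x i - ξ i) + 4 * ξ i * fsExt u i) * (-β) *
        ((2 * (x i - ξ i) + 4 * ξ i * fsExt u i) * (-β - 1) *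
          fsR x ξ (fsExt u) ^ (-β - 1 - 1)))) (fsK _) := fun i =>
    hw.mul_continuousOn ((continuousOn_const.mul (hcp _)).add
      (((hS i).continuousOn.mul continuousOn_const).mul
      (((hS i).continuousOn.mul continuousOn_const).mul (hcp _)))) (fsK_compact _)
  have J : ∀ j : Fin m, (j : ℕ) < n →
      IntegrableOn (fun u => w u * (α j * (1 - 2 * fsExt u j) * fsR x ξ (fsExt u) ^ (-(β + 1)) -
        (β + 1) * (4 * x j * ξ j) * (fsExt u j * (1 - fsExt u j)) *
          fsR x ξ (fsExt u) ^ (-(β + 1) - 1))) (fsK {i : Fin m // (i : ℕ) < n}) ∧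
      ∫ u in fsK {i : Fin m // (i : ℕ) < n},
        w u * (α j * (1 - 2 * fsExt u j) * fsR x ξ (fsExt u) ^ (-(β + 1)) -
        (β + 1) * (4 * x j * ξ j) * (fsExt u j * (1 - fsExt u j)) *
          fsR x ξ (fsExt u) ^ (-(β + 1) - 1)) = 0 := by
    intro j hj
    have h := fs_ibp_cube (a := fun j : {i : Fin m // (i : ℕ) < n} => α j.1)
      (fun j => hα' j.1 j.2) hx hξ hr (β + 1) ⟨j, hj⟩
    have e : ∀ u : {i : Fin m // (i : ℕ) < n} → ℝ, fsExt u j = u ⟨j, hj⟩ := by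
      intro u; simp [fsExt, hj]
    simp only [e]
    exact h
  have s1 : ∑ i : Fin m, deriv (deriv fun t : ℝ => q (Function.update x i t) ξ) (x i) =
      D * ∫ u in fsK _, ∑ i : Fin m, w u *
        (2 * (-β) * fsR x ξ (fsExt u) ^ (-β - 1) + (2 * (x i - ξ i) + 4 * ξ i * fsExt u i) * (-β) *
        ((2 * (x i - ξ i) + 4 * ξ i * fsExt u i) * (-β - 1) *
          fsR x ξ (fsExt u) ^ (-β - 1 - 1))) := by
    rw [integral_finsetSum _ (fun i _ => I2 i), Finset.mul_sum]
    exact Finset.sum_congr rfl fun i _ => (hder i).2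
  have s2 : ∑ j ∈ Finset.univ.filter (fun j : Fin m => (j : ℕ) < n),
        2 * α j / x j * deriv (fun t : ℝ => q (Function.update x j t) ξ) (x j) =
      D * ∫ u in fsK _, ∑ j ∈ Finset.univ.filter (fun j : Fin m => (j : ℕ) < n),
        2 * α j / x j * (w u *
        ((2 * (x j - ξ j) + 4 * ξ j * fsExt u j) * (-β) * fsR x ξ (fsExt u) ^ (-β - 1))) := by
    rw [integral_finsetSum _ (fun i _ => (I1 i).const_mul _), Finset.mul_sum]
    refine Finset.sum_congr rfl fun j _ => ?_
    rw [(hder j).1, integral_const_mul]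
    ring
  rw [s1, s2, ← mul_add, ← integral_add (integrable_finsetSum _ fun i _ => I2 i)
    (integrable_finsetSum _ fun i _ => (I1 i).const_mul _)]
  have s3 : ∀ u ∈ fsK {i : Fin m // (i : ℕ) < n}, (∑ i : Fin m, w u *
        (2 * (-β) * fsR x ξ (fsExt u) ^ (-β - 1) + (2 * (x i - ξ i) + 4 * ξ i * fsExt u i) * (-β) *
        ((2 * (x i - ξ i) + 4 * ξ i * fsExt u i) * (-β - 1) *
          fsR x ξ (fsExt u) ^ (-β - 1 - 1)))) +
      ∑ j ∈ Finset.univ.filter (fun j : Fin m => (j : ℕ) < n),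
        2 * α j / x j * (w u *
        ((2 * (x j - ξ j) + 4 * ξ j * fsExt u j) * (-β) * fsR x ξ (fsExt u) ^ (-β - 1))) =
      ∑ j ∈ Finset.univ.filter (fun j : Fin m => (j : ℕ) < n), 4 * β * ξ j / x j *
        (w u * (α j * (1 - 2 * fsExt u j) * fsR x ξ (fsExt u) ^ (-(β + 1)) -
        (β + 1) * (4 * x j * ξ j) * (fsExt u j * (1 - fsExt u j)) *
          fsR x ξ (fsExt u) ^ (-(β + 1) - 1))) := by
    intro u hu
    have h := fs_pointwise α β hβ hx (hpos u hu) (fun j hj => by simp [fsExt, hj])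
    have h' := congrArg (fun y => w u * y) h
    simp only [mul_add, Finset.mul_sum] at h'
    simp only [mul_left_comm _ (w u)]
    simp only [mul_add]
    exact h'
  rw [setIntegral_congr_fun (fsK_compact _).measurableSet s3, integral_finsetSum]
  · rw [Finset.sum_eq_zero, mul_zero]
    intro j hj
    rw [integral_const_mul, (J j (by simpa using hj)).2, mul_zero]
  · intro j hj
    exact (J j (by simpa using hj)).1.const_mul _
end

section
/- Let m > 2, 1 ≤ n ≤ m, and 0 < 2α_j < 1 for j = 1,…,n; set α = α_1+…+α_n, β = (m−2)/2 + α, and γ = 2^{2β−m} Γ(β) π^{−m/2} ∏_{j=1}^n Γ(α_j)/Γ(2α_j). Fix k with 1 ≤ k ≤ n, and let ν_k be a continuous function on S_k = {x̃_k = (x_1,…,x_{k−1},x_{k+1},…,x_m) : x_i > 0 for i ≤ n, i ≠ k} satisfying |ν_k(x̃_k)| ≤ c_k (1 + Σ_{i≠k} x_i²)^{−(1−2α_k+ε_k)/2} for some constants c_k > 0 and ε_k > 0. Define, for ξ ∈ ℝ^m with ξ_1 > 0, …, ξ_n > 0, I_k(ξ) = −γ ∫_{S_k} ν_k(x̃_k)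 · [∏_{j≤n, j≠k} x_j^{2α_j}] · r_k^{−2β} · F_A^{(n−1)}(β, (α_j)_{j≤n, j≠k}; (2α_j)_{j≤n, j≠k}; (−4x_jξ_j/r_k²)_{j≤n, j≠k}) dx̃_k, where r_k² = ξ_k² + Σ_{i≠k} (x_i − ξ_i)². Then for every fixed ξ̃_k with positive coordinates ξ_i > 0 (i ≤ n, i ≠ k), one has lim_{ξ_k→0+} ξ_k^{2α_k} ∂I_k/∂ξ_k = ν_k(ξ̃_k). -/
open MeasureTheory Real Filter Topology

lemma aux_integrable_rpow_exp {a r : ℝ} (ha : 0 < a) (hr : 0 < r) :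
    Integrable (fun t : ℝ => t ^ (a - 1) * Real.exp (-(r * t))) (volume.restrict (Set.Ioi 0)) := by
  apply not_imp_comm.1 integral_undef
  rw [Real.integral_rpow_mul_exp_neg_mul_Ioi ha hr]
  have := Real.Gamma_pos_of_pos ha
  positivity

lemma aux_gauss_gamma {ι κ : Type*} [Fintype ι] [Fintype κ] (a q : κ → ℝ) (c : ℝ)
    (ha : ∀ j, 0 < a j) (hq : ∀ j, 0 < q j)
    (hd : 0 < c - (Fintype.card ι : ℝ) / 2 - ∑ j, a j) :
    Integrable (fun p : (ι → ℝ) × (κ → ℝ) => (∏ j, p.2 j ^ (a j - 1)) *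
        (1 + ∑ i, p.1 i ^ 2 + ∑ j, q j * p.2 j) ^ (-c))
      ((volume : Measure (ι → ℝ)).prod
        ((volume : Measure (κ → ℝ)).restrict (Set.univ.pi fun _ => Set.Ioi 0))) ∧
    ∫ p : (ι → ℝ) × (κ → ℝ), (∏ j, p.2 j ^ (a j - 1)) *
        (1 + ∑ i, p.1 i ^ 2 + ∑ j, q j * p.2 j) ^ (-c)
      ∂((volume : Measure (ι → ℝ)).prod
        ((volume : Measure (κ → ℝ)).restrict (Set.univ.pi fun _ => Set.Ioi 0)))
      = π ^ ((Fintype.card ι : ℝ) / 2) * (∏ j, (q j ^ (-a j) * Real.Gamma (a j))) *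
        Real.Gamma (c - (Fintype.card ι : ℝ) / 2 - ∑ j, a j) / Real.Gamma c := by
  set d := c - (Fintype.card ι : ℝ) / 2 - ∑ j, a j with hdd
  have hc : 0 < c := by
    have : 0 ≤ ∑ j, a j := Finset.sum_nonneg fun j _ => (ha j).le
    have : (0:ℝ) ≤ (Fintype.card ι : ℝ) / 2 := by positivity
    linarith
  have hΓc := Real.Gamma_pos_of_pos hc
  set μ := ((volume : Measure (ι → ℝ)).prod
        ((volume : Measure (κ → ℝ)).restrict (Set.univ.pi fun _ => Set.Ioi 0))) with hμ
  have hrest : ((volume : Measure (κ → ℝ)).restrict (Set.univ.pi fun _ => Set.Ioi (0:ℝ)))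
      = Measure.pi fun _ => volume.restrict (Set.Ioi 0) := Measure.restrict_pi_pi _ _
  let g : ℝ → (ι → ℝ) × (κ → ℝ) → ℝ := fun t p => (t ^ (c - 1) * exp (-t)) *
    ((∏ i, exp (-t * p.1 i ^ 2)) * ∏ j, (p.2 j ^ (a j - 1) * exp (-((t * q j) * p.2 j))))
  have hgform : ∀ t p, g t p = (∏ j, p.2 j ^ (a j - 1)) *
      (t ^ (c - 1) * exp (-((1 + ∑ i, p.1 i ^ 2 + ∑ j, q j * p.2 j) * t))) := by
    intro t p
    simp only [g]
    rw [Finset.prod_mul_distrib, ← Real.exp_sum, ← Real.exp_sum]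
    have : exp (-((1 + ∑ i, p.1 i ^ 2 + ∑ j, q j * p.2 j) * t)) =
        exp (-t) * exp (∑ i, -t * p.1 i ^ 2) * exp (∑ j, -((t * q j) * p.2 j)) := by
      rw [← Real.exp_add, ← Real.exp_add, ← Finset.mul_sum, Finset.sum_neg_distrib]
      congr 1
      simp_rw [mul_assoc t]
      rw [← Finset.mul_sum]
      ring
    rw [this]; ring
  -- integrability of slices
  have hgint : ∀ t, 0 < t → Integrable (g t) μ := by
    intro t ht
    apply Integrable.const_mul
    rw [hμ, hrest]
    apply Integrable.mul_prod (f := fun z : ι → ℝ => ∏ i, exp (-t * z i ^ 2))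
      (g := fun v : κ → ℝ => ∏ j, (v j ^ (a j - 1) * exp (-((t * q j) * v j))))
    · exact Integrable.fintype_prod (f := fun _ (x : ℝ) => exp (-t * x ^ 2))
        (fun i => integrable_exp_neg_mul_sq ht)
    · exact Integrable.fintype_prod
        (f := fun j (x : ℝ) => (x ^ (a j - 1) * exp (-((t * q j) * x))))
        (fun j => aux_integrable_rpow_exp (ha j) (mul_pos ht (hq j)))
  have hgval : ∀ t, 0 < t → ∫ p, g t p ∂μ =
      (π ^ ((Fintype.card ι : ℝ) / 2) * (∏ j, (q j ^ (-a j) * Real.Gamma (a j)))) *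
        (t ^ (d - 1) * exp (-(1 * t))) := by
    intro t ht
    simp only [g]
    rw [integral_const_mul, hμ, hrest]
    rw [integral_prod_mul (fun z : ι → ℝ => ∏ i, exp (-t * z i ^ 2))
      (fun v : κ → ℝ => ∏ j, (v j ^ (a j - 1) * exp (-((t * q j) * v j))))]
    rw [integral_fintype_prod_eq_prod
      (f := fun j (x : ℝ) => (x ^ (a j - 1) * exp (-((t * q j) * x))))]
    rw [integral_fintype_prod_volume_eq_prod (f := fun _ (x : ℝ) => exp (-t * x ^ 2))]
    have h1 : ∀ j, ∫ x in Set.Ioi (0:ℝ), (x ^ (a j - 1) * exp (-((t * q j) * x)))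
        = t ^ (- a j) * (q j ^ (-a j) * Real.Gamma (a j)) := by
      intro j
      rw [Real.integral_rpow_mul_exp_neg_mul_Ioi (ha j) (mul_pos ht (hq j)), one_div,
        Real.inv_rpow (mul_pos ht (hq j)).le, ← Real.rpow_neg (mul_pos ht (hq j)).le,
        Real.mul_rpow ht.le (hq j).le, mul_assoc]
    simp_rw [h1, integral_gaussian]
    rw [Finset.prod_mul_distrib, Finset.prod_const, ← Real.rpow_sum_of_pos ht,
      Finset.card_univ, Real.sqrt_eq_rpow, ← Real.rpow_natCast, ← Real.rpow_mul (by positivity),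
      Real.div_rpow pi_pos.le ht.le, Finset.sum_neg_distrib]
    have : t ^ (d - 1) = t ^ (c - 1) * (t ^ (1 / 2 * (Fintype.card ι : ℝ)))⁻¹ * t ^ (-∑ j, a j) := by
      rw [← Real.rpow_neg ht.le, ← Real.rpow_add ht, ← Real.rpow_add ht]
      congr 1; rw [hdd]; ring
    rw [this, one_mul, show 1 / 2 * (Fintype.card ι : ℝ) = (Fintype.card ι : ℝ) / 2 by ring]
    ring
  have hpos : ∀ᵐ p ∂μ, ∀ j, 0 < p.2 j := by
    rw [hμ]
    have h0 : ∀ᵐ v ∂((volume : Measure (κ → ℝ)).restrict (Set.univ.pi fun _ => Set.Ioi (0:ℝ))),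
        ∀ j, 0 < v j := by
      filter_upwards [ae_restrict_mem (MeasurableSet.univ_pi fun _ => measurableSet_Ioi)] with v hv j
      exact hv j (Set.mem_univ _)
    exact Measure.quasiMeasurePreserving_snd.ae h0
  have hnn : ∀ t, 0 < t → ∀ᵐ p ∂μ, 0 ≤ g t p := by
    intro t ht
    filter_upwards [hpos] with p hp
    have : ∀ j, 0 ≤ p.2 j ^ (a j - 1) := fun j => Real.rpow_nonneg (hp j).le _
    simp only [g]
    have h2 : 0 ≤ ∏ j, (p.2 j ^ (a j - 1) * exp (-((t * q j) * p.2 j))) :=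
      Finset.prod_nonneg fun j _ => mul_nonneg (this j) (exp_pos _).le
    positivity
  have hmeas : AEStronglyMeasurable (Function.uncurry g) ((volume.restrict (Set.Ioi 0)).prod μ) := by
    apply Measurable.aestronglyMeasurable
    simp only [g, Function.uncurry_def]
    fun_prop
  have hint : Integrable (Function.uncurry g) ((volume.restrict (Set.Ioi 0)).prod μ) := by
    rw [integrable_prod_iff hmeas]
    constructor
    · filter_upwards [ae_restrict_mem measurableSet_Ioi] with t ht
      exact hgint t ht
    · have : Integrable (fun t => (π ^ ((Fintype.card ι : ℝ) / 2) * (∏ j, (q j ^ (-a j) * Real.Gamma (a j)))) *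
        (t ^ (d - 1) * exp (-(1 * t)))) (volume.restrict (Set.Ioi 0)) :=
        (aux_integrable_rpow_exp hd one_pos).const_mul _
      refine this.congr ?_
      filter_upwards [ae_restrict_mem measurableSet_Ioi] with t ht
      rw [← hgval t ht]
      apply integral_congr_ae
      filter_upwards [hnn t ht] with p hp
      simp only [Function.uncurry]
      rw [Real.norm_of_nonneg hp]
  have hinner : ∀ᵐ p ∂μ, ∫ t in Set.Ioi 0, g t p = Real.Gamma c *
      ((∏ j, p.2 j ^ (a j - 1)) * (1 + ∑ i, p.1 i ^ 2 + ∑ j, q j * p.2 j) ^ (-c)) := by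
    filter_upwards [hpos] with p hp
    simp_rw [hgform]
    have hA : 0 < 1 + ∑ i, p.1 i ^ 2 + ∑ j, q j * p.2 j := by
      have : 0 ≤ ∑ j, q j * p.2 j := Finset.sum_nonneg fun j _ => (mul_pos (hq j) (hp j)).le
      positivity
    rw [integral_const_mul, Real.integral_rpow_mul_exp_neg_mul_Ioi hc hA, one_div,
      Real.inv_rpow hA.le, Real.rpow_neg hA.le]
    ring
  constructor
  · have h := hint.integral_prod_right
    have h2 := (h.congr hinner).const_mul (Real.Gamma c)⁻¹
    refine h2.congr (ae_of_all _ fun p => ?_)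
    simp only
    rw [inv_mul_cancel_left₀ hΓc.ne']
  · have h := integral_integral_swap hint
    rw [integral_congr_ae hinner, integral_const_mul] at h
    rw [setIntegral_congr_fun measurableSet_Ioi (fun t ht => hgval t ht), integral_const_mul,
      Real.integral_rpow_mul_exp_neg_mul_Ioi hd one_pos] at h
    rw [eq_div_iff hΓc.ne', mul_comm, ← h]
    simp

set_option linter.unusedSectionVars false

section pb
variable {ι κ : Type*} [Fintype ι] [Fintype κ]

/-- Euler weight. -/
noncomputable def pbW (a : κ → ℝ) (u : κ → ℝ) : ℝ :=
  ∏ j, (u j ^ (a j - 1) * (1 - u j) ^ (2 * a j - a j - 1))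

/-- The quadratic form in the combined kernel. -/
noncomputable def pbQ (e : κ → ι) (x : ι → ℝ) (s : ℝ) (p : (ι → ℝ) × (κ → ℝ)) : ℝ :=
  s ^ 2 + ∑ i, (p.1 i - x i) ^ 2 + ∑ j, 4 * p.1 (e j) * x (e j) * p.2 j

/-- The face. -/
def pbS (e : κ → ι) : Set (ι → ℝ) := {y | ∀ j, 0 < y (e j)}

noncomputable def pbD (x y : ι → ℝ) : ℝ := 1 + ∑ i, (y i - x i) ^ 2

noncomputable def pbV (e : κ → ι) (a : κ → ℝ) (ν : (ι → ℝ) → ℝ) (y : ι → ℝ) : ℝ :=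
  ν y * ∏ j, y (e j) ^ (2 * a j)

/-- The unit cube. -/
def pbU (κ : Type*) : Set (κ → ℝ) := Set.univ.pi fun _ : κ => Set.Icc (0 : ℝ) 1

noncomputable def pbμ (e : κ → ι) : Measure ((ι → ℝ) × (κ → ℝ)) :=
  (volume.restrict (pbS e)).prod (volume.restrict (pbU κ))

lemma pbS_open (e : κ → ι) : IsOpen (pbS e) := by
  have : pbS e = ⋂ j, {y | 0 < y (e j)} := by ext; simp [pbS]
  rw [this]
  exact isOpen_iInter_of_finite fun j => isOpen_lt continuous_const (continuous_apply _)

lemma pbU_meas : MeasurableSet (pbU κ) :=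
  MeasurableSet.univ_pi fun _ => measurableSet_Icc

lemma aux_beta_integrable {a : ℝ} (ha : 0 < a) :
    Integrable (fun u : ℝ => u ^ (a - 1) * (1 - u) ^ (2 * a - a - 1))
      (volume.restrict (Set.Icc 0 1)) := by
  have h := Complex.betaIntegral_convergent (u := (a : ℂ)) (v := (a : ℂ)) (by simpa) (by simpa)
  rw [intervalIntegrable_iff_integrableOn_Icc_of_le zero_le_one] at h
  refine h.norm.congr ?_
  have h0 : ∀ᵐ u : ℝ ∂(volume.restrict (Set.Icc (0:ℝ) 1)), u ≠ 0 ∧ u ≠ 1 := by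
    apply ae_restrict_of_ae
    have h1 : ∀ᵐ u : ℝ, u ≠ 0 := by simp [ae_iff, measure_singleton]
    have h2 : ∀ᵐ u : ℝ, u ≠ 1 := by simp [ae_iff, measure_singleton]
    filter_upwards [h1, h2] with u h1 h2 using ⟨h1, h2⟩
  filter_upwards [ae_restrict_mem measurableSet_Icc, h0] with u hu hu0
  have h1 : 0 < u := lt_of_le_of_ne hu.1 hu0.1.symm
  have h2 : 0 < 1 - u := by
    have := lt_of_le_of_ne hu.2 hu0.2
    linarith
  rw [norm_mul, Complex.norm_cpow_eq_rpow_re_of_pos h1]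
  have : (1 - (u:ℂ)) = ((1 - u : ℝ) : ℂ) := by push_cast; ring
  rw [this, Complex.norm_cpow_eq_rpow_re_of_pos h2]
  simp
  left
  congr 1; ring

lemma pbW_integrable (a : κ → ℝ) (ha : ∀ j, 0 < a j) :
    Integrable (pbW a) (volume.restrict (pbU κ)) := by
  have hrest : ((volume : Measure (κ → ℝ)).restrict (pbU κ))
      = Measure.pi fun _ => volume.restrict (Set.Icc 0 1) := Measure.restrict_pi_pi _ _
  rw [hrest]
  exact Integrable.fintype_prod
    (f := fun j (u : ℝ) => (u ^ (a j - 1) * (1 - u) ^ (2 * a j - a j - 1)))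
    (fun j => aux_beta_integrable (ha j))

lemma pbW_nonneg (a : κ → ℝ) {u : κ → ℝ} (hu : u ∈ pbU κ) : 0 ≤ pbW a u := by
  apply Finset.prod_nonneg
  intro j _
  have := hu j (Set.mem_univ _)
  exact mul_nonneg (Real.rpow_nonneg this.1 _) (Real.rpow_nonneg (by linarith [this.2]) _)

lemma pbD_one_le (x y : ι → ℝ) : 1 ≤ pbD x y := by
  have : 0 ≤ ∑ i, (y i - x i) ^ 2 := by positivity
  unfold pbD; linarith

lemma aux_norm_sq_le (z : ι → ℝ) : ‖z‖ ^ 2 ≤ ∑ i, z i ^ 2 := by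
  have h : ‖z‖ ≤ √(∑ i, z i ^ 2) := by
    rw [pi_norm_le_iff_of_nonneg (by positivity)]
    intro i
    apply Real.le_sqrt_of_sq_le
    rw [Real.norm_eq_abs, sq_abs]
    exact Finset.single_le_sum (f := fun i => z i ^ 2) (fun i _ => sq_nonneg _) (Finset.mem_univ i)
  calc ‖z‖ ^ 2 ≤ √(∑ i, z i ^ 2) ^ 2 := by gcongr
    _ = _ := Real.sq_sqrt (by positivity)

lemma pbV_aesm (e : κ → ι) (a : κ → ℝ) {ν : (ι → ℝ) → ℝ} (hν : ContinuousOn ν (pbS e)) :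
    AEStronglyMeasurable (pbV e a ν) (volume.restrict (pbS e)) := by
  unfold pbV
  apply AEStronglyMeasurable.mul
  · exact hν.aestronglyMeasurable (pbS_open e).measurableSet
  · apply Measurable.aestronglyMeasurable
    fun_prop

lemma pbD_le (x y : ι → ℝ) : pbD x y ≤ 2 * (1 + ∑ i, x i ^ 2) * (1 + ∑ i, y i ^ 2) := by
  have h : ∑ i, (y i - x i) ^ 2 ≤ ∑ i, (2 * y i ^ 2 + 2 * x i ^ 2) :=
    Finset.sum_le_sum fun i _ => by nlinarith [sq_nonneg (y i + x i)]
  rw [Finset.sum_add_distrib, ← Finset.mul_sum, ← Finset.mul_sum] at h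
  have h1 : 0 ≤ ∑ i, y i ^ 2 := by positivity
  have h2 : 0 ≤ ∑ i, x i ^ 2 := by positivity
  unfold pbD
  nlinarith [mul_nonneg h1 h2]

lemma le_pbD (x y : ι → ℝ) : 1 + ∑ i, y i ^ 2 ≤ 2 * (1 + ∑ i, x i ^ 2) * pbD x y := by
  have h : ∑ i, y i ^ 2 ≤ ∑ i, (2 * (y i - x i) ^ 2 + 2 * x i ^ 2) :=
    Finset.sum_le_sum fun i _ => by nlinarith [sq_nonneg (y i - 2 * x i)]
  rw [Finset.sum_add_distrib, ← Finset.mul_sum, ← Finset.mul_sum] at h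
  have h1 : 0 ≤ ∑ i, (y i - x i) ^ 2 := by positivity
  have h2 : 0 ≤ ∑ i, x i ^ 2 := by positivity
  unfold pbD
  nlinarith [mul_nonneg h1 h2]

lemma pbG_integrable (e : κ → ι) (x : ι → ℝ) (a : κ → ℝ) (ha : ∀ j, 0 < a j)
    (a0 b c ε : ℝ) (ha0 : 2 * a0 < 1) (hc : 0 < c) (hε : 0 < ε)
    (hb : b = ((Fintype.card ι : ℝ) - 1) / 2 + ∑ j, a j + a0)
    {ν : (ι → ℝ) → ℝ} (hν : ContinuousOn ν (pbS e))
    (hνbd : ∀ y ∈ pbS e, |ν y| ≤ c * (1 + ∑ i, y i ^ 2) ^ (-(1 - 2 * a0 + ε) / 2)) :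
    Integrable (fun p : (ι → ℝ) × (κ → ℝ) => (|pbV e a ν p.1| * pbD x p.1 ^ (-b)) * pbW a p.2)
      (pbμ e) := by
  unfold pbμ
  apply Integrable.mul_prod (f := fun y => |pbV e a ν y| * pbD x y ^ (-b)) (g := pbW a) _
    (pbW_integrable a ha)
  set M := 2 * (1 + ∑ i, x i ^ 2) with hM
  have hMpos : 0 < M := by positivity
  set h := (1 - 2 * a0 + ε) / 2 with hh
  have hhpos : 0 < h := by rw [hh]; linarith
  have hbase : Integrable (fun y : ι → ℝ => c * M ^ h * M ^ (∑ j, a j) *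
      (1 + ‖y - x‖ ^ 2) ^ (-((Fintype.card ι : ℝ) + ε) / 2)) (volume.restrict (pbS e)) := by
    apply Integrable.const_mul
    apply Integrable.restrict
    have := integrable_rpow_neg_one_add_norm_sq (E := ι → ℝ) (μ := volume)
      (r := (Fintype.card ι : ℝ) + ε) (by simp [hε])
    exact this.comp_sub_right x
  refine hbase.mono' ?_ ?_
  · apply AEStronglyMeasurable.mul
    · exact (pbV_aesm e a hν).norm
    · apply Measurable.aestronglyMeasurable
      unfold pbD
      fun_prop
  · filter_upwards [ae_restrict_mem (pbS_open e).measurableSet] with y hy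
    have hD1 := pbD_one_le x y
    have hD : 0 < pbD x y := by linarith
    have hV : |pbV e a ν y| ≤ (c * (M ^ h * pbD x y ^ (-h))) * (M ^ (∑ j, a j) * pbD x y ^ (∑ j, a j)) := by
      unfold pbV
      rw [abs_mul]
      have hprod : 0 ≤ ∏ j, y (e j) ^ (2 * a j) :=
        Finset.prod_nonneg fun j _ => Real.rpow_nonneg (hy j).le _
      rw [abs_of_nonneg hprod]
      have h1 : |ν y| ≤ c * (M ^ h * pbD x y ^ (-h)) := by
        refine (hνbd y hy).trans ?_
        rw [show -(1 - 2 * a0 + ε) / 2 = -h by rw [hh]; ring]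
        apply mul_le_mul_of_nonneg_left _ hc.le
        have h2 : pbD x y / M ≤ 1 + ∑ i, y i ^ 2 := by
          rw [div_le_iff₀ hMpos, mul_comm]; exact pbD_le x y
        refine (Real.rpow_le_rpow_of_nonpos (by positivity) h2 (by linarith)).trans ?_
        rw [Real.div_rpow hD.le hMpos.le, Real.rpow_neg hMpos.le, div_inv_eq_mul, mul_comm]
      have h2 : ∏ j, y (e j) ^ (2 * a j) ≤ M ^ (∑ j, a j) * pbD x y ^ (∑ j, a j) := by
        rw [← Real.mul_rpow hMpos.le hD.le, Real.rpow_sum_of_pos (by positivity)]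
        apply Finset.prod_le_prod
        · intro j _; exact Real.rpow_nonneg (hy j).le _
        · intro j _
          rw [Real.rpow_mul (hy j).le]
          apply Real.rpow_le_rpow (by have := hy j; positivity) _ (ha j).le
          refine le_trans ?_ (le_pbD x y)
          have := Finset.single_le_sum (f := fun i => y i ^ 2) (fun i _ => sq_nonneg _) (Finset.mem_univ (e j))
          rw [Real.rpow_two]; linarith
      have h3 : 0 ≤ c * (M ^ h * pbD x y ^ (-h)) := by positivity
      exact mul_le_mul h1 h2 hprod h3
    rw [Real.norm_of_nonneg (by positivity)]
    calc |pbV e a ν y| * pbD x y ^ (-b) ≤ ((c * (M ^ h * pbD x y ^ (-h))) * (M ^ (∑ j, a j) * pbD x y ^ (∑ j, a j))) * pbD x y ^ (-b) := by gcongr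
      _ = c * M ^ h * M ^ (∑ j, a j) * (pbD x y ^ (-h) * pbD x y ^ (∑ j, a j) * pbD x y ^ (-b)) := by ring
      _ = c * M ^ h * M ^ (∑ j, a j) * pbD x y ^ (-((Fintype.card ι : ℝ) + ε) / 2) := by
        rw [← Real.rpow_add hD, ← Real.rpow_add hD]
        congr 2
        rw [hb, hh]; ring
      _ ≤ _ := by
        apply mul_le_mul_of_nonneg_left _ (by positivity)
        apply Real.rpow_le_rpow_of_nonpos (by positivity)
        · unfold pbD
          have := aux_norm_sq_le (y - x)
          simpa using this
        · have : (0:ℝ) ≤ Fintype.card ι := by positivity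
          linarith

lemma pbQ_ge (e : κ → ι) (x : ι → ℝ) (hx : x ∈ pbS e) (s : ℝ) {p : (ι → ℝ) × (κ → ℝ)}
    (hp : p.1 ∈ pbS e) (hu : ∀ j, 0 ≤ p.2 j) : s ^ 2 + ∑ i, (p.1 i - x i) ^ 2 ≤ pbQ e x s p := by
  unfold pbQ
  have : 0 ≤ ∑ j, 4 * p.1 (e j) * x (e j) * p.2 j :=
    Finset.sum_nonneg fun j _ => by
      have := hp j; have := hx j; have := hu j; positivity
  linarith

lemma pbQ_ge_D (e : κ → ι) (x : ι → ℝ) (hx : x ∈ pbS e) {s r : ℝ} (hr : 0 < r) (hr1 : r ≤ 1)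
    (hrs : r ≤ s) {p : (ι → ℝ) × (κ → ℝ)}
    (hp : p.1 ∈ pbS e) (hu : ∀ j, 0 ≤ p.2 j) : r ^ 2 * pbD x p.1 ≤ pbQ e x s p := by
  refine le_trans ?_ (pbQ_ge e x hx s hp hu)
  unfold pbD
  have : 0 ≤ ∑ i, (p.1 i - x i) ^ 2 := by positivity
  nlinarith [mul_nonneg this (by nlinarith : 0 ≤ 1 - r ^ 2)]

lemma pb_ae (e : κ → ι) : ∀ᵐ p ∂(pbμ e), p.1 ∈ pbS e ∧ p.2 ∈ pbU κ := by
  unfold pbμ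
  have h1 : ∀ᵐ y ∂(volume.restrict (pbS e)), y ∈ pbS e := ae_restrict_mem (pbS_open e).measurableSet
  have h2 : ∀ᵐ u ∂(volume.restrict (pbU κ)), u ∈ pbU κ := ae_restrict_mem pbU_meas
  filter_upwards [Measure.quasiMeasurePreserving_fst.ae h1,
    Measure.quasiMeasurePreserving_snd.ae h2] with p h1 h2 using ⟨h1, h2⟩

lemma pbQ_rpow_le {Q D r b : ℝ} (hD : 1 ≤ D) (hr : 0 < r) (hb : 0 < b) (h : r * D ≤ Q) :
    Q ^ (-b) ≤ r ^ (-b) * D ^ (-b) ∧ Q ^ (-b - 1) ≤ r ^ (-b - 1) * D ^ (-b) := by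
  have hD0 : 0 < D := by linarith
  constructor
  · rw [← Real.mul_rpow hr.le hD0.le]
    exact Real.rpow_le_rpow_of_nonpos (by positivity) h (by linarith)
  · calc Q ^ (-b - 1) ≤ (r * D) ^ (-b - 1) :=
        Real.rpow_le_rpow_of_nonpos (by positivity) h (by linarith)
      _ = r ^ (-b - 1) * D ^ (-b - 1) := Real.mul_rpow hr.le hD0.le
      _ ≤ _ := by
        apply mul_le_mul_of_nonneg_left _ (by positivity)
        exact Real.rpow_le_rpow_of_exponent_le hD (by linarith)

lemma pb_aesm (e : κ → ι) (x : ι → ℝ) (a : κ → ℝ) {ν : (ι → ℝ) → ℝ} (hν : ContinuousOn ν (pbS e))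
    (s b : ℝ) :
    AEStronglyMeasurable (fun p => pbV e a ν p.1 * pbW a p.2 * pbQ e x s p ^ b) (pbμ e) := by
  unfold pbμ
  apply AEStronglyMeasurable.mul
  · apply AEStronglyMeasurable.mul
    · exact (pbV_aesm e a hν).comp_fst
    · apply Measurable.aestronglyMeasurable
      unfold pbW
      fun_prop
  · apply Measurable.aestronglyMeasurable
    unfold pbQ
    fun_prop

lemma pb_integrable (e : κ → ι) (x : ι → ℝ) (hx : x ∈ pbS e) (a : κ → ℝ) {b : ℝ} (hb : 0 < b)
    {ν : (ι → ℝ) → ℝ} (hν : ContinuousOn ν (pbS e))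
    (hG : Integrable (fun p : (ι → ℝ) × (κ → ℝ) =>
      (|pbV e a ν p.1| * pbD x p.1 ^ (-b)) * pbW a p.2) (pbμ e)) {s : ℝ} (hs : 0 < s) :
    Integrable (fun p => pbV e a ν p.1 * pbW a p.2 * pbQ e x s p ^ (-b)) (pbμ e) := by
  have hr : 0 < min s 1 := lt_min hs one_pos
  refine (hG.const_mul (((min s 1) ^ 2) ^ (-b))).mono' (pb_aesm e x a hν s (-b)) ?_
  filter_upwards [pb_ae e] with p hp
  have hW := pbW_nonneg a hp.2
  have hD := pbD_one_le x p.1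
  have hQ := pbQ_ge_D e x hx hr (min_le_right s 1) (min_le_left s 1) hp.1
    (fun j => (hp.2 j (Set.mem_univ _)).1)
  have hQ0 : 0 < pbQ e x s p := lt_of_lt_of_le (by positivity) hQ
  have h1 := (pbQ_rpow_le hD (by positivity) hb hQ).1
  rw [norm_mul, norm_mul, Real.norm_of_nonneg hW, Real.norm_of_nonneg (Real.rpow_nonneg hQ0.le _),
    Real.norm_eq_abs]
  calc |pbV e a ν p.1| * pbW a p.2 * pbQ e x s p ^ (-b)
      ≤ |pbV e a ν p.1| * pbW a p.2 * (((min s 1) ^ 2) ^ (-b) * pbD x p.1 ^ (-b)) := by gcongr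
    _ = _ := by ring

lemma pb_phi_eq (e : κ → ι) (x : ι → ℝ) (hx : x ∈ pbS e) (a : κ → ℝ) {b : ℝ} (hb : 0 < b)
    {ν : (ι → ℝ) → ℝ} (hν : ContinuousOn ν (pbS e))
    (hG : Integrable (fun p : (ι → ℝ) × (κ → ℝ) =>
      (|pbV e a ν p.1| * pbD x p.1 ^ (-b)) * pbW a p.2) (pbμ e)) {s : ℝ} (hs : 0 < s) :
    ∫ y in pbS e, ν y * (∏ j, y (e j) ^ (2 * a j)) * (s ^ 2 + ∑ i, (y i - x i) ^ 2) ^ (-b) *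
      lauricellaFA b a (fun j => 2 * a j)
        (fun j => -4 * y (e j) * x (e j) / (s ^ 2 + ∑ i, (y i - x i) ^ 2)) =
    (∏ j, Real.Gamma (2 * a j) / (Real.Gamma (a j) * Real.Gamma (2 * a j - a j))) *
      ∫ p, pbV e a ν p.1 * pbW a p.2 * pbQ e x s p ^ (-b) ∂(pbμ e) := by
  have hint := pb_integrable e x hx a hb hν hG hs
  unfold pbμ at hint ⊢
  rw [integral_prod _ hint, ← integral_const_mul]
  apply setIntegral_congr_fun (pbS_open e).measurableSet
  intro y hy
  simp only
  have hR : 0 < s ^ 2 + ∑ i, (y i - x i) ^ 2 := by positivity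
  set R := s ^ 2 + ∑ i, (y i - x i) ^ 2 with hRdef
  unfold lauricellaFA
  have : ∀ u ∈ pbU κ, pbV e a ν y * pbW a u * pbQ e x s (y, u) ^ (-b) =
      (pbV e a ν y * R ^ (-b)) * ((∏ j, u j ^ (a j - 1) * (1 - u j) ^ (2 * a j - a j - 1)) *
        (1 - ∑ j, -4 * y (e j) * x (e j) / R * u j) ^ (-b)) := by
    intro u hu
    have hnn : 0 ≤ 1 - ∑ j, -4 * y (e j) * x (e j) / R * u j := by
      rw [sub_nonneg]
      refine le_trans (Finset.sum_nonpos fun j _ => ?_) zero_le_one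
      have h1 := hy j; have h2 := hx j; have h3 := (hu j (Set.mem_univ _)).1
      have : -4 * y (e j) * x (e j) / R * u j = -(4 * y (e j) * x (e j) / R * u j) := by ring
      rw [this, neg_nonpos]; positivity
    have hQ : pbQ e x s (y, u) = R * (1 - ∑ j, -4 * y (e j) * x (e j) / R * u j) := by
      unfold pbQ
      simp only
      rw [← hRdef, mul_sub, mul_one, Finset.mul_sum, sub_eq_add_neg, ← Finset.sum_neg_distrib]
      congr 1
      refine Finset.sum_congr rfl fun j _ => ?_
      field_simp
    rw [hQ, Real.mul_rpow hR.le hnn]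
    unfold pbW
    ring
  rw [setIntegral_congr_fun pbU_meas this, integral_const_mul]
  unfold pbV pbU
  ring

lemma pb_hasDeriv (e : κ → ι) (x : ι → ℝ) (hx : x ∈ pbS e) (a : κ → ℝ) {b : ℝ} (hb : 0 < b)
    {ν : (ι → ℝ) → ℝ} (hν : ContinuousOn ν (pbS e))
    (hG : Integrable (fun p : (ι → ℝ) × (κ → ℝ) =>
      (|pbV e a ν p.1| * pbD x p.1 ^ (-b)) * pbW a p.2) (pbμ e)) {t : ℝ} (ht : 0 < t) :
    HasDerivAt (fun s => ∫ p, pbV e a ν p.1 * pbW a p.2 * pbQ e x s p ^ (-b) ∂(pbμ e))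
      ((-2 * b * t) * ∫ p, pbV e a ν p.1 * pbW a p.2 * pbQ e x t p ^ (-b - 1) ∂(pbμ e)) t := by
  rw [← integral_const_mul]
  set r := min (t / 2) 1 with hrdef
  have hr : 0 < r := lt_min (by linarith) one_pos
  refine (hasDerivAt_integral_of_dominated_loc_of_deriv_le (s := Set.Ioo (t / 2) (2 * t))
    (F' := fun s p => (-2 * b * s) * (pbV e a ν p.1 * pbW a p.2 * pbQ e x s p ^ (-b - 1)))
    (bound := fun p => (2 * b * (2 * t) * (r ^ 2) ^ (-b - 1)) *
      ((|pbV e a ν p.1| * pbD x p.1 ^ (-b)) * pbW a p.2))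
    (Ioo_mem_nhds (by linarith) (by linarith)) (Eventually.of_forall fun s => pb_aesm e x a hν s (-b))
    (pb_integrable e x hx a hb hν hG ht) ((pb_aesm e x a hν t (-b - 1)).const_mul _) ?_
    (hG.const_mul _) ?_).2
  · filter_upwards [pb_ae e] with p hp s hs
    have hs0 : 0 < s := by linarith [hs.1]
    have hW := pbW_nonneg a hp.2
    have hD := pbD_one_le x p.1
    have hQ := pbQ_ge_D e x hx hr (min_le_right _ _) ((min_le_left _ _).trans hs.1.le) hp.1
      (fun j => (hp.2 j (Set.mem_univ _)).1)
    have hQ0 : 0 < pbQ e x s p := lt_of_lt_of_le (by positivity) hQ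
    have h1 := (pbQ_rpow_le hD (by positivity) hb hQ).2
    rw [norm_mul (-2 * b * s), norm_mul (pbV e a ν p.1 * pbW a p.2), norm_mul (pbV e a ν p.1),
      Real.norm_of_nonneg hW,
      Real.norm_of_nonneg (Real.rpow_nonneg hQ0.le _), Real.norm_eq_abs, Real.norm_eq_abs,
      show -2 * b * s = -(2 * b * s) by ring, abs_neg, abs_of_pos (by positivity : 0 < 2 * b * s)]
    have hs2 := hs.2.le
    calc 2 * b * s * (|pbV e a ν p.1| * pbW a p.2 * pbQ e x s p ^ (-b - 1))
        ≤ 2 * b * (2 * t) * (|pbV e a ν p.1| * pbW a p.2 * ((r ^ 2) ^ (-b - 1) * pbD x p.1 ^ (-b))) := by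
          gcongr
      _ = _ := by ring
  · filter_upwards [pb_ae e] with p hp s hs
    have hs0 : 0 < s := by linarith [hs.1]
    have hQ := pbQ_ge e x hx s hp.1 (fun j => (hp.2 j (Set.mem_univ _)).1)
    have hQ0 : 0 < pbQ e x s p := lt_of_lt_of_le (by positivity) hQ
    have h1 : HasDerivAt (fun s => pbQ e x s p) (2 * s) s := by
      unfold pbQ
      have := ((hasDerivAt_pow 2 s).add_const (∑ i, (p.1 i - x i) ^ 2)).add_const
        (∑ j, 4 * p.1 (e j) * x (e j) * p.2 j)
      simpa using this
    have h2 := (h1.rpow_const (p := -b) (Or.inl hQ0.ne')).const_mul (pbV e a ν p.1 * pbW a p.2)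
    exact h2.congr_deriv (by ring)

lemma pb_scale (x : ι → ℝ) {s : ℝ} (hs : 0 < s) (f : (ι → ℝ) × (κ → ℝ) → ℝ) :
    ∫ p, f p ∂((volume : Measure (ι → ℝ)).prod (volume : Measure (κ → ℝ))) =
      s ^ Fintype.card ι * (s ^ 2) ^ Fintype.card κ *
        ∫ p, f (x + s • p.1, (s ^ 2) • p.2)
          ∂((volume : Measure (ι → ℝ)).prod (volume : Measure (κ → ℝ))) := by
  have hs2 : s ^ 2 ≠ 0 := by positivity
  let T : ((ι → ℝ) × (κ → ℝ)) ≃ₜ ((ι → ℝ) × (κ → ℝ)) :=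
    ((Homeomorph.smulOfNeZero s hs.ne').trans (Homeomorph.addLeft x)).prodCongr
      (Homeomorph.smulOfNeZero (s ^ 2) hs2)
  have hT : ∀ p, T p = (x + s • p.1, (s ^ 2) • p.2) := fun p => rfl
  have hmap : Measure.map T ((volume : Measure (ι → ℝ)).prod (volume : Measure (κ → ℝ))) =
      ENNReal.ofReal ((s ^ Fintype.card ι * (s ^ 2) ^ Fintype.card κ)⁻¹) •
        ((volume : Measure (ι → ℝ)).prod (volume : Measure (κ → ℝ))) := by
    have h := Measure.map_prod_map (f := fun z : ι → ℝ => x + s • z)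
      (g := fun v : κ → ℝ => (s ^ 2) • v) volume volume (by fun_prop) (by fun_prop)
    have hT' : (T : _ → _) = Prod.map (fun z : ι → ℝ => x + s • z)
      (fun v : κ → ℝ => (s ^ 2) • v) := rfl
    rw [hT', ← h, Measure.map_addHaar_smul _ hs2]
    have h1 : Measure.map (fun z : ι → ℝ => x + s • z) volume =
        ENNReal.ofReal |(s ^ Module.finrank ℝ (ι → ℝ))⁻¹| • volume := by
      have : (fun z : ι → ℝ => x + s • z) = (fun z => x + z) ∘ (fun z => s • z) := rfl
      rw [this, ← Measure.map_map (by fun_prop) (by fun_prop), Measure.map_addHaar_smul _ hs.ne',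
        Measure.map_smul, map_add_left_eq_self]
    rw [h1, Measure.prod_smul_left, Measure.prod_smul_right, smul_smul,
      ← ENNReal.ofReal_mul (by positivity)]
    congr 2
    rw [abs_of_pos (by positivity), abs_of_pos (by positivity)]
    simp [mul_comm]
  have h := T.measurableEmbedding.integral_map
    (μ := (volume : Measure (ι → ℝ)).prod (volume : Measure (κ → ℝ))) f
  rw [hmap, integral_smul_measure] at h
  simp only [hT] at h
  rw [← h, ENNReal.toReal_ofReal (by positivity), smul_eq_mul, mul_inv_cancel_left₀ (by positivity)]

lemma pb_ae_pos (e : κ → ι) : ∀ᵐ p ∂(pbμ e), ∀ j, 0 < p.2 j := by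
  have h2 : ∀ᵐ u ∂((volume : Measure (κ → ℝ)).restrict (pbU κ)), ∀ j, 0 < u j := by
    have hrest : ((volume : Measure (κ → ℝ)).restrict (pbU κ))
      = Measure.pi fun _ => volume.restrict (Set.Icc 0 1) := Measure.restrict_pi_pi _ _
    rw [hrest, ae_all_iff]
    intro j
    have h0 : ∀ᵐ u : ℝ ∂(volume.restrict (Set.Icc (0:ℝ) 1)), 0 < u := by
      have h1 : ∀ᵐ u : ℝ ∂(volume.restrict (Set.Icc (0:ℝ) 1)), u ≠ 0 :=
        ae_restrict_of_ae (by simp [ae_iff, measure_singleton])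
      filter_upwards [ae_restrict_mem measurableSet_Icc, h1] with u hu hu0
      exact lt_of_le_of_ne hu.1 hu0.symm
    exact (Measure.tendsto_eval_ae_ae (μ := fun _ : κ => volume.restrict (Set.Icc (0:ℝ) 1))
      (i := j)).eventually h0
  exact Measure.quasiMeasurePreserving_snd.ae h2

lemma pb_integrable' (e : κ → ι) (x : ι → ℝ) (hx : x ∈ pbS e) (a : κ → ℝ) {b : ℝ} (hb : 0 < b)
    {ν : (ι → ℝ) → ℝ} (hν : ContinuousOn ν (pbS e))
    (hG : Integrable (fun p : (ι → ℝ) × (κ → ℝ) =>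
      (|pbV e a ν p.1| * pbD x p.1 ^ (-b)) * pbW a p.2) (pbμ e)) {s : ℝ} (hs : 0 < s) :
    Integrable (fun p => pbV e a ν p.1 * pbW a p.2 * pbQ e x s p ^ (-b - 1)) (pbμ e) := by
  have hr : 0 < min s 1 := lt_min hs one_pos
  refine (hG.const_mul (((min s 1) ^ 2) ^ (-b - 1))).mono' (pb_aesm e x a hν s (-b - 1)) ?_
  filter_upwards [pb_ae e] with p hp
  have hW := pbW_nonneg a hp.2
  have hD := pbD_one_le x p.1
  have hQ := pbQ_ge_D e x hx hr (min_le_right s 1) (min_le_left s 1) hp.1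
    (fun j => (hp.2 j (Set.mem_univ _)).1)
  have hQ0 : 0 < pbQ e x s p := lt_of_lt_of_le (by positivity) hQ
  have h1 := (pbQ_rpow_le hD (by positivity) hb hQ).2
  rw [norm_mul, norm_mul, Real.norm_of_nonneg hW, Real.norm_of_nonneg (Real.rpow_nonneg hQ0.le _),
    Real.norm_eq_abs]
  calc |pbV e a ν p.1| * pbW a p.2 * pbQ e x s p ^ (-b - 1)
      ≤ |pbV e a ν p.1| * pbW a p.2 * (((min s 1) ^ 2) ^ (-b - 1) * pbD x p.1 ^ (-b)) := by gcongr
    _ = _ := by ring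

/-- The region close to the singularity. -/
def pbN (κ : Type*) (x : ι → ℝ) (δ : ℝ) : Set ((ι → ℝ) × (κ → ℝ)) :=
  Metric.ball x δ ×ˢ Set.univ.pi fun _ : κ => Set.Ioo (0 : ℝ) (1 / 2)

lemma pbN_open (x : ι → ℝ) (δ : ℝ) : IsOpen (pbN κ x δ) :=
  Metric.isOpen_ball.prod (isOpen_set_pi Set.finite_univ fun _ _ => isOpen_Ioo)

lemma pb_far (e : κ → ι) (x : ι → ℝ) (hx : x ∈ pbS e) (a : κ → ℝ) {a0 b : ℝ} (hb : 0 < b)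
    (ha0 : 0 < a0) {ν : (ι → ℝ) → ℝ}
    (hG : Integrable (fun p : (ι → ℝ) × (κ → ℝ) =>
      (|pbV e a ν p.1| * pbD x p.1 ^ (-b)) * pbW a p.2) (pbμ e))
    {δ : ℝ} (hδ : 0 < δ) (hδ1 : δ ≤ 1) (hδx : ∀ j, 2 * δ ≤ x (e j)) :
    Tendsto (fun s : ℝ => s ^ (1 + 2 * a0) *
      ∫ p in (pbN κ x δ)ᶜ, pbV e a ν p.1 * pbW a p.2 * pbQ e x s p ^ (-b - 1) ∂(pbμ e))
      (𝓝[>] 0) (𝓝 0) := by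
  set G : (ι → ℝ) × (κ → ℝ) → ℝ := fun p => (|pbV e a ν p.1| * pbD x p.1 ^ (-b)) * pbW a p.2
  have hbound : ∀ s : ℝ, 0 < s → ‖∫ p in (pbN κ x δ)ᶜ,
      pbV e a ν p.1 * pbW a p.2 * pbQ e x s p ^ (-b - 1) ∂(pbμ e)‖ ≤
      ∫ p in (pbN κ x δ)ᶜ, (δ ^ 2 / 2) ^ (-b - 1) * G p ∂(pbμ e) := by
    intro s hs
    refine norm_integral_le_of_norm_le (hG.const_mul _).restrict ?_
    filter_upwards [ae_restrict_of_ae (pb_ae e), ae_restrict_of_ae (pb_ae_pos e),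
      ae_restrict_mem (pbN_open x δ).measurableSet.compl] with p hp hpos hpN
    have hW := pbW_nonneg a hp.2
    have hD := pbD_one_le x p.1
    have hQ : δ ^ 2 / 2 * pbD x p.1 ≤ pbQ e x s p := by
      have hz : 0 ≤ ∑ i, (p.1 i - x i) ^ 2 := by positivity
      by_cases hball : p.1 ∈ Metric.ball x δ
      · have : ∃ j, 1 / 2 ≤ p.2 j := by
          by_contra hcon
          push Not at hcon
          exact hpN ⟨hball, fun j _ => ⟨hpos j, hcon j⟩⟩
        obtain ⟨j, hj⟩ := this
        have hyj : δ ≤ p.1 (e j) := by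
          have h1 : |p.1 (e j) - x (e j)| < δ := by
            have := dist_le_pi_dist p.1 x (e j)
            rw [Real.dist_eq] at this
            exact this.trans_lt hball
          have := (abs_lt.1 h1).1
          linarith [hδx j]
        have hterm : 4 * p.1 (e j) * x (e j) * p.2 j ≤ ∑ j, 4 * p.1 (e j) * x (e j) * p.2 j :=
          Finset.single_le_sum (f := fun j => 4 * p.1 (e j) * x (e j) * p.2 j)
            (fun j _ => by
              have h1 := hp.1 j; have h2 := hx j; have h3 := hpos j
              positivity) (Finset.mem_univ j)
        have h4 : δ ^ 2 ≤ 4 * p.1 (e j) * x (e j) * p.2 j := by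
          have h5 : δ * δ ≤ p.1 (e j) * x (e j) :=
            mul_le_mul hyj (by linarith [hδx j]) hδ.le (hp.1 j).le
          nlinarith [mul_nonneg (mul_nonneg hδ.le hδ.le) (by linarith : 0 ≤ p.2 j - 1 / 2)]
        unfold pbQ pbD
        nlinarith [sq_nonneg s, mul_nonneg hz (by nlinarith : 0 ≤ 1 - δ ^ 2 / 2), sq_nonneg δ]
      · have h1 : δ ^ 2 ≤ ∑ i, (p.1 i - x i) ^ 2 := by
          have h2 := aux_norm_sq_le (p.1 - x)
          have h3 : δ ≤ ‖p.1 - x‖ := by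
            rw [← dist_eq_norm]; exact not_lt.1 hball
          simp only [Pi.sub_apply] at h2
          nlinarith
        refine le_trans ?_ (pbQ_ge e x hx s hp.1 fun j => (hpos j).le)
        unfold pbD
        nlinarith [sq_nonneg s, mul_nonneg hz (by nlinarith : 0 ≤ 1 - δ ^ 2)]
    have hQ0 : 0 < pbQ e x s p := lt_of_lt_of_le (by positivity) hQ
    have h1 := (pbQ_rpow_le hD (by positivity) hb hQ).2
    rw [norm_mul, norm_mul, Real.norm_of_nonneg hW,
      Real.norm_of_nonneg (Real.rpow_nonneg hQ0.le _), Real.norm_eq_abs]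
    calc |pbV e a ν p.1| * pbW a p.2 * pbQ e x s p ^ (-b - 1)
        ≤ |pbV e a ν p.1| * pbW a p.2 * ((δ ^ 2 / 2) ^ (-b - 1) * pbD x p.1 ^ (-b)) := by gcongr
      _ = _ := by simp only [G]; ring
  have hs0 : Tendsto (fun s : ℝ => s ^ (1 + 2 * a0)) (𝓝[>] 0) (𝓝 0) := by
    have h1 : ContinuousAt (fun s : ℝ => s ^ (1 + 2 * a0)) 0 :=
      Real.continuousAt_rpow_const _ _ (Or.inr (by linarith))
    have h2 := h1.tendsto
    rw [Real.zero_rpow (by linarith)] at h2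
    exact h2.mono_left nhdsWithin_le_nhds
  refine squeeze_zero_norm' (a := fun s : ℝ => s ^ (1 + 2 * a0) *
    ∫ p in (pbN κ x δ)ᶜ, (δ ^ 2 / 2) ^ (-b - 1) * G p ∂(pbμ e)) ?_ (by simpa using hs0.mul_const _)
  filter_upwards [self_mem_nhdsWithin] with s hs
  have hs' : 0 < s := hs
  rw [norm_mul, Real.norm_of_nonneg (by positivity)]
  exact mul_le_mul_of_nonneg_left (hbound s hs) (by positivity)

/-- Rescaled kernel. -/
noncomputable def pbΦ (e : κ → ι) (x : ι → ℝ) (a : κ → ℝ) (ν : (ι → ℝ) → ℝ) (b s : ℝ)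
    (p : (ι → ℝ) × (κ → ℝ)) : ℝ :=
  pbV e a ν (x + s • p.1) * (∏ j, (1 - s ^ 2 * p.2 j) ^ (2 * a j - a j - 1)) *
    ((∏ j, p.2 j ^ (a j - 1)) * (1 + ∑ i, p.1 i ^ 2 +
      ∑ j, 4 * (x (e j) + s * p.1 (e j)) * x (e j) * p.2 j) ^ (-b - 1))

lemma pb_scaled_eq (e : κ → ι) (x : ι → ℝ) (hx : x ∈ pbS e) (a : κ → ℝ) {a0 b : ℝ}
    (hb : b = ((Fintype.card ι : ℝ) - 1) / 2 + ∑ j, a j + a0)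
    (ν : (ι → ℝ) → ℝ) {s : ℝ} (hs : 0 < s) (p : (ι → ℝ) × (κ → ℝ)) (hv : ∀ j, 0 < p.2 j)
    (hS : x + s • p.1 ∈ pbS e) :
    s ^ (1 + 2 * a0) * (s ^ Fintype.card ι * (s ^ 2) ^ Fintype.card κ) *
      (pbV e a ν (x + s • p.1) * pbW a ((s ^ 2) • p.2) *
        pbQ e x s (x + s • p.1, (s ^ 2) • p.2) ^ (-b - 1)) = pbΦ e x a ν b s p := by
  have hs2 : 0 < s ^ 2 := by positivity
  set A := 1 + ∑ i, p.1 i ^ 2 +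
      ∑ j, 4 * (x (e j) + s * p.1 (e j)) * x (e j) * p.2 j with hA
  have hA0 : 0 < A := by
    have : 0 ≤ ∑ j, 4 * (x (e j) + s * p.1 (e j)) * x (e j) * p.2 j :=
      Finset.sum_nonneg fun j _ => by
        have h1 := hx j; have h2 := hv j
        have h3 : 0 < x (e j) + s * p.1 (e j) := hS j
        positivity
    positivity
  have hQ : pbQ e x s (x + s • p.1, (s ^ 2) • p.2) = s ^ 2 * A := by
    unfold pbQ
    simp only [Pi.add_apply, Pi.smul_apply, smul_eq_mul, add_sub_cancel_left, hA, mul_add,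
      Finset.mul_sum, mul_one]
    congr 1
    · congr 1
      exact Finset.sum_congr rfl fun i _ => by ring
    · exact Finset.sum_congr rfl fun i _ => by ring
  have hW : pbW a ((s ^ 2) • p.2) = (s ^ 2) ^ (∑ j, (a j - 1)) * (∏ j, p.2 j ^ (a j - 1)) *
      ∏ j, (1 - s ^ 2 * p.2 j) ^ (2 * a j - a j - 1) := by
    unfold pbW
    rw [Real.rpow_sum_of_pos hs2, ← Finset.prod_mul_distrib, ← Finset.prod_mul_distrib]
    refine Finset.prod_congr rfl fun j _ => ?_
    simp only [Pi.smul_apply, smul_eq_mul]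
    rw [Real.mul_rpow hs2.le (hv j).le]
  have hpow : s ^ (1 + 2 * a0) * (s ^ Fintype.card ι * (s ^ 2) ^ Fintype.card κ) *
      ((s ^ 2) ^ (∑ j, (a j - 1)) * (s ^ 2) ^ (-b - 1)) = 1 := by
    rw [← Real.rpow_natCast, ← Real.rpow_natCast (s ^ 2), ← Real.rpow_two,
      ← Real.rpow_mul hs.le, ← Real.rpow_mul hs.le, ← Real.rpow_mul hs.le, ← Real.rpow_add hs,
      ← Real.rpow_add hs, ← Real.rpow_add hs, ← Real.rpow_add hs]
    rw [Finset.sum_sub_distrib, Finset.sum_const, Finset.card_univ, nsmul_eq_mul, hb]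
    convert Real.rpow_zero s using 2
    ring
  rw [hQ, hW, Real.mul_rpow hs2.le hA0.le]
  unfold pbΦ
  rw [← hA]
  calc _ = (s ^ (1 + 2 * a0) * (s ^ Fintype.card ι * (s ^ 2) ^ Fintype.card κ) *
      ((s ^ 2) ^ (∑ j, (a j - 1)) * (s ^ 2) ^ (-b - 1))) * (pbV e a ν (x + s • p.1) *
        (∏ j, (1 - s ^ 2 * p.2 j) ^ (2 * a j - a j - 1)) *
        ((∏ j, p.2 j ^ (a j - 1)) * A ^ (-b - 1))) := by ring
    _ = _ := by rw [hpow, one_mul]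

lemma pbV_cont (e : κ → ι) (a : κ → ℝ) {ν : (ι → ℝ) → ℝ}
    (hν : ContinuousOn ν (pbS e)) : ContinuousOn (pbV e a ν) (pbS e) := by
  unfold pbV
  refine hν.mul (continuousOn_finsetProd _ fun j _ => ?_)
  exact (continuous_apply (e j)).continuousOn.rpow_const fun y hy => Or.inl (hy j).ne'

lemma pb_near (e : κ → ι) (x : ι → ℝ) (hx : x ∈ pbS e) (a : κ → ℝ) (ha : ∀ j, 0 < a j)
    (ha1 : ∀ j, 2 * a j < 1) {a0 b : ℝ} (ha0 : 0 < a0)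
    (hb : b = ((Fintype.card ι : ℝ) - 1) / 2 + ∑ j, a j + a0) (hb0 : 0 < b)
    {ν : (ι → ℝ) → ℝ} (hν : ContinuousOn ν (pbS e)) {δ : ℝ} (hδ : 0 < δ)
    (hδx : ∀ j, 2 * δ ≤ x (e j)) (hδV : ∀ y ∈ Metric.ball x δ, |pbV e a ν y| ≤ |pbV e a ν x| + 1) :
    Tendsto (fun s : ℝ => s ^ (1 + 2 * a0) *
      ∫ p in pbN κ x δ, pbV e a ν p.1 * pbW a p.2 * pbQ e x s p ^ (-b - 1) ∂(pbμ e))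
      (𝓝[>] 0) (𝓝 (pbV e a ν x * (π ^ ((Fintype.card ι : ℝ) / 2) *
        (∏ j, ((4 * x (e j) ^ 2) ^ (-a j) * Real.Gamma (a j))) *
        Real.Gamma (1 / 2 + a0) / Real.Gamma (b + 1)))) := by
  have hballS : Metric.ball x δ ⊆ pbS e := by
    intro y hy j
    have h1 : |y (e j) - x (e j)| < δ := by
      have := dist_le_pi_dist y x (e j)
      rw [Real.dist_eq] at this
      exact this.trans_lt hy
    have := (abs_lt.1 h1).1
    linarith [hδx j]
  have hNSU : pbN κ x δ ⊆ pbS e ×ˢ pbU κ := by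
    intro p hp
    refine ⟨hballS hp.1, fun j hj => ?_⟩
    have := hp.2 j hj
    exact ⟨this.1.le, by linarith [this.2]⟩
  have hNmeas := (pbN_open (κ := κ) x δ).measurableSet
  set vv := (volume : Measure (ι → ℝ)).prod (volume : Measure (κ → ℝ)) with hvv
  set P : Set (κ → ℝ) := Set.univ.pi fun _ => Set.Ioi 0 with hP
  have hPm : MeasurableSet P := MeasurableSet.univ_pi fun _ => measurableSet_Ioi
  set muP := ((volume : Measure (ι → ℝ)).prod ((volume : Measure (κ → ℝ)).restrict P)) with hmuP
  have hmuP_eq : muP = vv.restrict (Set.univ ×ˢ P) := by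
    rw [hmuP, hvv, ← Measure.prod_restrict, Measure.restrict_univ]
  have hposae : ∀ᵐ p ∂muP, ∀ j, 0 < p.2 j := by
    rw [hmuP_eq]
    filter_upwards [ae_restrict_mem (MeasurableSet.univ.prod hPm)] with p hp j
    exact hp.2 j (Set.mem_univ _)
  set H : ℝ → (ι → ℝ) × (κ → ℝ) → ℝ := fun s =>
    {p : (ι → ℝ) × (κ → ℝ) | (x + s • p.1, (s ^ 2) • p.2) ∈ pbN κ x δ}.indicator (pbΦ e x a ν b s)
  -- Step 1: rewriting
  have hrew : ∀ s : ℝ, 0 < s → s ^ (1 + 2 * a0) *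
      ∫ p in pbN κ x δ, pbV e a ν p.1 * pbW a p.2 * pbQ e x s p ^ (-b - 1) ∂(pbμ e) =
      ∫ p, H s p ∂muP := by
    intro s hs
    have hs2 : 0 < s ^ 2 := by positivity
    have h1 : (pbμ e).restrict (pbN κ x δ) = vv.restrict (pbN κ x δ) := by
      unfold pbμ
      rw [Measure.prod_restrict, Measure.restrict_restrict hNmeas,
        Set.inter_eq_left.2 hNSU]
    rw [h1, ← integral_indicator hNmeas, pb_scale x hs, ← mul_assoc, ← integral_const_mul, hmuP_eq]
    rw [setIntegral_eq_integral_of_forall_compl_eq_zero]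
    · apply integral_congr_ae
      refine ae_of_all _ fun p => ?_
      simp only [H]
      by_cases hp : (x + s • p.1, (s ^ 2) • p.2) ∈ pbN κ x δ
      · rw [Set.indicator_of_mem hp, Set.indicator_of_mem (by exact hp)]
        refine pb_scaled_eq e x hx a hb ν hs p (fun j => ?_) (hballS hp.1)
        have := (hp.2 j (Set.mem_univ _)).1
        simp only [Pi.smul_apply, smul_eq_mul] at this
        exact (mul_pos_iff_of_pos_left hs2).1 this
      · rw [Set.indicator_of_notMem hp, Set.indicator_of_notMem (by exact hp), mul_zero]
    · intro p hp
      simp only [H]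
      apply Set.indicator_of_notMem
      intro hpN
      apply hp
      refine ⟨Set.mem_univ _, fun j _ => ?_⟩
      have := (hpN.2 j (Set.mem_univ _)).1
      simp only [Pi.smul_apply, smul_eq_mul] at this
      exact (mul_pos_iff_of_pos_left hs2).1 this
  have hdd : b + 1 - (Fintype.card ι : ℝ) / 2 - ∑ j, a j = 1 / 2 + a0 := by rw [hb]; ring
  have hL := aux_gauss_gamma (ι := ι) a (fun j => 4 * x (e j) ^ 2) (b + 1) ha
    (fun j => by have := hx j; positivity) (by rw [hdd]; linarith)
  have hB := (aux_gauss_gamma (ι := ι) a (fun j => 2 * x (e j) ^ 2) (b + 1) ha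
    (fun j => by have := hx j; positivity) (by rw [hdd]; linarith)).1
  have hlim : pbV e a ν x * (π ^ ((Fintype.card ι : ℝ) / 2) *
        (∏ j, ((4 * x (e j) ^ 2) ^ (-a j) * Real.Gamma (a j))) *
        Real.Gamma (1 / 2 + a0) / Real.Gamma (b + 1)) =
      ∫ p, pbΦ e x a ν b 0 p ∂muP := by
    rw [← hdd, ← hL.2, ← integral_const_mul]
    apply integral_congr_ae
    refine ae_of_all _ fun p => ?_
    unfold pbΦ
    simp only [zero_smul, add_zero, ne_eq, OfNat.ofNat_ne_zero, not_false_eq_true, zero_pow,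
      zero_mul, sub_zero, Real.one_rpow, Finset.prod_const_one, mul_one]
    rw [neg_add']
    have hsum : ∑ j, 4 * x (e j) * x (e j) * p.2 j = ∑ j, 4 * x (e j) ^ 2 * p.2 j :=
      Finset.sum_congr rfl fun j _ => by ring
    rw [hsum]
  rw [hlim]
  have hcongr : (fun s : ℝ => ∫ p, H s p ∂muP) =ᶠ[𝓝[>] 0] (fun s : ℝ => s ^ (1 + 2 * a0) *
      ∫ p in pbN κ x δ, pbV e a ν p.1 * pbW a p.2 * pbQ e x s p ^ (-b - 1) ∂(pbμ e)) := by
    filter_upwards [self_mem_nhdsWithin] with s hs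
    exact (hrew s hs).symm
  refine Tendsto.congr' hcongr ?_
  have hTopen : ∀ s : ℝ, IsOpen {p : (ι → ℝ) × (κ → ℝ) | (x + s • p.1, (s ^ 2) • p.2) ∈ pbN κ x δ} :=
    fun s => (pbN_open x δ).preimage (by fun_prop)
  set C1 : ℝ := ∏ j, (1 / 2 : ℝ) ^ (2 * a j - a j - 1)
  refine tendsto_integral_filter_of_dominated_convergence (fun p => ((|pbV e a ν x| + 1) * C1) *
    ((∏ j, p.2 j ^ (a j - 1)) * (1 + ∑ i, p.1 i ^ 2 + ∑ j, 2 * x (e j) ^ 2 * p.2 j) ^ (-(b + 1))))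
    ?_ ?_ (hB.const_mul _) ?_
  · -- measurability
    filter_upwards with s
    simp only [H]
    rw [aestronglyMeasurable_indicator_iff (hTopen s).measurableSet]
    unfold pbΦ
    apply AEStronglyMeasurable.mul
    · apply AEStronglyMeasurable.mul
      · have hc : ContinuousOn (fun p : (ι → ℝ) × (κ → ℝ) => pbV e a ν (x + s • p.1))
            {p : (ι → ℝ) × (κ → ℝ) | (x + s • p.1, (s ^ 2) • p.2) ∈ pbN κ x δ} :=
          (pbV_cont e a hν).comp (by fun_prop) (fun p hp => hballS hp.1)
        exact hc.aestronglyMeasurable (hTopen s).measurableSet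
      · apply Measurable.aestronglyMeasurable
        fun_prop
    · apply Measurable.aestronglyMeasurable
      fun_prop
  · -- bound
    filter_upwards [self_mem_nhdsWithin] with s hs
    have hs' : 0 < s := hs
    filter_upwards [hposae] with p hpos
    have hprod : 0 ≤ ∏ j, p.2 j ^ (a j - 1) :=
      Finset.prod_nonneg fun j _ => Real.rpow_nonneg (hpos j).le _
    have hC1 : 0 ≤ C1 := Finset.prod_nonneg fun j _ => Real.rpow_nonneg (by norm_num) _
    have hsum2 : 0 ≤ ∑ j, 2 * x (e j) ^ 2 * p.2 j :=
      Finset.sum_nonneg fun j _ => by have := hpos j; positivity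
    have hB0 : 0 < 1 + ∑ i, p.1 i ^ 2 + ∑ j, 2 * x (e j) ^ 2 * p.2 j := by positivity
    simp only [H]
    by_cases hp : (x + s • p.1, (s ^ 2) • p.2) ∈ pbN κ x δ
    · rw [Set.indicator_of_mem (by exact hp)]
      unfold pbΦ
      have h1 := hδV _ hp.1
      have hu : ∀ j, 1 / 2 ≤ 1 - s ^ 2 * p.2 j := by
        intro j
        have := (hp.2 j (Set.mem_univ _)).2
        simp only [Pi.smul_apply, smul_eq_mul] at this
        linarith
      have h2n : 0 ≤ ∏ j, (1 - s ^ 2 * p.2 j) ^ (2 * a j - a j - 1) :=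
        Finset.prod_nonneg fun j _ => Real.rpow_nonneg (by linarith [hu j]) _
      have h2 : ∏ j, (1 - s ^ 2 * p.2 j) ^ (2 * a j - a j - 1) ≤ C1 := by
        apply Finset.prod_le_prod
        · intro j _; exact Real.rpow_nonneg (by linarith [hu j]) _
        · intro j _
          exact Real.rpow_le_rpow_of_nonpos (by norm_num) (hu j) (by linarith [ha1 j, ha j])
      have h3 : 1 + ∑ i, p.1 i ^ 2 + ∑ j, 2 * x (e j) ^ 2 * p.2 j ≤ 1 + ∑ i, p.1 i ^ 2 +
          ∑ j, 4 * (x (e j) + s * p.1 (e j)) * x (e j) * p.2 j := by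
        refine add_le_add le_rfl (Finset.sum_le_sum fun j _ => ?_)
        apply mul_le_mul_of_nonneg_right _ (hpos j).le
        · have hxj : 0 < x (e j) := hx j
          have h4 : |s * p.1 (e j)| < δ := by
            have := dist_le_pi_dist (x + s • p.1) x (e j)
            rw [Real.dist_eq] at this
            simp only [Pi.add_apply, Pi.smul_apply, smul_eq_mul, add_sub_cancel_left] at this
            exact this.trans_lt hp.1
          have h5 := (abs_lt.1 h4).1
          have h6 : x (e j) / 2 ≤ x (e j) + s * p.1 (e j) := by linarith [hδx j]
          nlinarith
      have h4 : (1 + ∑ i, p.1 i ^ 2 + ∑ j, 4 * (x (e j) + s * p.1 (e j)) * x (e j) * p.2 j) ^ (-b - 1)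
          ≤ (1 + ∑ i, p.1 i ^ 2 + ∑ j, 2 * x (e j) ^ 2 * p.2 j) ^ (-(b + 1)) := by
        rw [neg_add']
        exact Real.rpow_le_rpow_of_nonpos hB0 h3 (by linarith)
      have h4n : 0 ≤ (1 + ∑ i, p.1 i ^ 2 +
          ∑ j, 4 * (x (e j) + s * p.1 (e j)) * x (e j) * p.2 j) ^ (-b - 1) :=
        Real.rpow_nonneg (hB0.le.trans h3) _
      rw [norm_mul, norm_mul, norm_mul, Real.norm_of_nonneg h2n, Real.norm_of_nonneg hprod,
        Real.norm_of_nonneg h4n, Real.norm_eq_abs]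
      gcongr
    · rw [Set.indicator_of_notMem (by exact hp), norm_zero]
      positivity
  · -- pointwise limit
    filter_upwards [hposae] with p hpos
    have hmem : ∀ᶠ s : ℝ in 𝓝[>] 0, (x + s • p.1, (s ^ 2) • p.2) ∈ pbN κ x δ := by
      have h1 : ∀ᶠ s : ℝ in 𝓝[>] 0, x + s • p.1 ∈ Metric.ball x δ := by
        have hc : ContinuousAt (fun s : ℝ => x + s • p.1) 0 := by fun_prop
        have := hc.tendsto.mono_left (nhdsWithin_le_nhds (s := Set.Ioi 0))
        simp only [zero_smul, add_zero] at this
        exact this (Metric.ball_mem_nhds x hδ)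
      have h2 : ∀ᶠ s : ℝ in 𝓝[>] 0, ∀ j, s ^ 2 * p.2 j < 1 / 2 := by
        rw [eventually_all]
        intro j
        have hc : ContinuousAt (fun s : ℝ => s ^ 2 * p.2 j) 0 := by fun_prop
        have := hc.tendsto.mono_left (nhdsWithin_le_nhds (s := Set.Ioi 0))
        simp only [ne_eq, OfNat.ofNat_ne_zero, not_false_eq_true, zero_pow, zero_mul] at this
        exact this (Iio_mem_nhds (by norm_num))
      filter_upwards [h1, h2, self_mem_nhdsWithin] with s h1 h2 hs
      have hs' : 0 < s := hs
      refine ⟨h1, fun j _ => ⟨?_, h2 j⟩⟩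
      have := hpos j
      simp only [Pi.smul_apply, smul_eq_mul]
      positivity
    have hcont : ContinuousAt (fun s : ℝ => pbΦ e x a ν b s p) 0 := by
      unfold pbΦ
      refine ContinuousAt.mul (ContinuousAt.mul ?_ ?_) (ContinuousAt.mul continuousAt_const ?_)
      · have h1 : ContinuousAt (pbV e a ν) (x + (0:ℝ) • p.1) := by
          rw [zero_smul, add_zero]
          exact (pbV_cont e a hν).continuousAt ((pbS_open e).mem_nhds hx)
        exact ContinuousAt.comp (f := fun s : ℝ => x + s • p.1) h1 (by fun_prop)
      · refine tendsto_finsetProd _ fun j _ => ?_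
        refine ContinuousAt.rpow_const (f := fun s : ℝ => 1 - s ^ 2 * p.2 j) (by fun_prop)
          (Or.inl (by norm_num))
      · refine ContinuousAt.rpow_const (f := fun s : ℝ => (1 + ∑ i, p.1 i ^ 2 +
          ∑ j, 4 * (x (e j) + s * p.1 (e j)) * x (e j) * p.2 j)) (by fun_prop) (Or.inl ?_)
        have : 0 ≤ ∑ j, 4 * (x (e j) + 0 * p.1 (e j)) * x (e j) * p.2 j :=
          Finset.sum_nonneg fun j _ => by
            have h1 := hx j; have h2 := hpos j
            rw [zero_mul, add_zero]
            positivity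
        positivity
    refine (hcont.tendsto.mono_left nhdsWithin_le_nhds).congr' ?_
    filter_upwards [hmem] with s hs
    simp only [H]
    rw [Set.indicator_of_mem (by exact hs)]

lemma pb_limit (e : κ → ι) (x : ι → ℝ) (hx : x ∈ pbS e) (a : κ → ℝ) (ha : ∀ j, 0 < a j)
    (ha1 : ∀ j, 2 * a j < 1) {a0 b : ℝ} (ha0 : 0 < a0)
    (hb : b = ((Fintype.card ι : ℝ) - 1) / 2 + ∑ j, a j + a0) (hb0 : 0 < b)
    {ν : (ι → ℝ) → ℝ} (hν : ContinuousOn ν (pbS e))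
    (hG : Integrable (fun p : (ι → ℝ) × (κ → ℝ) =>
      (|pbV e a ν p.1| * pbD x p.1 ^ (-b)) * pbW a p.2) (pbμ e)) :
    Tendsto (fun s : ℝ => s ^ (1 + 2 * a0) *
      ∫ p, pbV e a ν p.1 * pbW a p.2 * pbQ e x s p ^ (-b - 1) ∂(pbμ e))
      (𝓝[>] 0) (𝓝 (pbV e a ν x * (π ^ ((Fintype.card ι : ℝ) / 2) *
        (∏ j, ((4 * x (e j) ^ 2) ^ (-a j) * Real.Gamma (a j))) *
        Real.Gamma (1 / 2 + a0) / Real.Gamma (b + 1)))) := by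
  have hVc : ContinuousAt (pbV e a ν) x :=
    (pbV_cont e a hν).continuousAt ((pbS_open e).mem_nhds hx)
  have hev : ∀ᶠ y in 𝓝 x, |pbV e a ν y| ≤ |pbV e a ν x| + 1 := by
    have h1 := hVc.abs.tendsto
    filter_upwards [h1.eventually (Iio_mem_nhds (lt_add_one _))] with y hy
    exact le_of_lt hy
  obtain ⟨δ1, hδ1, hball⟩ := Metric.eventually_nhds_iff_ball.1 hev
  have hδ2 : ∃ δ2 : ℝ, 0 < δ2 ∧ ∀ j, 2 * δ2 ≤ x (e j) := by
    have : ∀ᶠ d : ℝ in 𝓝[>] 0, ∀ j, 2 * d ≤ x (e j) := by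
      rw [eventually_all]
      intro j
      have h0 : ∀ᶠ d : ℝ in 𝓝[>] 0, d < x (e j) / 2 :=
        nhdsWithin_le_nhds (Iio_mem_nhds (by have := hx j; linarith))
      filter_upwards [h0] with d hd
      linarith
    obtain ⟨d, hd1, hd2⟩ := (this.and self_mem_nhdsWithin).exists
    exact ⟨d, hd2, hd1⟩
  obtain ⟨δ2, hδ2, hδ2x⟩ := hδ2
  set δ := min (min δ1 δ2) 1
  have hδ : 0 < δ := lt_min (lt_min hδ1 hδ2) one_pos
  have hδx : ∀ j, 2 * δ ≤ x (e j) := fun j => by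
    have : δ ≤ δ2 := (min_le_left _ _).trans (min_le_right _ _)
    linarith [hδ2x j]
  have hδV : ∀ y ∈ Metric.ball x δ, |pbV e a ν y| ≤ |pbV e a ν x| + 1 := fun y hy =>
    hball y (Metric.ball_subset_ball ((min_le_left _ _).trans (min_le_left _ _)) hy)
  have hnear := pb_near e x hx a ha ha1 ha0 hb hb0 hν hδ hδx hδV
  have hfar := pb_far e x hx a hb0 ha0 hG hδ (min_le_right _ _) hδx
  have h := hnear.add hfar
  rw [add_zero] at h
  refine h.congr' ?_
  filter_upwards [self_mem_nhdsWithin] with s hs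
  rw [← mul_add, integral_add_compl (pbN_open x δ).measurableSet
    (pb_integrable' e x hx a hb0 hν hG hs)]

lemma pb_main (e : κ → ι) (x : ι → ℝ) (hx : x ∈ pbS e) (a : κ → ℝ) (ha : ∀ j, 0 < a j)
    (ha1 : ∀ j, 2 * a j < 1) {a0 b c ε : ℝ} (ha0 : 0 < a0) (ha01 : 2 * a0 < 1)
    (hb : b = ((Fintype.card ι : ℝ) - 1) / 2 + ∑ j, a j + a0) (hb0 : 0 < b)
    (hc : 0 < c) (hε : 0 < ε)
    {ν : (ι → ℝ) → ℝ} (hν : ContinuousOn ν (pbS e))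
    (hνbd : ∀ y ∈ pbS e, |ν y| ≤ c * (1 + ∑ i, y i ^ 2) ^ (-(1 - 2 * a0 + ε) / 2))
    (γ : ℝ)
    (hγ : γ = 2 ^ (2 * b - ((Fintype.card ι : ℝ) + 1)) * Real.Gamma b /
      π ^ (((Fintype.card ι : ℝ) + 1) / 2) *
      ((Real.Gamma a0 / Real.Gamma (2 * a0)) * ∏ j, Real.Gamma (a j) / Real.Gamma (2 * a j))) :
    Tendsto (fun t : ℝ => t ^ (2 * a0) * deriv (fun s : ℝ => -γ *
      ∫ y in pbS e, ν y * (∏ j, y (e j) ^ (2 * a j)) * (s ^ 2 + ∑ i, (y i - x i) ^ 2) ^ (-b) *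
        lauricellaFA b a (fun j => 2 * a j)
          (fun j => -4 * y (e j) * x (e j) / (s ^ 2 + ∑ i, (y i - x i) ^ 2))) t)
      (𝓝[>] 0) (𝓝 (ν x)) := by
  have hG := pbG_integrable e x a ha a0 b c ε ha01 hc hε hb hν hνbd
  set C := (∏ j, Real.Gamma (2 * a j) / (Real.Gamma (a j) * Real.Gamma (2 * a j - a j))) with hC
  have hderiv : ∀ t : ℝ, 0 < t → deriv (fun s : ℝ => -γ *
      ∫ y in pbS e, ν y * (∏ j, y (e j) ^ (2 * a j)) * (s ^ 2 + ∑ i, (y i - x i) ^ 2) ^ (-b) *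
        lauricellaFA b a (fun j => 2 * a j)
          (fun j => -4 * y (e j) * x (e j) / (s ^ 2 + ∑ i, (y i - x i) ^ 2))) t =
      -γ * (C * ((-2 * b * t) *
        ∫ p, pbV e a ν p.1 * pbW a p.2 * pbQ e x t p ^ (-b - 1) ∂(pbμ e))) := by
    intro t ht
    have h1 := ((pb_hasDeriv e x hx a hb0 hν hG ht).const_mul C).const_mul (-γ)
    apply HasDerivAt.deriv
    refine h1.congr_of_eventuallyEq ?_
    filter_upwards [Ioi_mem_nhds ht] with s hs
    rw [pb_phi_eq e x hx a hb0 hν hG hs]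
  have h := (pb_limit e x hx a ha ha1 ha0 hb hb0 hν hG).const_mul (2 * b * γ * C)
  have hconst : 2 * b * γ * C * (pbV e a ν x * (π ^ ((Fintype.card ι : ℝ) / 2) *
        (∏ j, ((4 * x (e j) ^ 2) ^ (-a j) * Real.Gamma (a j))) *
        Real.Gamma (1 / 2 + a0) / Real.Gamma (b + 1))) = ν x := by
    have hΓb := Real.Gamma_pos_of_pos hb0
    have hΓa := Real.Gamma_pos_of_pos ha0
    have hΓ2a := Real.Gamma_pos_of_pos (by linarith : 0 < 2 * a0)
    have hp : ∀ j, ((4 * x (e j) ^ 2) ^ (-a j) * Real.Gamma (a j)) * (x (e j) ^ (2 * a j)) *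
        (Real.Gamma (2 * a j) / (Real.Gamma (a j) * Real.Gamma (2 * a j - a j))) *
        (Real.Gamma (a j) / Real.Gamma (2 * a j)) = (2:ℝ) ^ (-2 * a j) := by
      intro j
      have h1 := Real.Gamma_pos_of_pos (ha j)
      have h2 := Real.Gamma_pos_of_pos (by linarith [ha j] : 0 < 2 * a j)
      have hxj : 0 < x (e j) := hx j
      rw [show 2 * a j - a j = a j by ring, show (4:ℝ) * x (e j) ^ 2 = (2 * x (e j)) ^ (2:ℝ) by
        rw [Real.rpow_two]; ring, ← Real.rpow_mul (by positivity), Real.mul_rpow (by norm_num) hxj.le]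
      have : x (e j) ^ (2 * -a j) * x (e j) ^ (2 * a j) = 1 := by
        rw [← Real.rpow_add hxj]; simp
      calc _ = (2:ℝ) ^ (2 * -a j) * (x (e j) ^ (2 * -a j) * x (e j) ^ (2 * a j)) := by
            field_simp
        _ = _ := by rw [this, mul_one]; congr 1; ring
    have hprod : (∏ j, ((4 * x (e j) ^ 2) ^ (-a j) * Real.Gamma (a j))) *
        (∏ j, x (e j) ^ (2 * a j)) * C * (∏ j, Real.Gamma (a j) / Real.Gamma (2 * a j)) =
        (2:ℝ) ^ (-2 * ∑ j, a j) := by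
      rw [hC, ← Finset.prod_mul_distrib, ← Finset.prod_mul_distrib, ← Finset.prod_mul_distrib,
        Finset.prod_congr rfl fun j _ => hp j, ← Real.rpow_sum_of_pos two_pos, Finset.mul_sum]
    have hdup := Real.Gamma_mul_Gamma_add_half a0
    have hpi : π ^ (((Fintype.card ι : ℝ) + 1) / 2) = π ^ ((Fintype.card ι : ℝ) / 2) * √π := by
      rw [Real.sqrt_eq_rpow, ← Real.rpow_add pi_pos]; congr 1; ring
    have h2 : (2:ℝ) * 2 ^ (2 * b - ((Fintype.card ι : ℝ) + 1)) * 2 ^ (-2 * ∑ j, a j) *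
        2 ^ (1 - 2 * a0) = 1 := by
      nth_rewrite 1 [← Real.rpow_one 2]
      rw [← Real.rpow_add two_pos, ← Real.rpow_add two_pos, ← Real.rpow_add two_pos, hb]
      convert Real.rpow_zero 2 using 2
      ring
    have hsq : 0 < √π := Real.sqrt_pos.2 pi_pos
    have hpp : 0 < π ^ ((Fintype.card ι : ℝ) / 2) := Real.rpow_pos_of_pos pi_pos _
    rw [Real.Gamma_add_one hb0.ne', hγ, hpi]
    unfold pbV
    rw [add_comm (1 / 2) a0]
    generalize (∏ j, ((4 * x (e j) ^ 2) ^ (-a j) * Real.Gamma (a j))) = P1 at *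
    generalize (∏ j, x (e j) ^ (2 * a j)) = P2 at *
    generalize (∏ j, Real.Gamma (a j) / Real.Gamma (2 * a j)) = P3 at *
    generalize π ^ ((Fintype.card ι : ℝ) / 2) = pp at *
    generalize (2:ℝ) ^ (2 * b - ((Fintype.card ι : ℝ) + 1)) = T1 at *
    generalize (2:ℝ) ^ (-2 * ∑ j, a j) = T2 at *
    generalize (2:ℝ) ^ (1 - 2 * a0) = T3 at *
    calc _ = ν x * (2 * T1) * (P1 * P2 * C * P3) *
          ((Real.Gamma a0 * Real.Gamma (a0 + 1 / 2)) / (Real.Gamma (2 * a0) * √π)) := by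
          field_simp
      _ = ν x * (2 * T1 * T2 * T3) := by
          rw [hprod, hdup]; field_simp
      _ = _ := by rw [h2, mul_one]
  rw [hconst] at h
  refine h.congr' ?_
  filter_upwards [self_mem_nhdsWithin] with t ht
  have ht' : 0 < t := ht
  rw [hderiv t ht, Real.rpow_add ht', Real.rpow_one]
  ring

end pb

/-- The single-layer potential `I_k` fulfils the weighted Neumann boundary condition on
its own face: `lim_{ξ_k→0⁺} ξ_k^{2α_k} ∂I_k/∂ξ_k = ν_k(ξ̃_k)`. -/
theorem potential_boundary_condition_same_index (m n : ℕ) (hm : 2 < m) (hn : 1 ≤ n)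
    (hnm : n ≤ m) (α : Fin m → ℝ)
    (hα : ∀ j : Fin m, (j : ℕ) < n → 0 < 2 * α j ∧ 2 * α j < 1)
    (β γ : ℝ)
    (hβ : β = ((m : ℝ) - 2) / 2 + ∑ j ∈ Finset.univ.filter fun j : Fin m => (j : ℕ) < n, α j)
    (hγ : γ = 2 ^ (2 * β - (m : ℝ)) * Real.Gamma β / Real.pi ^ ((m : ℝ) / 2) *
      ∏ j ∈ Finset.univ.filter fun j : Fin m => (j : ℕ) < n,
        Real.Gamma (α j) / Real.Gamma (2 * α j))
    (k : Fin m) (hk : (k : ℕ) < n)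
    (ν : ({i : Fin m // i ≠ k} → ℝ) → ℝ) (c ε : ℝ) (hc : 0 < c) (hε : 0 < ε)
    (hνcont : ContinuousOn ν {y | ∀ i : {i : Fin m // i ≠ k}, (i.1 : ℕ) < n → 0 < y i})
    (hνbd : ∀ y : {i : Fin m // i ≠ k} → ℝ, (∀ i, (i.1 : ℕ) < n → 0 < y i) →
      |ν y| ≤ c * (1 + ∑ i, y i ^ 2) ^ (-(1 - 2 * α k + ε) / 2))
    (I : (Fin m → ℝ) → ℝ)
    (hI : ∀ ξ : Fin m → ℝ, I ξ = -γ *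
      ∫ y in {y : {i : Fin m // i ≠ k} → ℝ | ∀ i, (i.1 : ℕ) < n → 0 < y i},
        ν y * (∏ j : {j : Fin m // (j : ℕ) < n ∧ j ≠ k}, y ⟨j.1, j.2.2⟩ ^ (2 * α j.1)) *
          (ξ k ^ 2 + ∑ i, (y i - ξ i.1) ^ 2) ^ (-β) *
          lauricellaFA β (fun j : {j : Fin m // (j : ℕ) < n ∧ j ≠ k} => α j.1)
            (fun j => 2 * α j.1)
            (fun j => -4 * y ⟨j.1, j.2.2⟩ * ξ j.1 / (ξ k ^ 2 + ∑ i, (y i - ξ i.1) ^ 2)))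
    (ξ : Fin m → ℝ) (hξ : ∀ i : Fin m, (i : ℕ) < n → i ≠ k → 0 < ξ i) :
    Filter.Tendsto
      (fun t : ℝ => t ^ (2 * α k) * deriv (fun s : ℝ => I (Function.update ξ k s)) t)
      (nhdsWithin 0 (Set.Ioi 0)) (nhds (ν fun i => ξ i.1)) := by
  classical
  have hkα := hα k hk
  let e : {j : Fin m // (j : ℕ) < n ∧ j ≠ k} → {i : Fin m // i ≠ k} := fun j => ⟨j.1, j.2.2⟩
  have hS : {y : {i : Fin m // i ≠ k} → ℝ | ∀ i, (i.1 : ℕ) < n → 0 < y i} = pbS e := by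
    ext y
    exact ⟨fun h j => h _ j.2.1, fun h i hi => h ⟨i.1, hi, i.2⟩⟩
  have hcard : (Fintype.card {i : Fin m // i ≠ k} : ℝ) = (m : ℝ) - 1 := by
    have h1 : Fintype.card {i : Fin m // i ≠ k} = m - 1 := by
      rw [Fintype.card_subtype_compl]; simp
    rw [h1, Nat.cast_sub (by omega), Nat.cast_one]
  have hfilter : (Finset.univ.filter fun j : Fin m => (j : ℕ) < n) =
      insert k (Finset.univ.filter fun j : Fin m => (j : ℕ) < n ∧ j ≠ k) := by
    ext j
    simp only [Finset.mem_filter, Finset.mem_univ, true_and, Finset.mem_insert]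
    by_cases hjk : j = k
    · subst hjk; simp [hk]
    · simp [hjk]
  have hnot : k ∉ (Finset.univ.filter fun j : Fin m => (j : ℕ) < n ∧ j ≠ k) := by simp
  have hsumα : ∑ j ∈ Finset.univ.filter (fun j : Fin m => (j : ℕ) < n), α j =
      α k + ∑ j : {j : Fin m // (j : ℕ) < n ∧ j ≠ k}, α j.1 := by
    rw [hfilter, Finset.sum_insert hnot]
    congr 1
    exact Finset.sum_subtype _ (by simp) _
  have hprodα : ∏ j ∈ Finset.univ.filter (fun j : Fin m => (j : ℕ) < n),
      Real.Gamma (α j) / Real.Gamma (2 * α j) = (Real.Gamma (α k) / Real.Gamma (2 * α k)) *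
      ∏ j : {j : Fin m // (j : ℕ) < n ∧ j ≠ k}, Real.Gamma (α j.1) / Real.Gamma (2 * α j.1) := by
    rw [hfilter, Finset.prod_insert hnot]
    congr 1
    exact Finset.prod_subtype _ (by simp) (fun j => Real.Gamma (α j) / Real.Gamma (2 * α j))
  have hm' : (2 : ℝ) < m := by exact_mod_cast hm
  have hapos : ∀ j : {j : Fin m // (j : ℕ) < n ∧ j ≠ k}, 0 < α j.1 := fun j => by
    linarith [(hα j.1 j.2.1).1]
  have hb : β = ((Fintype.card {i : Fin m // i ≠ k} : ℝ) - 1) / 2 +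
      ∑ j : {j : Fin m // (j : ℕ) < n ∧ j ≠ k}, α j.1 + α k := by
    rw [hβ, hsumα, hcard]; ring
  have hb0 : 0 < β := by
    rw [hb, hcard]
    have : 0 ≤ ∑ j : {j : Fin m // (j : ℕ) < n ∧ j ≠ k}, α j.1 :=
      Finset.sum_nonneg fun j _ => (hapos j).le
    linarith [hkα.1]
  have hmain := pb_main e (fun i => ξ i.1) (fun j => hξ j.1 j.2.1 j.2.2)
    (fun j => α j.1) hapos (fun j => (hα j.1 j.2.1).2) (a0 := α k) (b := β) (c := c) (ε := ε)
    (by linarith [hkα.1]) hkα.2 hb hb0 hc hε (ν := ν) (hS ▸ hνcont)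
    (fun y hy => hνbd y (by rw [← hS] at hy; exact hy)) γ (by
      rw [hγ, hprodα, hcard, sub_add_cancel])
  have hfun : (fun s : ℝ => I (Function.update ξ k s)) = fun s : ℝ => -γ *
      ∫ y in pbS e, ν y * (∏ j : {j : Fin m // (j : ℕ) < n ∧ j ≠ k}, y (e j) ^ (2 * α j.1)) *
        (s ^ 2 + ∑ i : {i : Fin m // i ≠ k}, (y i - ξ i.1) ^ 2) ^ (-β) *
        lauricellaFA β (fun j : {j : Fin m // (j : ℕ) < n ∧ j ≠ k} => α j.1)
          (fun j => 2 * α j.1)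
          (fun j => -4 * y (e j) * ξ (e j).1 /
            (s ^ 2 + ∑ i : {i : Fin m // i ≠ k}, (y i - ξ i.1) ^ 2)) := by
    funext s
    rw [hI, hS]
    have h1 : ∀ i : {i : Fin m // i ≠ k}, Function.update ξ k s i.1 = ξ i.1 := fun i =>
      Function.update_of_ne i.2 _ _
    have h2 : ∀ j : {j : Fin m // (j : ℕ) < n ∧ j ≠ k}, Function.update ξ k s j.1 = ξ j.1 :=
      fun j => Function.update_of_ne j.2.2 _ _
    simp only [h1, h2, Function.update_self, e]
  rw [hfun]
  exact hmain
end
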